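/- arXiv:1906.04417 — 6 statements merged into one kernel-verified Lean document; each statement's English description precedes it below -/
import Mathlib

section
/- Let Y, Z be topological spaces, let ρ : Y → Y be continuous, and let σ : Z → Z be a continuous involution (σ ∘ σ = id). Let φ : Y → Z be continuous with σ ∘ φ = φ ∘ ρ. Let ≼ be a preorder on Y and let Y²_≼ = {(y_0, y_1) ∈ Y × Y : y_0 ≼ y_1} with the subspace topology of the product. Let PY = C([0,1], Y) with the compact-open topology, and let s : (0,1] × Y²_≼ → PY be a continuous map with s(w, (y_0, y_1))(0) = y_0 and s(w, (y_0, y_1))(1) = y_1 for all w, satisfying the continuity property: for all y ∈ Y and all neighborhoods V of φ(y) in Z, there exist a neighborhood U of φ(y) in Z and δ > 0 such that whenever φ(y_0), φ(y_1) ∈ U, y_0 ≼ y_1, and w < δ, one has φ(s(w, (y_0, y_1))(t)) ∈ V for all t ∈ [0,1]. Assume moreover: (1) y ≼ ρ(y) for all y ∈ Y; (2) ρ(y_0) ≼ ρ(y_1) if and only if y_0 ≼ y_1; (3) y_0 ≼ y_1 implies y_0 ≼ s(w, (y_0, y_1))(t) ≼ y_1 for all w ∈ (0,1], t ∈ [0,1].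 Then for each integer n ≥ 0 and each y* ∈ Y, there exists a continuous map β_n : S^n → Z with β_n(−x) = σ(β_n(x)) for all x ∈ S^n, such that every positive point x ∈ S^n satisfies β_n(x) = φ(y) for some y ∈ Y with y* ≼ y ≼ ρ^n(y*). -/
open MeasureTheory

/-- A point `x ∈ Sⁿ ⊆ ℝ^{n+1}` is *positive* if its last nonzero coordinate is positive. -/
def IsPositivePoint {m : ℕ} (x : EuclideanSpace ℝ (Fin m)) : Prop :=
  ∃ k : Fin m, 0 < x k ∧ ∀ j : Fin m, k < j → x j = 0

def qf {n : ℕ} (x : Fin n → ℝ) : ℝ := ∑ i, x i ^ 2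

lemma qf_cont {n : ℕ} : Continuous (qf (n := n)) := by
  unfold qf; fun_prop

lemma qf_neg {n : ℕ} (x : Fin n → ℝ) : qf (-x) = qf x := by
  simp [qf]

lemma qf_nonneg {n : ℕ} (x : Fin n → ℝ) : 0 ≤ qf x :=
  Finset.sum_nonneg fun i _ => sq_nonneg _

def ini {n : ℕ} (x : Fin (n+1) → ℝ) : Fin n → ℝ := fun i => x i.castSucc

def snc {n : ℕ} (x : Fin n → ℝ) (u : ℝ) : Fin (n+1) → ℝ := Fin.snoc (α := fun _ => ℝ) x u

lemma ini_cont {n : ℕ} : Continuous (ini (n := n)) := by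
  unfold ini; fun_prop

lemma ini_neg {n : ℕ} (x : Fin (n+1) → ℝ) : ini (-x) = - ini x := rfl

lemma ini_snc {n : ℕ} (x : Fin n → ℝ) (u : ℝ) : ini (snc x u) = x := by
  funext i; simp [ini, snc]

lemma snc_last {n : ℕ} (x : Fin n → ℝ) (u : ℝ) : snc x u (Fin.last n) = u := by
  simp [snc]

lemma snc_ini {n : ℕ} (x : Fin (n+1) → ℝ) : snc (ini x) (x (Fin.last n)) = x := by
  funext i
  refine Fin.lastCases ?_ (fun j => ?_) i <;> simp [snc, ini]

lemma snc_neg {n : ℕ} (x : Fin n → ℝ) (u : ℝ) : -snc x u = snc (-x) (-u) := by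
  funext i
  refine Fin.lastCases ?_ (fun j => ?_) i <;> simp [snc]

lemma snc_cont {n : ℕ} : Continuous (fun p : (Fin n → ℝ) × ℝ => snc p.1 p.2) := by
  refine continuous_pi fun i => ?_
  refine Fin.lastCases ?_ (fun j => ?_) i <;> simp only [snc, Fin.snoc_last, Fin.snoc_castSucc] <;> fun_prop

lemma qf_split {n : ℕ} (x : Fin (n+1) → ℝ) :
    qf x = qf (ini x) + x (Fin.last n) ^ 2 := by
  simp [qf, ini, Fin.sum_univ_castSucc]

lemma qf_snc {n : ℕ} (x : Fin n → ℝ) (u : ℝ) : qf (snc x u) = qf x + u ^ 2 := by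
  rw [qf_split, ini_snc, snc_last]

noncomputable def hh {n : ℕ} (x : Fin n → ℝ) : ℝ := √(1 - qf x)

lemma hh_cont {n : ℕ} : Continuous (hh (n := n)) := by
  unfold hh; have := qf_cont (n := n); fun_prop

lemma hh_neg {n : ℕ} (x : Fin n → ℝ) : hh (-x) = hh x := by simp [hh, qf_neg]

lemma hh_pos {n : ℕ} {x : Fin n → ℝ} (h : qf x < 1) : 0 < hh x := Real.sqrt_pos.2 (by linarith)

lemma hh_mem {n : ℕ} {x : Fin n → ℝ} (h : qf x < 1) : hh x ∈ Set.Ioc (0:ℝ) 1 :=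
  ⟨hh_pos h, Real.sqrt_le_one.2 (by linarith [qf_nonneg x])⟩

lemma hh_sq {n : ℕ} {x : Fin n → ℝ} (h : qf x ≤ 1) : hh x ^ 2 = 1 - qf x :=
  Real.sq_sqrt (by linarith)

section step
variable {Y Z : Type*} [TopologicalSpace Y] [TopologicalSpace Z]

lemma mpa_step
    (ρ : Y → Y) (σ : Z → Z) (φ : Y → Z)
    (hρ : Continuous ρ) (hσ : Continuous σ) (hσσ : ∀ z, σ (σ z) = z)
    (hφ : Continuous φ) (hcomm : ∀ y, σ (φ y) = φ (ρ y))
    (r : Y → Y → Prop)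
    (htrans : ∀ a b c, r a b → r b c → r a c)
    (s : Set.Ioc (0:ℝ) 1 × {p : Y × Y // r p.1 p.2} → C(Set.Icc (0:ℝ) 1, Y))
    (hs : Continuous s)
    (hs0 : ∀ w p, s (w, p) ⟨0, Set.left_mem_Icc.mpr zero_le_one⟩ = p.1.1)
    (hs1 : ∀ w p, s (w, p) ⟨1, Set.right_mem_Icc.mpr zero_le_one⟩ = p.1.2)
    (hlift : ∀ y : Y, ∀ V ∈ nhds (φ y), ∃ U ∈ nhds (φ y), ∃ δ > (0:ℝ),
      ∀ (w : Set.Ioc (0:ℝ) 1) (p : {p : Y × Y // r p.1 p.2}),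
        φ p.1.1 ∈ U → φ p.1.2 ∈ U → (w : ℝ) < δ →
        ∀ t : Set.Icc (0:ℝ) 1, φ (s (w, p) t) ∈ V)
    (h1 : ∀ y, r y (ρ y))
    (h2 : ∀ y₀ y₁, r (ρ y₀) (ρ y₁) ↔ r y₀ y₁)
    (h3 : ∀ (w : Set.Ioc (0:ℝ) 1) (p : {p : Y × Y // r p.1 p.2}) (t : Set.Icc (0:ℝ) 1),
      r p.1.1 (s (w, p) t) ∧ r (s (w, p) t) p.1.2)
    (n : ℕ) (y0 y1 : Y) (A : (Fin n → ℝ) → Y) (β : (Fin (n+1) → ℝ) → Z)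
    (hA : ContinuousOn A {x | qf x < 1})
    (hAr : ∀ x, qf x < 1 → r (A x) (ρ (A (-x))))
    (hAb : ∀ x, qf x < 1 → r y0 (A x) ∧ r (A x) y1)
    (hβ : ContinuousOn β {x | qf x = 1})
    (hβσ : ∀ x, qf x = 1 → β (-x) = σ (β x))
    (hβφ : ∀ x, qf x = 1 → ∃ y, β x = φ y)
    (hβA : ∀ x, qf x = 1 → 0 < x (Fin.last n) → β x = φ (A (ini x))) :
    ∃ (A' : (Fin (n+1) → ℝ) → Y) (β' : (Fin (n+2) → ℝ) → Z),
      ContinuousOn A' {x | qf x < 1} ∧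
      (∀ x, qf x < 1 → r (A' x) (ρ (A' (-x)))) ∧
      (∀ x, qf x < 1 → r y0 (A' x) ∧ r (A' x) (ρ y1)) ∧
      ContinuousOn β' {x | qf x = 1} ∧
      (∀ x, qf x = 1 → β' (-x) = σ (β' x)) ∧
      (∀ x, qf x = 1 → ∃ y, β' x = φ y) ∧
      (∀ x, qf x = 1 → 0 < x (Fin.last (n+1)) → β' x = φ (A' (ini x))) ∧
      (∀ x, qf x = 1 → x (Fin.last (n+1)) = 0 → β' x = β (ini x)) := by
  classical
  -- the lift
  let G : {x : Fin (n+1) → ℝ // qf (ini x) < 1} → Y := fun x =>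
    s (⟨hh (ini x.1), hh_mem x.2⟩, ⟨(A (ini x.1), ρ (A (-ini x.1))), hAr _ x.2⟩)
      (Set.projIcc 0 1 zero_le_one ((1 - x.1 (Fin.last n) / hh (ini x.1)) / 2))
  let F : (Fin (n+1) → ℝ) → Y := fun x => if h : qf (ini x) < 1 then G ⟨x, h⟩ else y0
  have hFG : ∀ x (h : qf (ini x) < 1), F x = G ⟨x, h⟩ := fun x h => dif_pos h
  have hini : ∀ x : Fin (n+1) → ℝ, qf x < 1 → qf (ini x) < 1 := fun x hx => by
    have := qf_split x; nlinarith [sq_nonneg (x (Fin.last n))]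
  have hini' : ∀ x : Fin (n+1) → ℝ, qf x ≤ 1 → qf (ini x) ≤ 1 := fun x hx => by
    have := qf_split x; nlinarith [sq_nonneg (x (Fin.last n))]
  have hF1 : ∀ x, qf (ini x) < 1 → r (A (ini x)) (F x) ∧ r (F x) (ρ (A (-ini x))) := by
    intro x h
    rw [hFG x h]
    exact h3 _ ⟨(A (ini x), ρ (A (-ini x))), hAr _ h⟩ _
  have hGc : Continuous G := by
    have c1 : Continuous fun x : {x : Fin (n+1) → ℝ // qf (ini x) < 1} => ini x.1 :=
      ini_cont.comp continuous_subtype_val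
    have c2 : Continuous fun x : {x : Fin (n+1) → ℝ // qf (ini x) < 1} => hh (ini x.1) :=
      hh_cont.comp c1
    have c3 : Continuous fun x : {x : Fin (n+1) → ℝ // qf (ini x) < 1} => A (ini x.1) :=
      hA.comp_continuous c1 (fun x => x.2)
    have c4 : Continuous fun x : {x : Fin (n+1) → ℝ // qf (ini x) < 1} => A (-ini x.1) :=
      hA.comp_continuous c1.neg (fun x => by simpa [qf_neg] using x.2)
    have c5 : Continuous fun x : {x : Fin (n+1) → ℝ // qf (ini x) < 1} =>
        (1 - x.1 (Fin.last n) / hh (ini x.1)) / 2 := by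
      refine (continuous_const.sub (Continuous.div ?_ c2 fun x => (hh_pos x.2).ne')).div_const _
      exact (continuous_apply _).comp continuous_subtype_val
    exact (hs.comp ((c2.subtype_mk _).prodMk
      ((c3.prodMk (hρ.comp c4)).subtype_mk _))).eval (continuous_projIcc.comp c5)
  have hFc : ContinuousOn F {x | qf (ini x) < 1} := by
    rw [continuousOn_iff_continuous_domRestrict]
    exact hGc.congr fun x => (hFG x.1 x.2).symm
  let f : (Fin (n+1) → ℝ) → Z := fun x => if qf (ini x) < 1 then φ (F x) else β x
  have hβm : ∀ x, qf x < 1 → β (snc x (-hh x)) = φ (ρ (A (-x))) := by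
    intro x hx
    have e : qf (snc (-x) (hh x)) = 1 := by
      rw [qf_snc, qf_neg, hh_sq hx.le]; ring
    have e1 := hβσ _ e
    rw [snc_neg, neg_neg, hβA _ e (by rw [snc_last]; exact hh_pos hx), ini_snc, hcomm] at e1
    exact e1
  have hβp : ∀ x, qf x < 1 → β (snc x (hh x)) = φ (A x) := by
    intro x hx
    have e : qf (snc x (hh x)) = 1 := by
      rw [qf_snc, hh_sq hx.le]; ring
    rw [hβA _ e (by rw [snc_last]; exact hh_pos hx), ini_snc]
  have hfβ : ∀ x, qf x = 1 → f x = β x := by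
    intro x hx
    by_cases h : qf (ini x) < 1
    · have hp := hh_pos h
      have e : (x (Fin.last n)) ^ 2 = hh (ini x) ^ 2 := by
        rw [hh_sq h.le]; have := qf_split x; linarith
      simp only [f, if_pos h]
      rw [hFG x h]
      rcases sq_eq_sq_iff_eq_or_eq_neg.1 e with e | e
      · have : β x = φ (A (ini x)) := by rw [← hβp _ h, ← e, snc_ini]
        rw [this]
        simp only [G, e, div_self hp.ne']
        congr 1
        refine Eq.trans ?_ (hs0 ⟨hh (ini x), hh_mem h⟩ ⟨(A (ini x), ρ (A (-ini x))), hAr _ h⟩)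
        congr 1
        norm_num [Set.projIcc]
      · have : β x = φ (ρ (A (-ini x))) := by rw [← hβm _ h, ← e, snc_ini]
        rw [this]
        simp only [G, e, neg_div, div_self hp.ne']
        congr 1
        refine Eq.trans ?_ (hs1 ⟨hh (ini x), hh_mem h⟩ ⟨(A (ini x), ρ (A (-ini x))), hAr _ h⟩)
        congr 1
        norm_num [Set.projIcc]
    · simp [f, h]
  have hop : IsOpen {x : Fin (n+1) → ℝ | qf (ini x) < 1} :=
    isOpen_lt (qf_cont.comp ini_cont) continuous_const
  have hfc : ContinuousOn f {x | qf x ≤ 1} := by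
    intro x hx
    by_cases h : qf (ini x) < 1
    · have : ContinuousAt f x := by
        have c : ContinuousAt (fun x => φ (F x)) x :=
          hφ.continuousAt.comp (hFc.continuousAt (hop.mem_nhds h))
        refine c.congr ?_
        filter_upwards [hop.mem_nhds h] with z hz
        exact (if_pos hz).symm
      exact this.continuousWithinAt
    · have key : ∀ z : Fin (n+1) → ℝ, qf z ≤ 1 → ¬ qf (ini z) < 1 →
          hh (ini z) = 0 ∧ z (Fin.last n) = 0 ∧ qf z = 1 := by
        intro z hz h
        have a := hini' z hz
        have b : qf (ini z) = 1 := le_antisymm a (not_lt.1 h)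
        have c := qf_split z
        have d : z (Fin.last n) ^ 2 = 0 := le_antisymm (by linarith) (sq_nonneg _)
        exact ⟨by simp [hh, b], by simpa using d, by linarith⟩
      obtain ⟨k1, k2, k3⟩ := key x hx h
      have cp : ContinuousOn (fun z => β (snc (ini z) (hh (ini z)))) {x | qf x ≤ 1} := by
        refine hβ.comp (snc_cont.comp (ini_cont.prodMk (hh_cont.comp ini_cont))).continuousOn ?_
        intro z hz
        show qf (snc (ini z) (hh (ini z))) = 1
        rw [qf_snc, hh_sq (hini' z hz)]; ring
      have cm : ContinuousOn (fun z => β (snc (ini z) (-hh (ini z)))) {x | qf x ≤ 1} := by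
        refine hβ.comp (snc_cont.comp (ini_cont.prodMk (hh_cont.comp ini_cont).neg)).continuousOn ?_
        intro z hz
        show qf (snc (ini z) (-hh (ini z))) = 1
        rw [qf_snc, neg_sq, hh_sq (hini' z hz)]; ring
      have ep : snc (ini x) (hh (ini x)) = x := by rw [k1, ← k2, snc_ini]
      have em : snc (ini x) (-hh (ini x)) = x := by rw [k1, neg_zero, ← k2, snc_ini]
      have tp := (cp x hx).tendsto
      have tm := (cm x hx).tendsto
      simp only [ep] at tp
      simp only [em] at tm
      have th : Filter.Tendsto (fun z : Fin (n+1) → ℝ => hh (ini z)) (nhds x) (nhds 0) := by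
        rw [← k1]; exact (hh_cont.comp ini_cont).tendsto x
      obtain ⟨y, hy⟩ := hβφ x k3
      show Filter.Tendsto _ _ _
      rw [hfβ x k3]
      intro V hV
      obtain ⟨U, hU, δ, hδ, H⟩ := hlift y V (hy ▸ hV)
      rw [← hy] at hU
      rw [Filter.mem_map]
      filter_upwards [tp hU, tm hU, tp hV, nhdsWithin_le_nhds (th (Iio_mem_nhds hδ)),
        self_mem_nhdsWithin] with z z1 z2 z3 z4 z5
      show f z ∈ V
      by_cases hz : qf (ini z) < 1
      · simp only [f, if_pos hz, hFG z hz]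
        refine H ⟨hh (ini z), hh_mem hz⟩ ⟨(A (ini z), ρ (A (-ini z))), hAr _ hz⟩ ?_ ?_ z4 _
        · show φ (A (ini z)) ∈ U
          rw [← hβp _ hz]; exact z1
        · show φ (ρ (A (-ini z))) ∈ U
          rw [← hβm _ hz]; exact z2
      · obtain ⟨l1, l2, l3⟩ := key z z5 hz
        rw [hfβ z l3]
        have : snc (ini z) (hh (ini z)) = z := by rw [l1, ← l2, snc_ini]
        simpa only [Set.mem_preimage, this] using z3
  let β' : (Fin (n+2) → ℝ) → Z := fun x =>
    if 0 ≤ x (Fin.last (n+1)) then f (ini x) else σ (f (-ini x))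
  have hb0 : ∀ x, qf x = 1 → x (Fin.last (n+1)) = 0 → β' x = β (ini x) ∧ qf (ini x) = 1 := by
    intro x hx h
    have e : qf (ini x) = 1 := by have := qf_split x; rw [h] at this; linarith
    simp only [β', h, le_refl, if_true, hfβ _ e, e, and_self]
  have hneg : ∀ x, qf x = 1 → x (Fin.last (n+1)) ≤ 0 → β' x = σ (f (-ini x)) := by
    intro x hx h
    rcases h.lt_or_eq with h | h
    · simp only [β', if_neg (not_le.2 h)]
    · obtain ⟨a, b⟩ := hb0 x hx h
      have b' : qf (-ini x) = 1 := by rw [qf_neg, b]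
      rw [a, hfβ _ b', ← hβσ _ b', neg_neg]
  have hlt : ∀ x : Fin (n+2) → ℝ, qf x = 1 → x (Fin.last (n+1)) ≠ 0 → qf (ini x) < 1 := by
    intro x hx h
    have := qf_split x
    have := sq_pos_of_ne_zero h
    linarith
  have hle : ∀ x : Fin (n+2) → ℝ, qf x = 1 → qf (ini x) ≤ 1 := by
    intro x hx
    have := qf_split x
    have := sq_nonneg (x (Fin.last (n+1)))
    linarith
  have hfφ : ∀ x, qf x ≤ 1 → ∃ y, f x = φ y := by
    intro x hx
    by_cases h : qf (ini x) < 1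
    · exact ⟨F x, if_pos h⟩
    · have : qf x = 1 := le_antisymm hx (by
        have := qf_split x; nlinarith [sq_nonneg (x (Fin.last n))])
      rw [hfβ x this]; exact hβφ x this
  refine ⟨F, β', hFc.mono fun x hx => hini x hx, ?_, ?_, ?_, ?_, ?_, ?_, fun x hx h => (hb0 x hx h).1⟩
  · intro x hx
    have a := hF1 x (hini x hx)
    have b := hF1 (-x) (by rw [ini_neg, qf_neg]; exact hini x hx)
    exact htrans _ _ _ a.2 ((h2 _ _).2 b.1)
  · intro x hx
    have hx' := hini x hx
    have a := hF1 x hx'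
    exact ⟨htrans _ _ _ (hAb _ hx').1 a.1, htrans _ _ _ a.2
      ((h2 _ _).2 (hAb (-ini x) (by rwa [qf_neg])).2)⟩
  · have hcl : IsClosed {x : Fin (n+2) → ℝ | qf x = 1} := isClosed_eq qf_cont continuous_const
    have hcp : IsClosed {x : Fin (n+2) → ℝ | qf x = 1 ∧ 0 ≤ x (Fin.last (n+1))} :=
      hcl.inter (isClosed_le continuous_const (continuous_apply _))
    have hcm : IsClosed {x : Fin (n+2) → ℝ | qf x = 1 ∧ x (Fin.last (n+1)) ≤ 0} :=
      hcl.inter (isClosed_le (continuous_apply _) continuous_const)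
    have e : {x : Fin (n+2) → ℝ | qf x = 1} = {x | qf x = 1 ∧ 0 ≤ x (Fin.last (n+1))} ∪
        {x | qf x = 1 ∧ x (Fin.last (n+1)) ≤ 0} := by
      ext x
      simp only [Set.mem_ofPred_eq, Set.mem_union, ← and_or_left, le_total, and_true]
    rw [e]
    refine ContinuousOn.union_of_isClosed ?_ ?_ hcp hcm
    · refine (hfc.comp ini_cont.continuousOn (fun x hx => hle x hx.1)).congr ?_
      intro x hx
      exact if_pos hx.2
    · refine (hσ.comp_continuousOn (hfc.comp ini_cont.neg.continuousOn
        (fun x hx => ?_))).congr (fun x hx => hneg x hx.1 hx.2)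
      show qf (-ini x) ≤ 1
      rw [qf_neg]; exact hle x hx.1
  · intro x hx
    have hx' : qf (-x) = 1 := by rw [qf_neg, hx]
    rcases le_total 0 (x (Fin.last (n+1))) with h | h
    · rw [hneg (-x) hx' (by simpa using h), ini_neg, neg_neg]
      simp only [β', if_pos h]
    · rw [hneg x hx h, hσσ]
      have : 0 ≤ (-x) (Fin.last (n+1)) := by simpa using h
      simp only [β', if_pos this, ini_neg]
  · intro x hx
    rcases le_total 0 (x (Fin.last (n+1))) with h | h
    · simp only [β', if_pos h]; exact hfφ _ (hle x hx)
    · rw [hneg x hx h]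
      obtain ⟨y, hy⟩ := hfφ (-ini x) (by rw [qf_neg]; exact hle x hx)
      exact ⟨ρ y, by rw [hy, hcomm]⟩
  · intro x hx h
    have a := hlt x hx h.ne'
    simp only [β', if_pos h.le, f, if_pos (hini' _ a.le |>.lt_of_ne (by
      intro e
      have := qf_split (ini x)
      nlinarith [sq_nonneg (ini x (Fin.last n))]))]

end step

/-- **Lifted motion planning algorithms give ℤ/2-maps from spheres.**
Let `ρ : Y → Y`, let `σ : Z → Z` be a continuous involution, let `φ : Y → Z` be continuous
and equivariant, let `≼` (here `r`) be a preorder on `Y`, and let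
`s : (0,1] × Y²_≼ → PY` be a lifted motion planning algorithm for `(Y, Z, φ, ≼)`
compatible with `ρ` and `r` as in (1)–(3). Then for each `n ≥ 0` and each `y* ∈ Y` there
is a continuous map `βₙ : Sⁿ → Z` with `βₙ(-x) = σ(βₙ(x))`, mapping each positive point
of `Sⁿ` to a point `φ(y)` with `y* ≼ y ≼ ρⁿ(y*)`. -/
theorem lifted_mpa_coindex {Y Z : Type*} [TopologicalSpace Y] [TopologicalSpace Z]
    (ρ : Y → Y) (σ : Z → Z) (φ : Y → Z)
    (hρ : Continuous ρ) (hσ : Continuous σ) (hσσ : σ ∘ σ = id)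
    (hφ : Continuous φ) (hcomm : σ ∘ φ = φ ∘ ρ)
    (r : Y → Y → Prop) (hrefl : ∀ y, r y y)
    (htrans : ∀ a b c, r a b → r b c → r a c)
    (s : Set.Ioc (0:ℝ) 1 × {p : Y × Y // r p.1 p.2} → C(Set.Icc (0:ℝ) 1, Y))
    (hs : Continuous s)
    (hs0 : ∀ w p, s (w, p) ⟨0, Set.left_mem_Icc.mpr zero_le_one⟩ = p.1.1)
    (hs1 : ∀ w p, s (w, p) ⟨1, Set.right_mem_Icc.mpr zero_le_one⟩ = p.1.2)
    (hlift : ∀ y : Y, ∀ V ∈ nhds (φ y), ∃ U ∈ nhds (φ y), ∃ δ > (0:ℝ),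
      ∀ (w : Set.Ioc (0:ℝ) 1) (p : {p : Y × Y // r p.1 p.2}),
        φ p.1.1 ∈ U → φ p.1.2 ∈ U → (w : ℝ) < δ →
        ∀ t : Set.Icc (0:ℝ) 1, φ (s (w, p) t) ∈ V)
    (h1 : ∀ y, r y (ρ y))
    (h2 : ∀ y₀ y₁, r (ρ y₀) (ρ y₁) ↔ r y₀ y₁)
    (h3 : ∀ (w : Set.Ioc (0:ℝ) 1) (p : {p : Y × Y // r p.1 p.2}) (t : Set.Icc (0:ℝ) 1),
      r p.1.1 (s (w, p) t) ∧ r (s (w, p) t) p.1.2)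
    (n : ℕ) (ystar : Y) :
    ∃ β : EuclideanSpace ℝ (Fin (n + 1)) → Z,
      ContinuousOn β (Metric.sphere 0 1) ∧
      (∀ x ∈ Metric.sphere (0 : EuclideanSpace ℝ (Fin (n + 1))) 1, β (-x) = σ (β x)) ∧
      (∀ x ∈ Metric.sphere (0 : EuclideanSpace ℝ (Fin (n + 1))) 1, IsPositivePoint x →
        ∃ y : Y, r ystar y ∧ r y (ρ^[n] ystar) ∧ β x = φ y) := by
  have hcomm' : ∀ y, σ (φ y) = φ (ρ y) := fun y => congrFun hcomm y
  have hσσ' : ∀ z, σ (σ z) = z := fun z => congrFun hσσ z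
  have main : ∀ n : ℕ, ∃ (A : (Fin n → ℝ) → Y) (β : (Fin (n+1) → ℝ) → Z),
      ContinuousOn A {x | qf x < 1} ∧
      (∀ x, qf x < 1 → r (A x) (ρ (A (-x)))) ∧
      (∀ x, qf x < 1 → r ystar (A x) ∧ r (A x) (ρ^[n] ystar)) ∧
      ContinuousOn β {x | qf x = 1} ∧
      (∀ x, qf x = 1 → β (-x) = σ (β x)) ∧
      (∀ x, qf x = 1 → ∃ y, β x = φ y) ∧
      (∀ x, qf x = 1 → 0 < x (Fin.last n) → β x = φ (A (ini x))) ∧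
      (∀ x, qf x = 1 → (∃ k : Fin (n+1), 0 < x k ∧ ∀ j, k < j → x j = 0) →
        ∃ y : Y, r ystar y ∧ r y (ρ^[n] ystar) ∧ β x = φ y) := by
    intro n
    induction n with
    | zero =>
      have q1 : ∀ x : Fin 1 → ℝ, qf x = 1 → x 0 = 1 ∨ x 0 = -1 := by
        intro x hx
        simpa [qf] using hx
      refine ⟨fun _ => ystar, fun x => if 0 < x 0 then φ ystar else φ (ρ ystar),
        continuousOn_const, fun _ _ => h1 _, fun _ _ => ⟨hrefl _, hrefl _⟩, ?_, ?_, ?_, ?_, ?_⟩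
      · intro x hx
        have hc : Continuous fun x : Fin 1 → ℝ => x 0 := continuous_apply 0
        rcases q1 x hx with h | h
        · refine ContinuousAt.continuousWithinAt ?_
          refine (continuousAt_const (y := φ ystar)).congr ?_
          filter_upwards [hc.continuousAt.eventually (Ioi_mem_nhds (show 0 < x 0 by rw [h]; norm_num))] with z hz
          rw [if_pos hz]
        · refine ContinuousAt.continuousWithinAt ?_
          refine (continuousAt_const (y := φ (ρ ystar))).congr ?_
          filter_upwards [hc.continuousAt.eventually (Iio_mem_nhds (show x 0 < 0 by rw [h]; norm_num))] with z hz
          rw [if_neg (not_lt.2 (le_of_lt hz))]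
      · intro x hx
        rcases q1 x hx with h | h
        · norm_num [h, hcomm']
        · norm_num [h, ← hcomm', hσσ']
      · intro x hx
        by_cases h : 0 < x 0
        · exact ⟨_, if_pos h⟩
        · exact ⟨_, if_neg h⟩
      · intro x hx h
        exact if_pos h
      · rintro x hx ⟨k, hk, -⟩
        have : k = 0 := Fin.ext (by omega)
        subst this
        exact ⟨ystar, hrefl _, hrefl _, if_pos hk⟩
    | succ n ih =>
      obtain ⟨A, β, a1, a2, a3, a4, a5, a6, a7, a8⟩ := ih
      obtain ⟨A', β', b1, b2, b3, b4, b5, b6, b7, b8⟩ := mpa_step ρ σ φ hρ hσ hσσ' hφ hcomm' r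
        htrans s hs hs0 hs1 hlift h1 h2 h3 n ystar (ρ^[n] ystar) A β a1 a2 a3 a4 a5 a6 a7
      rw [← Function.iterate_succ_apply' ρ n ystar] at b3
      refine ⟨A', β', b1, b2, b3, b4, b5, b6, b7, ?_⟩
      rintro x hx ⟨k, hk, hk'⟩
      have hq := qf_split x
      by_cases hl : x (Fin.last (n+1)) = 0
      · rw [b8 x hx hl]
        have e : qf (ini x) = 1 := by rw [hl] at hq; linarith
        obtain ⟨y, y1, y2, y3⟩ := a8 (ini x) e (by
          revert hk hk'
          refine Fin.lastCases ?_ (fun i => ?_) k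
          · intro hk; rw [hl] at hk; exact absurd hk (lt_irrefl _)
          · intro hk hk'
            exact ⟨i, hk, fun j hj => hk' _ (Fin.castSucc_lt_castSucc_iff.2 hj)⟩)
        refine ⟨y, y1, htrans _ _ _ y2 ?_, y3⟩
        rw [Function.iterate_succ_apply']
        exact h1 _
      · have hpos : 0 < x (Fin.last (n+1)) := by
          rcases (Fin.le_last k).lt_or_eq with h | h
          · exact absurd (hk' _ h) hl
          · rwa [← h]
        have e : qf (ini x) < 1 := by
          have := sq_pos_of_ne_zero hl
          linarith
        exact ⟨A' (ini x), (b3 _ e).1, (b3 _ e).2, b7 x hx hpos⟩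
  obtain ⟨A, β, a1, a2, a3, a4, a5, a6, a7, a8⟩ := main n
  have hsph : ∀ x ∈ Metric.sphere (0 : EuclideanSpace ℝ (Fin (n + 1))) 1, qf x.ofLp = 1 := by
    intro x hx
    have : ‖x‖ = 1 := by simpa using hx
    have h := EuclideanSpace.real_norm_sq_eq x
    rw [this] at h
    simpa [qf] using h.symm
  refine ⟨fun x => β x.ofLp, ?_, ?_, ?_⟩
  · exact a4.comp (PiLp.continuous_ofLp 2 _).continuousOn hsph
  · intro x hx
    exact a5 _ (hsph x hx)
  · intro x hx hp
    exact a8 _ (hsph x hx) hp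
end

section
/- Let τ : ℝ → [0,1] be a smooth nondecreasing function with τ(x) = 0 for x ≤ −1 and τ(x) = 1 for x ≥ 1. Let g, g_0, g_1 : [0,1] → ℝ be smooth nondecreasing functions with g_0 ≤ g_1 pointwise, let w ∈ (0,1], t ∈ [0,1], and define G(x) = (1 − τ((x − (1 − t))/w)) · g_0(x) + τ((x − (1 − t))/w) · g_1(x). Then ∫_0^1 |e^{iG(x)} − e^{ig(x)}| dx ≤ ∫_0^1 |e^{ig_0(x)} − e^{ig(x)}| dx + ∫_0^1 |e^{ig_1(x)} − e^{ig(x)}| dx + 4w. -/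
/-- The continuity estimate for the lifted mpa: for the transition function
`G = (1 - τ((x - (1-t))/w)) g₀ + τ((x - (1-t))/w) g₁`, one has
`∫₀¹ |e^{iG} - e^{ig}| ≤ ∫₀¹ |e^{ig₀} - e^{ig}| + ∫₀¹ |e^{ig₁} - e^{ig}| + 4w`. -/
theorem transition_L1_estimate
    (τ : ℝ → ℝ) (hτ_smooth : ContDiff ℝ (⊤ : ℕ∞) τ) (hτ_mono : Monotone τ)
    (hτ_range : ∀ x, τ x ∈ Set.Icc (0:ℝ) 1)
    (hτ0 : ∀ x ≤ (-1:ℝ), τ x = 0) (hτ1 : ∀ x, (1:ℝ) ≤ x → τ x = 1)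
    (g g₀ g₁ : ℝ → ℝ)
    (hg_smooth : ContDiffOn ℝ (⊤ : ℕ∞) g (Set.Icc 0 1))
    (hg₀_smooth : ContDiffOn ℝ (⊤ : ℕ∞) g₀ (Set.Icc 0 1))
    (hg₁_smooth : ContDiffOn ℝ (⊤ : ℕ∞) g₁ (Set.Icc 0 1))
    (hg_mono : MonotoneOn g (Set.Icc 0 1))
    (hg₀_mono : MonotoneOn g₀ (Set.Icc 0 1)) (hg₁_mono : MonotoneOn g₁ (Set.Icc 0 1))
    (hle : ∀ x ∈ Set.Icc (0:ℝ) 1, g₀ x ≤ g₁ x)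
    (w t : ℝ) (hw : w ∈ Set.Ioc (0:ℝ) 1) (ht : t ∈ Set.Icc (0:ℝ) 1)
    (G : ℝ → ℝ)
    (hG : G = fun x => (1 - τ ((x - (1 - t)) / w)) * g₀ x + τ ((x - (1 - t)) / w) * g₁ x) :
    (∫ x in (0:ℝ)..1, ‖Complex.exp (Complex.I * (G x : ℂ)) -
        Complex.exp (Complex.I * (g x : ℂ))‖) ≤
      (∫ x in (0:ℝ)..1, ‖Complex.exp (Complex.I * (g₀ x : ℂ)) -
        Complex.exp (Complex.I * (g x : ℂ))‖) +
      (∫ x in (0:ℝ)..1, ‖Complex.exp (Complex.I * (g₁ x : ℂ)) -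
        Complex.exp (Complex.I * (g x : ℂ))‖) + 4 * w := by
  have hw0 : 0 < w := hw.1
  have hGc : ContinuousOn G (Set.Icc 0 1) := by
    have h0 := hg₀_smooth.continuousOn
    have h1 := hg₁_smooth.continuousOn
    have hc : Continuous fun x : ℝ => τ ((x - (1 - t)) / w) :=
      hτ_smooth.continuous.comp (by fun_prop)
    rw [hG]
    exact ((continuousOn_const.sub hc.continuousOn).mul h0).add (hc.continuousOn.mul h1)
  have key : ∀ f : ℝ → ℝ, ContinuousOn f (Set.Icc 0 1) →
      IntervalIntegrable (fun x => ‖Complex.exp (Complex.I * (f x : ℂ)) -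
        Complex.exp (Complex.I * (g x : ℂ))‖) MeasureTheory.volume 0 1 := by
    intro f hf
    apply ContinuousOn.intervalIntegrable
    rw [Set.uIcc_of_le zero_le_one]
    have hgc := hg_smooth.continuousOn
    have a : ∀ f : ℝ → ℝ, ContinuousOn f (Set.Icc 0 1) →
        ContinuousOn (fun x => Complex.exp (Complex.I * (f x : ℂ))) (Set.Icc 0 1) := by
      intro f hf
      have hc : Continuous fun y : ℝ => Complex.exp (Complex.I * (y : ℂ)) := by fun_prop
      exact hc.comp_continuousOn hf
    exact ((a f hf).sub (a g hgc)).norm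
  have iG := key G hGc
  have i0 := key g₀ hg₀_smooth.continuousOn
  have i1 := key g₁ hg₁_smooth.continuousOn
  have hI : MeasureTheory.Integrable
      ((Set.Icc (1 - t - w) (1 - t + w)).indicator (fun _ => (2:ℝ))) MeasureTheory.volume := by
    rw [MeasureTheory.integrable_indicator_iff measurableSet_Icc]
    exact MeasureTheory.integrableOn_const (by simp)
  have hIi : IntervalIntegrable
      ((Set.Icc (1 - t - w) (1 - t + w)).indicator (fun _ => (2:ℝ))) MeasureTheory.volume 0 1 :=
    hI.intervalIntegrable
  have hIle : (∫ x in (0:ℝ)..1,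
      (Set.Icc (1 - t - w) (1 - t + w)).indicator (fun _ => (2:ℝ)) x) ≤ 4 * w := by
    rw [intervalIntegral.integral_of_le zero_le_one]
    refine (MeasureTheory.setIntegral_le_integral hI
      (Filter.Eventually.of_forall fun x => Set.indicator_nonneg (by simp) x)).trans ?_
    rw [MeasureTheory.integral_indicator measurableSet_Icc, MeasureTheory.setIntegral_const,
      Real.volume_real_Icc_of_le (by linarith), smul_eq_mul]
    linarith
  refine le_trans ?_ (add_le_add_right hIle _)
  rw [← intervalIntegral.integral_add i0 i1, ← intervalIntegral.integral_add (i0.add i1) hIi]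
  refine intervalIntegral.integral_mono_on zero_le_one iG ((i0.add i1).add hIi) ?_
  intro x hx
  by_cases hS : x ∈ Set.Icc (1 - t - w) (1 - t + w)
  · rw [Set.indicator_of_mem hS]
    have e : ∀ y : ℝ, ‖Complex.exp (Complex.I * (y : ℂ))‖ = 1 := by
      intro y
      rw [mul_comm]
      exact Complex.norm_exp_ofReal_mul_I y
    have := norm_sub_le (Complex.exp (Complex.I * (G x : ℂ))) (Complex.exp (Complex.I * (g x : ℂ)))
    rw [e, e] at this
    have h0 := norm_nonneg (Complex.exp (Complex.I * (g₀ x : ℂ)) -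
        Complex.exp (Complex.I * (g x : ℂ)))
    have h1 := norm_nonneg (Complex.exp (Complex.I * (g₁ x : ℂ)) -
        Complex.exp (Complex.I * (g x : ℂ)))
    linarith
  · rw [Set.indicator_of_notMem hS, add_zero]
    rcases lt_or_ge x (1 - t - w) with h | h
    · have : G x = g₀ x := by
        have := hτ0 ((x - (1 - t)) / w) (by rw [div_le_iff₀ hw0]; linarith)
        simp [hG, this]
      rw [this]
      exact le_add_of_nonneg_right (norm_nonneg _)
    · have h2 : 1 - t + w < x := by
        by_contra h3
        exact hS ⟨h, not_lt.mp h3⟩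
      have : G x = g₁ x := by
        have := hτ1 ((x - (1 - t)) / w) (by rw [le_div_iff₀ hw0]; linarith)
        simp [hG, this]
      rw [this]
      exact le_add_of_nonneg_left (norm_nonneg _)
end

section
/- Let f_1, ..., f_n ∈ L^1([0,1]; ℝ). Then for every ε > 0 there exists h ∈ C^∞([0,1]; S^1) with ‖h‖_{W^{1,1}} < 1 + π(2n − 1) + ε such that ∫_0^1 f_j(x) h(x) dx = 0 for all j = 1, ..., n. -/
open MeasureTheory

namespace LL

/-- mod 2 chains on lists -/
abbrev Ch (E : Type*) := List E →₀ ZMod 2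

noncomputable section

def cone {E : Type*} (v : E) : Ch E →ₗ[ZMod 2] Ch E :=
  Finsupp.lmapDomain (ZMod 2) (ZMod 2) (List.cons v)

def bdl {E : Type*} : List E → Ch E
  | [] => 0
  | v :: l => Finsupp.single l 1 + cone v (bdl l)

def bd {E : Type*} : Ch E →ₗ[ZMod 2] Ch E := Finsupp.linearCombination (ZMod 2) bdl

lemma cone_single {E : Type*} (v : E) (l : List E) (c : ZMod 2) :
    cone v (Finsupp.single l c) = Finsupp.single (v :: l) c := by
  simp [cone]

lemma bd_single {E : Type*} (l : List E) : bd (Finsupp.single l 1) = bdl l := by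
  simp [bd]

lemma ch_add_self {E : Type*} (c : Ch E) : c + c = 0 := by
  ext l; simp [CharTwo.add_self_eq_zero]

lemma bd_cone {E : Type*} (v : E) (c : Ch E) : bd (cone v c) = c + cone v (bd c) := by
  have : bd ∘ₗ cone v = LinearMap.id + cone v ∘ₗ bd := by
    apply Finsupp.lhom_ext'
    intro l
    ext
    simp [cone_single, bd_single, bdl]
  exact LinearMap.congr_fun this c

lemma bd_bdl {E : Type*} (l : List E) : bd (bdl l) = 0 := by
  induction l with
  | nil => simp [bdl]
  | cons v l ih =>
    simp only [bdl, map_add, bd_single, bd_cone, ih, map_zero, add_zero]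
    exact ch_add_self _

lemma bd_bd {E : Type*} (c : Ch E) : bd (bd c) = 0 := by
  have : bd ∘ₗ bd = (0 : Ch E →ₗ[ZMod 2] Ch E) := by
    apply Finsupp.lhom_ext'
    intro l
    ext
    simp [bd_single, bd_bdl]
  exact LinearMap.congr_fun this c

def bary {E : Type*} [AddCommGroup E] [Module ℝ E] (l : List E) : E :=
  (l.length : ℝ)⁻¹ • l.sum

def sd {E : Type*} [AddCommGroup E] [Module ℝ E] : ℕ → (Ch E →ₗ[ZMod 2] Ch E)
  | 0 => LinearMap.id
  | k + 1 => Finsupp.linearCombination (ZMod 2) (fun l => cone (bary l) (sd k (bdl l)))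

lemma sd_single {E : Type*} [AddCommGroup E] [Module ℝ E] (k : ℕ) (l : List E) :
    sd (k+1) (Finsupp.single l 1) = cone (bary l) (sd k (bdl l)) := by
  simp [sd]

lemma bd_sd {E : Type*} [AddCommGroup E] [Module ℝ E] (k : ℕ) :
    ∀ c : Ch E, bd (sd (k+1) c) = sd k (bd c) := by
  induction k with
  | zero =>
    intro c
    have : bd ∘ₗ sd 1 = (bd : Ch E →ₗ[ZMod 2] Ch E) := by
      apply Finsupp.lhom_ext'
      intro l
      ext : 1
      simp only [LinearMap.comp_apply, Finsupp.lsingle_apply, sd_single, bd_single, bd_cone]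
      simp [sd, bd_bdl]
    exact LinearMap.congr_fun this c
  | succ k ih =>
    intro c
    have : bd ∘ₗ sd (k+1+1) = (sd (k+1) ∘ₗ bd : Ch E →ₗ[ZMod 2] Ch E) := by
      apply Finsupp.lhom_ext'
      intro l
      ext : 1
      simp only [LinearMap.comp_apply, Finsupp.lsingle_apply, sd_single, bd_single, bd_cone, ih,
        bd_bdl, map_zero, add_zero]
    exact LinearMap.congr_fun this c

/-- antipode -/
def tau {E : Type*} [Neg E] : Ch E →ₗ[ZMod 2] Ch E :=
  Finsupp.lmapDomain (ZMod 2) (ZMod 2) (List.map (fun v => -v))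

lemma tau_single {E : Type*} [Neg E] (l : List E) (c : ZMod 2) :
    tau (Finsupp.single l c) = Finsupp.single (l.map (fun v => -v)) c := by
  simp [tau]

lemma tau_cone {E : Type*} [Neg E] (v : E) (c : Ch E) :
    tau (cone v c) = cone (-v) (tau c) := by
  have : tau ∘ₗ cone v = cone (-v) ∘ₗ (tau : Ch E →ₗ[ZMod 2] Ch E) := by
    apply Finsupp.lhom_ext'
    intro l
    ext : 1
    simp [cone_single, tau_single]
  exact LinearMap.congr_fun this c

lemma tau_bdl {E : Type*} [Neg E] (l : List E) :
    tau (bdl l) = bdl (l.map (fun v => -v)) := by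
  induction l with
  | nil => simp [bdl]
  | cons v l ih => simp [bdl, tau_single, tau_cone, ih]

lemma bary_neg {E : Type*} [AddCommGroup E] [Module ℝ E] (l : List E) :
    bary (l.map (fun v => -v)) = - bary l := by
  have : (l.map (fun v => -v)).sum = - l.sum := by
    induction l with
    | nil => simp
    | cons v l ih => simp [ih]; abel
  simp [bary, this]

lemma tau_sd {E : Type*} [AddCommGroup E] [Module ℝ E] (k : ℕ) :
    ∀ c : Ch E, tau (sd k c) = sd k (tau c) := by
  induction k with
  | zero => intro c; simp [sd]
  | succ k ih =>
    intro c
    have : tau ∘ₗ sd (k+1) = (sd (k+1) ∘ₗ tau : Ch E →ₗ[ZMod 2] Ch E) := by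
      apply Finsupp.lhom_ext'
      intro l
      ext : 1
      simp only [LinearMap.comp_apply, Finsupp.lsingle_apply, sd_single, tau_single, tau_cone, ih,
        bary_neg, tau_bdl]
    exact LinearMap.congr_fun this c

/-- cross-polytope chains -/
def Sc {E : Type*} [Neg E] (e : ℕ → E) : ℕ → Ch E
  | 0 => Finsupp.single [] 1
  | k + 1 => cone (e k) (Sc e k) + cone (-e k) (Sc e k)

lemma bd_Sc {E : Type*} [Neg E] (e : ℕ → E) (k : ℕ) : bd (Sc e k) = 0 := by
  induction k with
  | zero => simp [Sc, bd_single, bdl]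
  | succ k ih => simp [Sc, bd_cone, ih, ch_add_self]

lemma tau_Sc {E : Type*} [AddCommGroup E] (e : ℕ → E) (k : ℕ) : tau (Sc e k) = Sc e k := by
  induction k with
  | zero => simp [Sc, tau_single]
  | succ k ih => simp [Sc, tau_cone, ih, add_comm]

/-- evaluation of a functional on the boundary -/
def bdE {E : Type*} (G : List E → ZMod 2) : List E → ZMod 2
  | [] => 0
  | v :: l => G l + bdE (fun m => G (v :: m)) l

lemma lc_cone {E : Type*} (G : List E → ZMod 2) (v : E) (c : Ch E) :
    Finsupp.linearCombination (ZMod 2) G (cone v c)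
      = Finsupp.linearCombination (ZMod 2) (fun m => G (v :: m)) c := by
  simp [cone, Finsupp.linearCombination_mapDomain, Function.comp_def]

lemma lc_bdl {E : Type*} (l : List E) : ∀ (G : List E → ZMod 2),
    Finsupp.linearCombination (ZMod 2) G (bdl l) = bdE G l := by
  induction l with
  | nil => intro G; simp [bdl, bdE]
  | cons v l ih => intro G; simp [bdl, bdE, lc_cone, ih]

lemma bdE_map {E F : Type*} (g : E → F) (l : List E) : ∀ (G : List F → ZMod 2),
    bdE (fun m => G (m.map g)) l = bdE G (l.map g) := by
  induction l with
  | nil => intro G; simp [bdE]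
  | cons v l ih => intro G; simp [bdE, ← ih]

lemma bdE_perm {E : Type*} {l m : List E} (h : l.Perm m) : ∀ (G : List E → ZMod 2),
    (∀ a b : List E, a.Perm b → G a = G b) → bdE G l = bdE G m := by
  induction h with
  | nil => intro G _; rfl
  | cons x h ih =>
    intro G hG
    simp only [bdE]
    rw [hG _ _ h, ih _ (fun a b hab => hG _ _ (hab.cons x))]
  | swap x y l =>
    intro G hG
    simp only [bdE]
    have : (fun m => G (y :: x :: m)) = (fun m => G (x :: y :: m)) := by
      funext m; exact hG _ _ (List.Perm.swap x y m)
    rw [this]; ring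
  | trans _ _ ih1 ih2 => intro G hG; rw [ih1 G hG, ih2 G hG]

lemma bdE_congr {E : Type*} (l : List E) : ∀ (G H : List E → ZMod 2),
    (∀ m : List E, m.Sublist l → G m = H m) → bdE G l = bdE H l := by
  induction l with
  | nil => intro G H _; rfl
  | cons v l ih =>
    intro G H h
    simp only [bdE]
    rw [h l (List.sublist_cons_self v l), ih _ _ (fun m hm => h _ (hm.cons_cons v))]

def alt : Bool → List Bool → ZMod 2
  | _, [] => 1
  | b, c :: l => if c = b then alt (!b) l else 0

lemma bdE_zero {E : Type*} (l : List E) : bdE (fun _ => 0) l = 0 := by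
  induction l with
  | nil => rfl
  | cons v l ih => simp [bdE, ih]

lemma bdE_alt (l : List Bool) : ∀ b, bdE (alt b) l = alt b l + alt (!b) l := by
  induction l with
  | nil => intro b; simp only [bdE, alt]; decide
  | cons c l ih =>
    intro b
    by_cases h : c = b
    · subst h
      have h1 : (fun m => alt c (c :: m)) = alt (!c) := by funext m; simp [alt]
      simp only [bdE, h1, ih]
      have : c ≠ !c := by cases c <;> simp
      simp only [alt, if_true, this, if_false, Bool.not_not]
      have := CharTwo.add_self_eq_zero (alt c l)
      linear_combination this
    · have h1 : (fun m => alt b (c :: m)) = fun _ => 0 := by funext m; simp [alt, h]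
      simp only [bdE, h1, bdE_zero]
      have : c = !b := by cases c <;> cases b <;> simp_all
      subst this
      simp [alt]

def sg (a : ℕ) : Bool := decide (a % 2 = 1)
def fl (a : ℕ) : ℕ := if a % 2 = 1 then a - 1 else a + 1

lemma sg_fl (a : ℕ) : sg (fl a) = !(sg a) := by
  unfold sg fl
  split_ifs with h
  · have : ¬ ((a - 1) % 2 = 1) := by omega
    simp [h, this]
  · have : ((a + 1) % 2 = 1) := by omega
    simp [h, this]

/-- non complementary label lists -/
def NC (l : List ℕ) : Prop := ∀ a ∈ l, ∀ b ∈ l, a / 2 = b / 2 → a = b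

def aL (b : Bool) (l : List ℕ) : ZMod 2 := alt b ((l.insertionSort (· ≤ ·)).map sg)

lemma aL_perm (b : Bool) (l m : List ℕ) (h : l.Perm m) : aL b l = aL b m := by
  have : l.insertionSort (· ≤ ·) = m.insertionSort (· ≤ ·) := by
    apply List.Perm.eq_of_pairwise' (r := (· ≤ ·)) (List.pairwise_insertionSort _ _) (List.pairwise_insertionSort _ _)
    exact ((List.perm_insertionSort _ l).trans h).trans (List.perm_insertionSort _ m).symm
  simp [aL, this]

lemma aL_sorted (b : Bool) (l : List ℕ) (h : l.Pairwise (· ≤ ·)) :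
    aL b l = alt b (l.map sg) := by
  simp [aL, h.insertionSort_eq]

lemma bdE_aL (b : Bool) (l : List ℕ) : bdE (aL b) l = aL b l + aL (!b) l := by
  set s := l.insertionSort (· ≤ ·) with hs
  have hp : l.Perm s := (List.perm_insertionSort _ l).symm
  have hsort : s.Pairwise (· ≤ ·) := List.pairwise_insertionSort _ _
  rw [bdE_perm hp _ (aL_perm b), aL_perm b _ _ hp, aL_perm (!b) _ _ hp, aL_sorted _ _ hsort,
    aL_sorted _ _ hsort, bdE_congr s (aL b) (fun m => alt b (m.map sg))
      (fun m hm => aL_sorted b m (hsort.sublist hm)), bdE_map, bdE_alt]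

lemma alt_flip (l : List Bool) : ∀ b, alt b (l.map (fun c => !c)) = alt (!b) l := by
  induction l with
  | nil => intro b; rfl
  | cons c l ih => intro b; cases c <;> cases b <;> simp [alt, ih]

lemma aL_flip (b : Bool) (l : List ℕ) (h : NC l) : aL b (l.map fl) = aL (!b) l := by
  set s := l.insertionSort (· ≤ ·) with hs
  have hp : l.Perm s := (List.perm_insertionSort _ l).symm
  have hsort : s.Pairwise (· ≤ ·) := List.pairwise_insertionSort _ _
  have h2 : (s.map fl).Pairwise (· ≤ ·) := by
    rw [List.pairwise_map]
    refine hsort.imp_of_mem ?_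
    intro a c ha hc hac
    have := h a (hp.mem_iff.2 ha) c (hp.mem_iff.2 hc)
    unfold fl
    split_ifs <;> omega
  rw [aL_perm b _ _ (hp.map fl), aL_perm (!b) _ _ hp, aL_sorted _ _ hsort, aL_sorted _ _ h2,
    ← alt_flip]
  congr 1
  simp [sg_fl]

lemma alt_mono (l : List ℕ) : ∀ (b : Bool), l.Pairwise (· ≤ ·) → NC l → alt b (l.map sg) ≠ 0 →
    l.Pairwise (fun a c => a / 2 < c / 2) ∧ (∀ a ∈ l.head?, sg a = b) := by
  induction l with
  | nil => intro b _ _ _; simp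
  | cons a l ih =>
    intro b hl hn ha
    simp only [List.map_cons, alt] at ha
    split_ifs at ha with hb
    swap
    · simp at ha
    rw [List.pairwise_cons] at hl
    obtain ⟨h1, h2⟩ := ih (!b) hl.2 (fun x hx y hy => hn x (by simp [hx]) y (by simp [hy])) ha
    refine ⟨?_, by simp [hb]⟩
    rw [List.pairwise_cons]
    refine ⟨?_, h1⟩
    cases l with
    | nil => simp
    | cons c l =>
      have hac : a / 2 < c / 2 := by
        have e1 := h2 c (by simp)
        have hle : a ≤ c := hl.1 c (by simp)
        have hne : a ≠ c := by
          rintro rfl; rw [hb] at e1; cases b <;> simp at e1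
        have := hn a (by simp) c (by simp)
        by_contra hcon
        have : a / 2 = c / 2 := by omega
        tauto
      intro x hx
      rcases List.mem_cons.1 hx with rfl | hx
      · exact hac
      · rw [List.pairwise_cons] at h1
        exact hac.trans (h1.1 x hx)

lemma aL_ne_zero (b : Bool) (l : List ℕ) (h : NC l) (ha : aL b l ≠ 0) (n : ℕ)
    (hlt : ∀ a ∈ l, a / 2 < n) : l.length ≤ n := by
  set s := l.insertionSort (· ≤ ·) with hs
  have hp : l.Perm s := (List.perm_insertionSort _ l).symm
  have hsort : s.Pairwise (· ≤ ·) := List.pairwise_insertionSort _ _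
  rw [aL_perm _ _ _ hp, aL_sorted _ _ hsort] at ha
  have h1 := (alt_mono s b hsort (fun x hx y hy => h x (hp.mem_iff.2 hx) y (hp.mem_iff.2 hy)) ha).1
  have h2 : (s.map (· / 2)).Nodup := by
    rw [List.Nodup, List.pairwise_map]
    exact h1.imp (fun h => h.ne)
  have h3 : (s.map (· / 2)) ⊆ List.range n := by
    intro x hx
    obtain ⟨a, ha, rfl⟩ := List.mem_map.1 hx
    simpa using hlt a (hp.mem_iff.2 ha)
  have h4 := (List.subperm_of_subset h2 h3).length_le
  simpa [hp.length_eq] using h4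


/-- chains supported on lists satisfying a predicate -/
def Sup {E : Type*} (P : List E → Prop) : Submodule (ZMod 2) (Ch E) :=
  Finsupp.supported (ZMod 2) (ZMod 2) {l | P l}

lemma single_mem_Sup {E : Type*} {P : List E → Prop} {l : List E} (h : P l) :
    (Finsupp.single l 1 : Ch E) ∈ Sup P :=
  Finsupp.single_mem_supported _ _ h

lemma Sup_induct {E M : Type*} [AddCommGroup M] [Module (ZMod 2) M] {P : List E → Prop}
    (N : Submodule (ZMod 2) M) (φ : Ch E →ₗ[ZMod 2] M)
    (h : ∀ l, P l → φ (Finsupp.single l 1) ∈ N) {c : Ch E} (hc : c ∈ Sup P) : φ c ∈ N := by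
  have : Sup P ≤ N.comap φ := by
    rw [Sup, Finsupp.supported_eq_span_single, Submodule.span_le]
    rintro _ ⟨l, hl, rfl⟩
    exact h l hl
  exact this hc

lemma Sup_mono {E : Type*} {P Q : List E → Prop} (h : ∀ l, P l → Q l) : Sup P ≤ Sup Q :=
  Finsupp.supported_mono h

lemma cone_mem {E : Type*} {P Q : List E → Prop} (v : E) (h : ∀ l, P l → Q (v :: l))
    {c : Ch E} (hc : c ∈ Sup P) : cone v c ∈ Sup Q := by
  refine Sup_induct (Sup Q) (cone v) ?_ hc
  intro l hl
  rw [cone_single]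
  exact single_mem_Sup (h l hl)

lemma bdl_mem {E : Type*} (l : List E) :
    bdl l ∈ Sup (fun m : List E => m.Sublist l ∧ m.length + 1 = l.length) := by
  induction l with
  | nil => simp [bdl]
  | cons v l ih =>
    rw [bdl]
    refine Submodule.add_mem _ (single_mem_Sup (by simp)) ?_
    refine cone_mem v ?_ ih
    rintro m ⟨h1, h2⟩
    exact ⟨h1.cons_cons v, by simp [h2]⟩

def hull {E : Type*} [AddCommGroup E] [Module ℝ E] (l : List E) : Set E :=
  convexHull ℝ {v | v ∈ l}

lemma bary_mem {E : Type*} [AddCommGroup E] [Module ℝ E] (l : List E) (hl : l ≠ []) :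
    bary l ∈ hull l := by
  have hpos : 0 < l.length := List.length_pos_iff.2 hl
  have h0 : (l.length : ℝ) ≠ 0 := by positivity
  have : bary l = ∑ i : Fin l.length, (l.length : ℝ)⁻¹ • l.get i := by
    rw [← Finset.smul_sum, bary]
    congr 1
    exact (Fin.sum_univ_getElem l).symm
  rw [this]
  refine (convex_convexHull ℝ _).sum_mem (fun _ _ => by positivity) ?_ ?_
  · simp [h0]
  · intro i _
    exact subset_convexHull ℝ _ (l.get_mem i)

lemma list_sum_norm {E : Type*} [NormedAddCommGroup E] (l : List E) (r : ℝ) 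
    (h : ∀ v ∈ l, ‖v‖ ≤ r) : ‖l.sum‖ ≤ l.length * r := by
  induction l with
  | nil => simp
  | cons v l ih =>
    have h1 := ih (fun w hw => h w (by simp [hw]))
    have h2 := h v (by simp)
    have := norm_add_le v l.sum
    simp only [List.sum_cons, List.length_cons]
    push_cast
    linarith

lemma list_sum_sub {E : Type*} [AddCommGroup E] [Module ℝ E] (l : List E) (x : E) :
    (l.map (fun y => y - x)).sum = l.sum - (l.length : ℝ) • x := by
  induction l with
  | nil => simp
  | cons v l ih =>
    simp only [List.map_cons, List.sum_cons, ih, List.length_cons]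
    push_cast
    rw [add_smul, one_smul]; abel

lemma dist_bary {E : Type*} [NormedAddCommGroup E] [NormedSpace ℝ E] (l : List E) (N : ℕ)
    (hN : l.length ≤ N + 1) (r : ℝ)
    (h : ∀ v ∈ l, ∀ w ∈ l, dist v w ≤ r) (x : E) (hx : x ∈ l) :
    dist (bary l) x ≤ (N / (N + 1) : ℝ) * r := by
  classical
  have hr : 0 ≤ r := by simpa using h x hx x hx
  have hpos : 0 < l.length := List.length_pos_iff.2 (List.ne_nil_of_mem hx)
  obtain ⟨k, hk⟩ : ∃ k, l.length = k + 1 := ⟨l.length - 1, by omega⟩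
  have hp : l.Perm (x :: l.erase x) := List.perm_cons_erase hx
  have h1 : l.sum - (l.length : ℝ) • x = ((l.erase x).map (fun y => y - x)).sum := by
    rw [← list_sum_sub, (hp.map _).sum_eq]; simp
  have h2 : ‖((l.erase x).map (fun y => y - x)).sum‖ ≤ k * r := by
    have := list_sum_norm ((l.erase x).map (fun y => y - x)) r (by
      intro v hv
      obtain ⟨y, hy, rfl⟩ := List.mem_map.1 hv
      rw [← dist_eq_norm]
      exact h y (List.mem_of_mem_erase hy) x hx)
    rw [List.length_map, List.length_erase_of_mem hx, hk] at this
    simpa using this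
  have h0 : (l.length : ℝ) ≠ 0 := by positivity
  have h3 : bary l - x = (l.length : ℝ)⁻¹ • (l.sum - (l.length : ℝ) • x) := by
    rw [smul_sub, smul_smul, inv_mul_cancel₀ h0, one_smul, bary]
  rw [dist_eq_norm, h3, norm_smul, h1, norm_inv, Real.norm_natCast]
  have hkN : (k : ℝ) ≤ N := by exact_mod_cast (by omega : k ≤ N)
  have hl : (l.length : ℝ) = k + 1 := by rw [hk]; push_cast; ring
  rw [hl]
  calc ((k:ℝ) + 1)⁻¹ * ‖((l.erase x).map (fun y => y - x)).sum‖ ≤ ((k:ℝ)+1)⁻¹ * (k * r) := by gcongr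
    _ = (k / (k+1)) * r := by ring
    _ ≤ _ := by
      gcongr ?_ * r
      rw [div_le_div_iff₀ (by positivity) (by positivity)]
      nlinarith

lemma sd_mem {E : Type*} [NormedAddCommGroup E] [NormedSpace ℝ E] (N : ℕ) (k : ℕ) :
    ∀ (l : List E), l.length = k → k ≤ N + 1 → ∀ r : ℝ, (∀ v ∈ l, ∀ w ∈ l, dist v w ≤ r) →
    sd k (Finsupp.single l 1) ∈ Sup (fun m : List E => m.length = k ∧ (∀ v ∈ m, v ∈ hull l) ∧
      ∀ v ∈ m, ∀ w ∈ m, dist v w ≤ (N / (N + 1) : ℝ) * r) := by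
  induction k with
  | zero =>
    intro l hl _ r _
    simp only [sd, LinearMap.id_apply]
    apply single_mem_Sup
    rw [List.length_eq_zero_iff] at hl
    subst hl
    simp
  | succ k ih =>
    intro l hl hk r hr
    rw [sd_single]
    have hne : l ≠ [] := by rintro rfl; simp at hl
    have key : sd k (bdl l) ∈ Sup (fun m : List E => m.length = k ∧ (∀ v ∈ m, v ∈ hull l) ∧
      ∀ v ∈ m, ∀ w ∈ m, dist v w ≤ (N / (N + 1) : ℝ) * r) := by
      refine Sup_induct _ (sd k) ?_ (bdl_mem l)
      rintro m ⟨hm1, hm2⟩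
      have := ih m (by omega) (by omega) r (fun v hv w hw => hr v (hm1.subset hv) w (hm1.subset hw))
      refine Sup_mono ?_ this
      rintro q ⟨q1, q2, q3⟩
      refine ⟨q1, fun v hv => ?_, q3⟩
      exact convexHull_mono (fun x hx => hm1.subset hx) (q2 v hv)
    have hr0 : 0 ≤ r := by
      obtain ⟨x, hx⟩ := List.exists_mem_of_ne_nil l hne
      simpa using hr x hx x hx
    have hb : ∀ v ∈ hull l, dist v (bary l) ≤ (N / (N + 1) : ℝ) * r := by
      intro v hv
      have : hull l ⊆ Metric.closedBall (bary l) ((N / (N + 1) : ℝ) * r) := by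
        refine convexHull_min ?_ (convex_closedBall _ _)
        intro x hx
        rw [Metric.mem_closedBall, dist_comm]
        exact dist_bary l N (by omega) r hr x hx
      exact this hv
    refine cone_mem _ ?_ key
    rintro m ⟨h1, h2, h3⟩
    refine ⟨by simp [h1], ?_, ?_⟩
    · intro v hv
      rcases List.mem_cons.1 hv with rfl | hv
      · exact bary_mem l hne
      · exact h2 v hv
    · intro v hv w hw
      rcases List.mem_cons.1 hv with rfl | hv <;> rcases List.mem_cons.1 hw with rfl | hw
      · rw [dist_self]; positivity
      · rw [dist_comm]; exact hb w (h2 w hw)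
      · exact hb v (h2 v hv)
      · exact h3 v hv w hw

lemma sd_iter_mem {E : Type*} [NormedAddCommGroup E] [NormedSpace ℝ E] (N : ℕ) (k : ℕ)
    (hk : k ≤ N + 1) (K : Set E) (r : ℝ) (c : Ch E)
    (hc : c ∈ Sup (fun l : List E => l.length = k ∧ hull l ⊆ K ∧ ∀ v ∈ l, ∀ w ∈ l, dist v w ≤ r))
    (m : ℕ) :
    (sd k)^[m] c ∈ Sup (fun l : List E => l.length = k ∧ hull l ⊆ K ∧
      ∀ v ∈ l, ∀ w ∈ l, dist v w ≤ (N / (N + 1) : ℝ) ^ m * r) := by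
  induction m with
  | zero => simpa using hc
  | succ m ih =>
    rw [Function.iterate_succ_apply']
    refine Sup_induct _ (sd k) ?_ ih
    rintro l ⟨h1, h2, h3⟩
    refine Sup_mono ?_ (sd_mem N k l h1 hk _ h3)
    rintro q ⟨q1, q2, q3⟩
    refine ⟨q1, ?_, fun v hv w hw => (q3 v hv w hw).trans (le_of_eq (by ring))⟩
    exact (convexHull_min (fun x hx => q2 x hx) (convex_convexHull ℝ _)).trans h2

/-- the combinatorial heart -/
lemma fan {E : Type*} [NormedAddCommGroup E] [NormedSpace ℝ E] (e : ℕ → E) (n m : ℕ)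
    (lab : E → ℕ) (Good : List E → Prop)
    (hG1 : ∀ l, Good l → NC (l.map lab))
    (hG2 : ∀ l, Good l → ∀ v ∈ l, lab (-v) = fl (lab v))
    (hD : ∀ k ≤ n, (sd (k+1))^[m] (cone (e k) (Sc e k)) ∈ Sup Good) :
    Finsupp.linearCombination (ZMod 2) (fun l : List E => aL true (l.map lab))
      ((sd (n+1))^[m] (Sc e (n+1))) = 1 := by
  set A := Finsupp.linearCombination (ZMod 2) (fun l : List E => aL true (l.map lab)) with hA
  have hbd : ∀ c ∈ Sup Good, A (bd c) = A c + A (tau c) := by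
    intro c hc
    have := Sup_induct (⊥ : Submodule (ZMod 2) (ZMod 2)) (A ∘ₗ bd - (A + A ∘ₗ tau)) ?_ hc
    · rw [Submodule.mem_bot] at this
      simpa [sub_eq_zero] using this
    · intro l hl
      rw [Submodule.mem_bot]
      simp only [LinearMap.sub_apply, LinearMap.add_apply, LinearMap.comp_apply, bd_single,
        tau_single, sub_eq_zero]
      rw [hA, lc_bdl]
      simp only [Finsupp.linearCombination_single, one_smul]
      rw [bdE_map, bdE_aL, ← aL_flip _ _ (hG1 l hl)]
      congr 2
      simp only [List.map_map]
      apply List.map_congr_left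
      intro v hv
      simp [hG2 l hl v hv]
  have hiter : ∀ k : ℕ, ∀ c : Ch E, bd ((sd (k+1))^[m] c) = (sd k)^[m] (bd c) := by
    intro k c
    induction m generalizing c with
    | zero => simp
    | succ m ih => 
      clear hD
      rw [Function.iterate_succ_apply', Function.iterate_succ_apply', bd_sd]
      congr 1
      clear * -
      induction m with
      | zero => simp
      | succ m ih => rw [Function.iterate_succ_apply', Function.iterate_succ_apply', bd_sd, ih]
  have htau : ∀ k : ℕ, ∀ c : Ch E, tau ((sd k)^[m] c) = (sd k)^[m] (tau c) := by
    intro k c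
    clear * -
    induction m with
    | zero => simp
    | succ m ih => rw [Function.iterate_succ_apply', Function.iterate_succ_apply', tau_sd, ih]
  have hadd : ∀ k : ℕ, ∀ c d : Ch E, (sd k)^[m] (c + d) = (sd k)^[m] c + (sd k)^[m] d := by
    intro k c d
    exact iterate_map_add (sd k) m c d
  have main : ∀ k ≤ n + 1, A ((sd k)^[m] (Sc e k)) = 1 := by
    intro k
    induction k with
    | zero =>
      intro _
      have : ∀ m : ℕ, (sd 0)^[m] (Sc e 0) = Sc e 0 := by
        intro m; induction m with
        | zero => rfl
        | succ m ih => rw [Function.iterate_succ_apply', ih]; simp [sd]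
      rw [this, hA]
      simp [Sc, aL, alt]
    | succ k ih =>
      intro hk
      have h1 : Sc e (k+1) = cone (e k) (Sc e k) + tau (cone (e k) (Sc e k)) := by
        rw [tau_cone, tau_Sc]; rfl
      rw [h1, hadd, map_add, ← htau, ← hbd _ (hD k (by omega)), hiter, bd_cone, bd_Sc, map_zero,
        add_zero]
      exact ih (by omega)
  exact main (n+1) le_rfl

theorem borsuk_ulam (n : ℕ) (F : (Fin (n+1) → ℝ) → (Fin n → ℝ))
    (hF : ContinuousOn F {x | ∑ i, |x i| = 1})
    (hodd : ∀ x, ∑ i, |x i| = 1 → F (-x) = - F x) :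
    ∃ x, ∑ i, |x i| = 1 ∧ F x = 0 := by
  classical
  by_contra hcon
  push Not at hcon
  set K : Set (Fin (n+1) → ℝ) := {x | ∑ i, |x i| = 1} with hK
  have hKne : ∀ x ∈ K, F x ≠ 0 := fun x hx => hcon x hx
  have hKc : IsCompact K := by
    refine Metric.isCompact_of_isClosed_isBounded ?_ ?_
    · exact isClosed_eq (by fun_prop) continuous_const
    · refine (Metric.isBounded_closedBall (x := (0 : Fin (n+1) → ℝ)) (r := 1)).subset ?_
      intro x hx
      rw [mem_closedBall_zero_iff, pi_norm_le_iff_of_nonneg zero_le_one]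
      intro i
      rw [← (show ∑ i, |x i| = 1 from hx), Real.norm_eq_abs]
      exact Finset.single_le_sum (f := fun i => |x i|) (fun i _ => abs_nonneg _) (Finset.mem_univ i)
  -- the vertices
  set e : ℕ → (Fin (n+1) → ℝ) := fun k i => if (i : ℕ) = k then 1 else 0 with he
  have heK : e 0 ∈ K := by
    show ∑ i, |e 0 i| = 1
    rw [Finset.sum_eq_single 0]
    · simp [he]
    · intro b _ hb
      have : (b : ℕ) ≠ 0 := fun h => hb (Fin.ext h)
      simp [he, this]
    · simp
  have hn : 0 < n := by
    rcases Nat.eq_zero_or_pos n with h | h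
    · subst h
      exact absurd (Subsingleton.elim _ _) (hKne _ heK)
    · exact h
  have : Nonempty (Fin n) := ⟨⟨0, hn⟩⟩
  obtain ⟨x0, hx0, hmin⟩ := hKc.exists_isMinOn ⟨_, heK⟩ (hF.norm)
  set η := ‖F x0‖ with hη
  have hηpos : 0 < η := norm_pos_iff.2 (hKne _ hx0)
  have hηle : ∀ x ∈ K, ∃ i, η ≤ |F x i| := by
    intro x hx
    have h1 : η ≤ ‖F x‖ := hmin hx
    by_contra hc
    push Not at hc
    have : ‖F x‖ < η := by
      rw [pi_norm_lt_iff hηpos]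
      exact hc
    linarith
  have huc := hKc.uniformContinuousOn_of_continuous hF
  rw [Metric.uniformContinuousOn_iff] at huc
  obtain ⟨δ, hδ, huc⟩ := huc η hηpos
  -- labels
  set idx : (Fin (n+1) → ℝ) → Fin n := fun x => Classical.epsilon (fun i => η ≤ |F x i|) with hidx
  have hidx_spec : ∀ x ∈ K, η ≤ |F x (idx x)| := fun x hx => Classical.epsilon_spec (hηle x hx)
  have hneg : ∀ x ∈ K, -x ∈ K := by
    intro x hx
    show ∑ i, |(-x) i| = 1
    have : ∑ i, |x i| = 1 := hx
    simpa using this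
  have hidx_neg : ∀ x ∈ K, idx (-x) = idx x := by
    intro x hx
    simp only [hidx]
    congr 1
    funext i
    rw [hodd x hx]; simp
  set lab : (Fin (n+1) → ℝ) → ℕ := fun x => 2 * (idx x : ℕ) + if 0 < F x (idx x) then 1 else 0
    with hlab
  have hlab_neg : ∀ x ∈ K, lab (-x) = fl (lab x) := by
    intro x hx
    have h1 := hidx_spec x hx
    have h2 : F x (idx x) ≠ 0 := by
      intro h; rw [h] at h1; simp at h1; linarith
    simp only [hlab, hidx_neg x hx, hodd x hx, fl, Pi.neg_apply, Left.neg_pos_iff]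
    rcases lt_or_gt_of_ne h2 with h | h
    · have : ¬ (0 < F x (idx x)) := by linarith
      simp only [h, this, if_true, if_false]
      split_ifs <;> omega
    · have : ¬ (F x (idx x) < 0) := by linarith
      simp only [h, this, if_true, if_false]
      split_ifs <;> omega
  set Good : List (Fin (n+1) → ℝ) → Prop := fun l => (∀ v ∈ l, v ∈ K) ∧
    ∀ v ∈ l, ∀ w ∈ l, dist v w < δ with hGood
  have hG1 : ∀ l, Good l → NC (l.map lab) := by
    rintro l ⟨h1, h2⟩ a ha b hb hab
    obtain ⟨v, hv, rfl⟩ := List.mem_map.1 ha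
    obtain ⟨w, hw, rfl⟩ := List.mem_map.1 hb
    have hd := huc v (h1 v hv) w (h1 w hw) (h2 v hv w hw)
    have e1 := hidx_spec v (h1 v hv)
    have e2 := hidx_spec w (h1 w hw)
    have hi : idx v = idx w := by
      apply Fin.ext
      simp only [hlab] at hab
      split_ifs at hab <;> omega
    have hd2 : |F v (idx w) - F w (idx w)| < η := by
      rw [← Real.dist_eq]
      exact (dist_le_pi_dist (F v) (F w) (idx w)).trans_lt hd
    rw [hi] at e1
    simp only [hlab, hi]
    rw [abs_lt] at hd2
    split_ifs with c1 c2 c2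
    · rfl
    · exfalso
      rw [abs_of_pos c1] at e1
      rw [abs_of_nonpos (not_lt.1 c2)] at e2
      linarith [hd2.1, hd2.2]
    · exfalso
      rw [abs_of_pos c2] at e2
      rw [abs_of_nonpos (not_lt.1 c1)] at e1
      linarith [hd2.1, hd2.2]
    · rfl
  have hG2 : ∀ l, Good l → ∀ v ∈ l, lab (-v) = fl (lab v) := fun l hl v hv => hlab_neg v (hl.1 v hv)
  -- faces
  set FaceP : ℕ → List (Fin (n+1) → ℝ) → Prop := fun k l => l.length = k ∧
      ∃ σ : Fin (n+1) → ℝ, (∀ i, |σ i| = 1) ∧ ∀ v ∈ l, (∀ i, 0 ≤ σ i * v i) ∧ ∑ i, σ i * v i = 1 ∧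
        ∀ i : Fin (n+1), k ≤ (i : ℕ) → v i = 0 with hFaceP
  have hstep : ∀ k ≤ n, Sc e k ∈ Sup (FaceP k) → ∀ s : ℝ, |s| = 1 → cone (s • e k) (Sc e k) ∈
      Sup (FaceP (k+1)) := by
    intro k hk ih s hs
    have hss : s * s = 1 := by rw [← abs_mul_abs_self, hs]; norm_num
    refine cone_mem _ ?_ ih
    rintro l ⟨hl, σ, hσ, hv⟩
    refine ⟨by simp [hl], fun i => if (i : ℕ) = k then s else σ i, ?_, ?_⟩
    · intro i
      dsimp only
      split_ifs
      · exact hs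
      · exact hσ i
    · intro v hvl
      rcases List.mem_cons.1 hvl with rfl | hvl
      · refine ⟨?_, ?_, ?_⟩
        · intro i
          by_cases h : (i : ℕ) = k <;> simp [he, h, hss]
        · rw [Finset.sum_eq_single ⟨k, by omega⟩]
          · simp [he, hss]
          · intro b _ hb
            have : (b : ℕ) ≠ k := fun h => hb (Fin.ext h)
            simp [he, this]
          · simp
        · intro i hi
          have : (i : ℕ) ≠ k := by omega
          simp [he, this]
      · obtain ⟨v1, v2, v3⟩ := hv v hvl
        have hrw : ∀ i : Fin (n+1), (if (i : ℕ) = k then s else σ i) * v i = σ i * v i := by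
          intro i
          split_ifs with h
          · rw [v3 i (by omega)]; simp
          · rfl
        refine ⟨fun i => by rw [hrw]; exact v1 i, ?_, fun i hi => v3 i (by omega)⟩
        simp only [hrw]; exact v2
  have hface : ∀ k ≤ n + 1, Sc e k ∈ Sup (FaceP k) := by
    intro k
    induction k with
    | zero =>
      intro _
      exact single_mem_Sup ⟨rfl, fun _ => 1, by simp, by simp⟩
    | succ k ih =>
      intro hk
      have ih := ih (by omega)
      have s1 := hstep k (by omega) ih 1 (by simp)
      have s2 := hstep k (by omega) ih (-1) (by simp)
      rw [one_smul] at s1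
      rw [neg_one_smul] at s2
      exact Submodule.add_mem _ s1 s2
  have hconv : ∀ k l, FaceP k l → (l.length = k ∧
      hull l ⊆ K ∧ ∀ v ∈ l, ∀ w ∈ l, dist v w ≤ 2) := by
    rintro k l ⟨hl, σ, hσ, hv⟩
    have hsub : hull l ⊆ K := by
      have h1 : hull l ⊆ {x | (∀ i, 0 ≤ σ i * x i) ∧ ∑ i, σ i * x i = 1} := by
        refine convexHull_min (fun v h => ⟨(hv v h).1, (hv v h).2.1⟩) ?_
        intro x hx y hy a b ha hb hab
        refine ⟨fun i => ?_, ?_⟩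
        · have e1 := mul_nonneg ha (hx.1 i)
          have e2 := mul_nonneg hb (hy.1 i)
          simp only [Pi.add_apply, Pi.smul_apply, smul_eq_mul]
          nlinarith
        · have : ∀ i, σ i * (a • x + b • y) i = a * (σ i * x i) + b * (σ i * y i) := by
            intro i; simp only [Pi.add_apply, Pi.smul_apply, smul_eq_mul]; ring
          simp only [this, Finset.sum_add_distrib, ← Finset.mul_sum, hx.2, hy.2]
          linarith
      intro x hx
      obtain ⟨h2, h3⟩ := h1 hx
      show ∑ i, |x i| = 1
      rw [← h3]
      refine Finset.sum_congr rfl (fun i _ => ?_)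
      rw [← abs_of_nonneg (h2 i), abs_mul, hσ, one_mul]
    refine ⟨hl, hsub, ?_⟩
    have hb : ∀ v ∈ l, ‖v‖ ≤ 1 := by
      intro v hvl
      have hx : v ∈ K := hsub (subset_convexHull ℝ _ hvl)
      rw [pi_norm_le_iff_of_nonneg zero_le_one]
      intro i
      rw [← (show ∑ i, |v i| = 1 from hx), Real.norm_eq_abs]
      exact Finset.single_le_sum (f := fun i => |v i|) (fun i _ => abs_nonneg _) (Finset.mem_univ i)
    intro v hv w hw
    have := dist_le_norm_add_norm v w
    linarith [hb v hv, hb w hw]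
  have hhull : ∀ k ≤ n + 1, Sc e k ∈ Sup (fun l : List (Fin (n+1) → ℝ) => l.length = k ∧
      hull l ⊆ K ∧ ∀ v ∈ l, ∀ w ∈ l, dist v w ≤ 2) :=
    fun k hk => Sup_mono (hconv k) (hface k hk)
  obtain ⟨m, hm⟩ : ∃ m : ℕ, (n / (n + 1) : ℝ) ^ m * 2 < δ := by
    have h1 : (n / (n + 1) : ℝ) < 1 := by
      rw [div_lt_one (by positivity)]; linarith
    obtain ⟨m, hm⟩ := exists_pow_lt_of_lt_one (show 0 < δ / 2 by positivity) h1
    exact ⟨m, by linarith⟩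
  have toGood : ∀ k ≤ n + 1, ∀ c ∈ Sup (fun l : List (Fin (n+1) → ℝ) => l.length = k ∧
      hull l ⊆ K ∧ ∀ v ∈ l, ∀ w ∈ l, dist v w ≤ 2), 
      (sd k)^[m] c ∈ Sup (fun l => l.length = k ∧ Good l) := by
    intro k hk c hc
    refine Sup_mono ?_ (sd_iter_mem n k hk K 2 c hc m)
    rintro l ⟨h1, h2, h3⟩
    exact ⟨h1, fun v hv => h2 (subset_convexHull ℝ _ hv),
      fun v hv w hw => (h3 v hv w hw).trans_lt hm⟩
  have hD : ∀ k ≤ n, (sd (k+1))^[m] (cone (e k) (Sc e k)) ∈ Sup Good := by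
    intro k hk
    have hc : cone (e k) (Sc e k) ∈ Sup (fun l : List (Fin (n+1) → ℝ) => l.length = k + 1 ∧
      hull l ⊆ K ∧ ∀ v ∈ l, ∀ w ∈ l, dist v w ≤ 2) := by
      have h1 := hstep k hk (hface k (by omega)) 1 (by simp)
      rw [one_smul] at h1
      exact Sup_mono (hconv (k+1)) h1
    exact Sup_mono (fun l hl => hl.2) (toGood (k+1) (by omega) _ hc)
  have hfan := fan e n m lab Good hG1 hG2 hD
  have hS := toGood (n+1) le_rfl _ (hhull (n+1) le_rfl)
  have hzero := Sup_induct (⊥ : Submodule (ZMod 2) (ZMod 2))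
    (Finsupp.linearCombination (ZMod 2) (fun l : List (Fin (n+1) → ℝ) => aL true (l.map lab)))
    ?_ hS
  · rw [Submodule.mem_bot, hfan] at hzero
    exact one_ne_zero hzero
  · rintro l ⟨h1, h2⟩
    rw [Submodule.mem_bot]
    simp only [Finsupp.linearCombination_single, one_smul]
    by_contra hne
    have := aL_ne_zero true (l.map lab) (hG1 l h2) hne n (by
      intro a ha
      obtain ⟨v, _, rfl⟩ := List.mem_map.1 ha
      have := (idx v).2
      simp only [hlab]
      split_ifs <;> omega)
    simp at this
    omega

def gz (z : ℂ) (t : ℝ) : ℝ := z.im / ((t - z.re)^2 + z.im^2)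

lemma gz_cont (z : ℂ) : Continuous (gz z) := by
  unfold gz
  by_cases h : z.im = 0
  · simp [h]; exact continuous_const
  · refine Continuous.div (by fun_prop) (by fun_prop) ?_
    intro t
    positivity

lemma gz_im (z : ℂ) (t : ℝ) : (1 / ((t:ℂ) - z)).im = gz z t := by
  simp only [one_div, Complex.inv_im, gz, Complex.normSq_apply, Complex.sub_re, Complex.sub_im,
    Complex.ofReal_re, Complex.ofReal_im]
  ring

lemma gz_int (z : ℂ) : ∫ t in (0:ℝ)..1, |gz z t| ≤ Real.pi := by
  by_cases h : z.im = 0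
  · simp [gz, h, Real.pi_nonneg]
  have hd : ∀ t ∈ Set.uIcc (0:ℝ) 1, HasDerivAt (fun t => Real.arctan ((t - z.re)/ z.im)) (gz z t) t := by
    intro t _
    have h1 : HasDerivAt (fun t : ℝ => (t - z.re)/ z.im) (1 / z.im) t :=
      ((hasDerivAt_id t).sub_const _).div_const _
    have := h1.arctan
    convert this using 1
    unfold gz
    have : (t - z.re)^2 + z.im^2 ≠ 0 := by positivity
    have : 1 + ((t - z.re)/z.im)^2 ≠ 0 := by positivity
    field_simp
    ring
  have hi := intervalIntegral.integral_eq_sub_of_hasDerivAt hd ((gz_cont z).intervalIntegrable _ _)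
  have b1 := Real.arctan_lt_pi_div_two ((1 - z.re)/ z.im)
  have b2 := Real.neg_pi_div_two_lt_arctan ((1 - z.re)/ z.im)
  have b3 := Real.arctan_lt_pi_div_two ((0 - z.re)/ z.im)
  have b4 := Real.neg_pi_div_two_lt_arctan ((0 - z.re)/ z.im)
  rcases lt_or_gt_of_ne h with h | h
  · have : ∀ t, |gz z t| = - gz z t := fun t => abs_of_nonpos (by
      unfold gz; exact div_nonpos_of_nonpos_of_nonneg h.le (by positivity))
    simp only [this, intervalIntegral.integral_neg]
    linarith
  · have : ∀ t, |gz z t| = gz z t := fun t => abs_of_nonneg (by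
      unfold gz; positivity)
    simp only [this]
    linarith

lemma gz_sum (s : Multiset ℂ) : Continuous (fun t => (s.map (fun z => |gz z t|)).sum) ∧
    ∫ t in (0:ℝ)..1, (s.map (fun z => |gz z t|)).sum ≤ s.card * Real.pi := by
  induction s using Multiset.induction with
  | empty => simp; exact continuous_const
  | cons z s ih =>
    simp only [Multiset.map_cons, Multiset.sum_cons, Multiset.card_cons]
    refine ⟨(gz_cont z).abs.add ih.1, ?_⟩
    rw [intervalIntegral.integral_add ((gz_cont z).abs.intervalIntegrable _ _) (ih.1.intervalIntegrable _ _)]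
    have := gz_int z
    push_cast
    linarith [ih.2]

lemma abs_im_sum (s : Multiset ℂ) (t : ℝ) :
    |((s.map (fun z => 1 / ((t:ℂ) - z))).sum).im| ≤ (s.map (fun z => |gz z t|)).sum := by
  induction s using Multiset.induction with
  | empty => simp
  | cons z s ih =>
    simp only [Multiset.map_cons, Multiset.sum_cons, Complex.add_im]
    rw [gz_im]
    exact (abs_add_le _ _).trans (by linarith)

lemma tv_poly (n : ℕ) (q : Polynomial ℝ) (hq : q.natDegree ≤ n) :
    ∫ t in (0:ℝ)..1, |q.derivative.eval t / (1 + (q.eval t)^2)| ≤ n * Real.pi := by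
  set P : Polynomial ℂ := 1 + Polynomial.C Complex.I * q.map (algebraMap ℝ ℂ) with hP
  have e1 : ∀ t : ℝ, P.eval (t:ℂ) = 1 + Complex.I * (q.eval t : ℝ) := by
    intro t
    simp only [hP, Polynomial.eval_add, Polynomial.eval_one, Polynomial.eval_mul, Polynomial.eval_C]
    congr 2
    have := Polynomial.eval_map_apply (f := algebraMap ℝ ℂ) (p := q) t
    simpa using this
  have e2 : ∀ t : ℝ, P.derivative.eval (t:ℂ) = Complex.I * (q.derivative.eval t : ℝ) := by
    intro t
    simp only [hP, Polynomial.derivative_add, Polynomial.derivative_one, Polynomial.derivative_C_mul, zero_add,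
      Polynomial.eval_mul, Polynomial.eval_C, Polynomial.derivative_map]
    congr 1
    have := Polynomial.eval_map_apply (f := algebraMap ℝ ℂ) (p := q.derivative) t
    simpa using this
  have ne : ∀ t : ℝ, P.eval (t:ℂ) ≠ 0 := by
    intro t h
    rw [e1] at h
    have := congrArg Complex.re h
    simp at this
  have hdeg : P.roots.card ≤ n := by
    refine (Polynomial.card_roots' P).trans ?_
    refine (Polynomial.natDegree_add_le _ _).trans ?_
    simp only [Polynomial.natDegree_one]
    refine max_le (Nat.zero_le _) ?_
    refine (Polynomial.natDegree_C_mul_le _ _).trans ?_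
    exact (Polynomial.natDegree_map_le).trans hq
  have key : ∀ t : ℝ, |q.derivative.eval t / (1 + (q.eval t)^2)| ≤
      (P.roots.map (fun z => |gz z t|)).sum := by
    intro t
    refine le_trans (le_of_eq ?_) (abs_im_sum P.roots t)
    have hs := (IsAlgClosed.splits P).eval_derivative_div_eval_of_ne_zero (ne t)
    rw [← hs, e1, e2]
    congr 1
    simp [Complex.div_im, Complex.normSq_apply]
    ring
  obtain ⟨hc, hI⟩ := gz_sum P.roots
  have hcq : Continuous fun t => |q.derivative.eval t / (1 + (q.eval t)^2)| := by
    refine Continuous.abs (Continuous.div (by fun_prop) (by fun_prop) (fun t => by positivity))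
  refine (intervalIntegral.integral_mono (by norm_num) (hcq.intervalIntegrable _ _) (hc.intervalIntegrable _ _) key).trans ?_
  refine hI.trans ?_
  have : (P.roots.card : ℝ) ≤ n := by exact_mod_cast hdeg
  exact mul_le_mul_of_nonneg_right this Real.pi_nonneg
abbrev II : Set ℝ := Set.Icc 0 1

lemma int_mul {f φ : ℝ → ℝ} (hf : IntegrableOn f II) (hφ : Continuous φ) :
    IntegrableOn (fun t => f t * φ t) II :=
  hf.mul_continuousOn hφ.continuousOn isCompact_Icc

def SM : Submodule ℝ (ℝ → ℝ) where
  carrier := {φ | ContDiff ℝ (⊤ : ℕ∞) φ}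
  add_mem' := by
    intro a b ha hb
    rw [Set.mem_ofPred_eq] at *
    exact ContDiff.add ha hb
  zero_mem' := by
    rw [Set.mem_ofPred_eq]
    exact contDiff_const
  smul_mem' := by
    intro c x hx
    rw [Set.mem_ofPred_eq] at *
    exact contDiff_const.smul hx

lemma SM_mem (φ : ℝ → ℝ) : φ ∈ SM ↔ ContDiff ℝ (⊤ : ℕ∞) φ := by
  change φ ∈ {φ : ℝ → ℝ | ContDiff ℝ (⊤ : ℕ∞) φ} ↔ _
  rw [Set.mem_ofPred_eq]

def TT {n : ℕ} (f : Fin n → ℝ → ℝ) (hf : ∀ j, IntegrableOn (f j) II) : SM →ₗ[ℝ] (Fin n → ℝ) where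
  toFun φ := fun j => ∫ t in II, f j t * (φ : ℝ → ℝ) t
  map_add' := by
    intro a b
    ext j
    simp only [Submodule.coe_add, Pi.add_apply, mul_add]
    exact integral_add (int_mul (hf j) (((SM_mem _).1 a.2).continuous)) (int_mul (hf j) (((SM_mem _).1 b.2).continuous))
  map_smul' := by
    intro c a
    ext j
    simp only [Submodule.coe_smul, Pi.smul_apply, smul_eq_mul, RingHom.id_apply]
    rw [← integral_const_mul]
    congr 1
    ext t
    ring

lemma section_lemma {n : ℕ} (f : Fin n → ℝ → ℝ) (hf : ∀ j, IntegrableOn (f j) II) :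
    ∃ (V : Submodule ℝ (Fin n → ℝ)) (W : Fin n → ℝ → ℝ), (∀ k, ContDiff ℝ (⊤ : ℕ∞) (W k)) ∧
      (∀ φ : ℝ → ℝ, ContDiff ℝ (⊤ : ℕ∞) φ → (fun j => ∫ t in II, f j t * φ t) ∈ V) ∧
      ∀ c ∈ V, ∀ j, ∫ t in II, f j t * (∑ k, c k * W k t) = c j := by
  obtain ⟨g, hg⟩ := LinearMap.exists_rightInverse_of_surjective (TT f hf).rangeRestrict
    (TT f hf).range_rangeRestrict
  obtain ⟨p, hp⟩ := LinearMap.exists_leftInverse_of_injective (LinearMap.range (TT f hf)).subtype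
    (LinearMap.range (TT f hf)).ker_subtype
  refine ⟨LinearMap.range (TT f hf), fun k => (g (p (Pi.single k 1)) : SM), fun k => (SM_mem _).1 (g (p (Pi.single k 1))).2, ?_, ?_⟩
  · intro φ hφ
    exact ⟨⟨φ, (SM_mem _).2 hφ⟩, rfl⟩
  · intro c hc j
    have h1 : ∀ t, ∑ k, c k * ((g (p (Pi.single k 1)) : SM) : ℝ → ℝ) t = ((g (p c) : SM) : ℝ → ℝ) t := by
      intro t
      have := LinearMap.pi_apply_eq_sum_univ (g.comp p) c
      simp only [LinearMap.comp_apply] at this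
      rw [this]
      simp [Finset.sum_apply]
      refine Finset.sum_congr rfl fun k _ => ?_
      have hk : (fun j => if k = j then (1:ℝ) else 0) = Pi.single k 1 := by
        ext i
        simp [Pi.single_apply, eq_comm]
      rw [hk]
    simp only [h1]
    have h2 : p c = ⟨c, hc⟩ := LinearMap.congr_fun hp ⟨c, hc⟩
    have h3 := LinearMap.congr_fun hg (p c)
    have h4 : TT f hf (g (p c)) = c := by
      have := congrArg Subtype.val h3
      simp only [LinearMap.comp_apply, LinearMap.id_apply] at this
      exact this.trans (by rw [h2])
    exact congrFun h4 j

lemma W_bound {n : ℕ} (W : Fin n → ℝ → ℝ) (hW : ∀ k, ContDiff ℝ (⊤ : ℕ∞) (W k)) :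
    ∃ B > 0, ∀ c : Fin n → ℝ, ∀ t ∈ II, |∑ k, c k * W k t| ≤ B * ‖c‖ ∧
      |∑ k, c k * deriv (W k) t| ≤ B * ‖c‖ := by
  have hd : ∀ k, Continuous (deriv (W k)) := fun k => (hW k).continuous_deriv (by simp)
  have hc : Continuous (fun t => ∑ k, (|W k t| + |deriv (W k) t|)) := by
    refine continuous_finsetSum _ fun k _ => ?_
    exact ((hW k).continuous.abs).add (hd k).abs
  obtain ⟨B, hB⟩ := (isCompact_Icc (a := (0:ℝ)) (b := 1)).exists_bound_of_continuousOn hc.continuousOn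
  have key : ∀ c : Fin n → ℝ, ∀ t ∈ II, ∀ U : Fin n → ℝ, (∀ k, |U k| ≤ |W k t| + |deriv (W k) t|) →
      |∑ k, c k * U k| ≤ (max B 1) * ‖c‖ := by
    intro c t ht U hU
    refine (Finset.abs_sum_le_sum_abs _ _).trans ?_
    have : ∑ k, |c k * U k| ≤ ∑ k, ‖c‖ * (|W k t| + |deriv (W k) t|) := by
      refine Finset.sum_le_sum fun k _ => ?_
      rw [abs_mul]
      exact mul_le_mul (norm_le_pi_norm c k) (hU k) (abs_nonneg _) (norm_nonneg _)
    refine this.trans ?_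
    rw [← Finset.mul_sum, mul_comm]
    refine mul_le_mul_of_nonneg_right ?_ (norm_nonneg _)
    exact (le_abs_self _).trans ((hB t ht).trans (le_max_left _ _))
  refine ⟨max B 1, by positivity, fun c t ht => ⟨key c t ht (fun k => W k t) ?_, key c t ht (fun k => deriv (W k) t) ?_⟩⟩
  · intro k; simp
  · intro k; simp

def pp {n : ℕ} (x : Fin (n+1) → ℝ) : Polynomial ℝ := ∑ i, Polynomial.C (x i) * Polynomial.X ^ (i:ℕ)

lemma pp_eval {n : ℕ} (x : Fin (n+1) → ℝ) (t : ℝ) : (pp x).eval t = ∑ i, x i * t ^ (i:ℕ) := by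
  simp [pp, Polynomial.eval_finsetSum]

lemma pp_neg {n : ℕ} (x : Fin (n+1) → ℝ) (t : ℝ) : (pp (-x)).eval t = - (pp x).eval t := by
  simp [pp_eval]

lemma pp_cont {n : ℕ} : Continuous (fun z : (Fin (n+1) → ℝ) × ℝ => (pp z.1).eval z.2) := by
  simp only [pp_eval]
  fun_prop

lemma pp_deg {n : ℕ} (x : Fin (n+1) → ℝ) : (pp x).natDegree ≤ n := by
  refine Polynomial.natDegree_sum_le_of_forall_le _ _ fun i _ => ?_
  refine (Polynomial.natDegree_C_mul_X_pow_le _ _).trans ?_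
  have := i.2
  omega

lemma pp_ne {n : ℕ} (x : Fin (n+1) → ℝ) (hx : ∑ i, |x i| = 1) : pp x ≠ 0 := by
  intro h
  have : ∀ i, x i = 0 := by
    intro i
    have := congrArg (fun p => p.coeff (i:ℕ)) h
    simp [pp, Polynomial.coeff_C_mul, Polynomial.coeff_X_pow] at this
    rw [Finset.sum_eq_single i] at this
    · simpa using this
    · intro j _ hj
      rw [if_neg]
      intro h; exact hj (Fin.ext h.symm)
    · simp
  simp [this] at hx

lemma cos_int_cont {n : ℕ} (G : ℝ → ℝ) (hG : IntegrableOn G II) (m : ℕ) :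
    Continuous (fun x : Fin (n+1) → ℝ => ∫ t in II, G t * Real.cos (Real.arctan (m * (pp x).eval t))) := by
  refine continuous_of_dominated (bound := fun t => ‖G t‖) ?_ ?_ hG.norm ?_
  · intro x
    refine hG.aestronglyMeasurable.mul (Continuous.aestronglyMeasurable ?_)
    exact Real.continuous_cos.comp (Real.continuous_arctan.comp (by fun_prop))
  · intro x
    refine Filter.Eventually.of_forall fun t => ?_
    rw [norm_mul]
    exact mul_le_of_le_one_right (norm_nonneg _) (Real.abs_cos_le_one _)
  · refine Filter.Eventually.of_forall fun t => ?_
    refine continuous_const.mul (Real.continuous_cos.comp (Real.continuous_arctan.comp (continuous_const.mul ?_)))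
    exact pp_cont.comp (by fun_prop : Continuous fun x : Fin (n+1) → ℝ => (x, t))

lemma unif_small {n : ℕ} (G : ℝ → ℝ) (hG : IntegrableOn G II) (hG0 : ∀ t, 0 ≤ G t) (δ : ℝ) (hδ : 0 < δ) :
    ∃ m : ℕ, ∀ x : Fin (n+1) → ℝ, ∑ i, |x i| = 1 →
      ∫ t in II, G t * Real.cos (Real.arctan (m * (pp x).eval t)) ≤ δ := by
  set K : Set (Fin (n+1) → ℝ) := {x | ∑ i, |x i| = 1}
  have hK : IsCompact K := by
    refine Metric.isCompact_of_isClosed_isBounded ?_ ?_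
    · exact isClosed_eq (by fun_prop) continuous_const
    · refine (Metric.isBounded_closedBall (x := (0 : Fin (n+1) → ℝ)) (r := 1)).subset ?_
      intro x hx
      rw [mem_closedBall_zero_iff, pi_norm_le_iff_of_nonneg zero_le_one]
      intro i
      rw [← show ∑ i, |x i| = 1 from hx]
      exact Finset.single_le_sum (f := fun i => |x i|) (fun i _ => abs_nonneg _) (Finset.mem_univ i)
  have hint : ∀ (m : ℕ) (x : Fin (n+1) → ℝ),
      IntegrableOn (fun t => G t * Real.cos (Real.arctan (m * (pp x).eval t))) II := fun m x =>
    int_mul hG (Real.continuous_cos.comp (Real.continuous_arctan.comp (by fun_prop)))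
  have hD := Antitone.tendstoUniformlyOn_of_forall_tendsto
    (F := fun (m : ℕ) (x : Fin (n+1) → ℝ) => ∫ t in II, G t * Real.cos (Real.arctan (m * (pp x).eval t)))
    (f := fun _ => 0) hK (fun m => (cos_int_cont G hG m).continuousOn) ?_ continuousOn_const ?_
  · rw [Metric.tendstoUniformlyOn_iff] at hD
    obtain ⟨m, hm⟩ := (hD δ hδ).exists
    refine ⟨m, fun x hx => ?_⟩
    have := hm x hx
    rw [dist_zero_left, Real.norm_eq_abs] at this
    exact (le_abs_self _).trans this.le
  · intro x hx m m' hmm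
    refine integral_mono (hint _ _) (hint _ _) fun t => ?_
    refine mul_le_mul_of_nonneg_left ?_ (hG0 t)
    rw [Real.cos_arctan, Real.cos_arctan]
    refine one_div_le_one_div_of_le (by positivity) (Real.sqrt_le_sqrt ?_)
    rw [mul_pow, mul_pow]
    have : (m:ℝ) ≤ m' := by exact_mod_cast hmm
    gcongr
  · intro x hx
    have : (0:ℝ) = ∫ t in II, (0:ℝ) := by simp
    rw [this]
    refine tendsto_integral_of_dominated_convergence (fun t => ‖G t‖) (fun m => (hint m x).aestronglyMeasurable) hG.norm ?_ ?_
    · intro m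
      refine Filter.Eventually.of_forall fun t => ?_
      rw [norm_mul]
      exact mul_le_of_le_one_right (norm_nonneg _) (Real.abs_cos_le_one _)
    · have hfin : ({t | (pp x).IsRoot t} : Set ℝ).Finite := Polynomial.finite_setOfPred_isRoot (pp_ne x hx)
      have h0 : ∀ᵐ t ∂(volume.restrict II), ¬ (pp x).IsRoot t :=
        ae_restrict_of_ae (by simpa [ae_iff] using hfin.measure_zero volume)
      filter_upwards [h0] with t ht
      rw [← mul_zero (G t)]
      refine Filter.Tendsto.const_mul _ ?_
      have hp : (pp x).eval t ≠ 0 := ht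
      simp only [Real.cos_arctan, one_div]
      refine Filter.Tendsto.inv_tendsto_atTop ?_
      have ha : Filter.Tendsto (fun m : ℕ => (m:ℝ) * |(pp x).eval t|) Filter.atTop Filter.atTop :=
        Filter.Tendsto.atTop_mul_const (abs_pos.2 hp) tendsto_natCast_atTop_atTop
      refine Filter.tendsto_atTop_mono (fun m => ?_) ha
      refine Real.le_sqrt_of_sq_le ?_
      rw [mul_pow, mul_pow, sq_abs]
      linarith

lemma ptwise (ϕ ρ a b : ℝ) (hc : 0 ≤ Real.cos ϕ) (ha : |a| ≤ ρ) (hb : |b| ≤ ρ) :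
    |(a - b) + (Real.cos (ϕ + a * Real.sin ϕ) - Real.cos (ϕ + b * Real.sin ϕ))| ≤
      |a - b| * (Real.cos ϕ + ρ) := by
  set s := Real.sin ϕ with hs
  have hd : ∀ u ∈ Set.Icc (-ρ) ρ, HasDerivWithinAt (fun u => u + Real.cos (ϕ + u * s))
      (1 - s * Real.sin (ϕ + u * s)) (Set.Icc (-ρ) ρ) u := by
    intro u _
    have h1 : HasDerivAt (fun u : ℝ => ϕ + u * s) s u := by
      simpa using ((hasDerivAt_id u).mul_const s).const_add ϕ
    have h2 := (hasDerivAt_id u).add h1.cos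
    refine (h2.congr_deriv ?_).hasDerivWithinAt
    ring
  have hbd : ∀ u ∈ Set.Icc (-ρ) ρ, ‖1 - s * Real.sin (ϕ + u * s)‖ ≤ Real.cos ϕ + ρ := by
    intro u hu
    have hu' : |u| ≤ ρ := abs_le.2 hu
    have e : 1 - s * Real.sin (ϕ + u * s) = Real.cos ϕ ^ 2 + s * (Real.sin ϕ - Real.sin (ϕ + u * s)) := by
      have := Real.sin_sq_add_cos_sq ϕ
      rw [← hs] at this ⊢
      nlinarith
    have hs1 : |s| ≤ 1 := Real.abs_sin_le_one ϕ
    have h3 : |Real.sin ϕ - Real.sin (ϕ + u * s)| ≤ |u| := by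
      have h := Real.abs_sin_sub_sin_le ϕ (ϕ + u * s)
      refine h.trans ?_
      rw [show ϕ - (ϕ + u * s) = -(u * s) by ring, abs_neg, abs_mul]
      exact mul_le_of_le_one_right (abs_nonneg _) hs1
    rw [e, Real.norm_eq_abs]
    refine (abs_add_le _ _).trans (add_le_add ?_ ?_)
    · rw [abs_of_nonneg (by positivity)]
      have := Real.cos_le_one ϕ
      nlinarith
    · rw [abs_mul]
      refine (mul_le_of_le_one_left (abs_nonneg _) hs1).trans (h3.trans hu')
  have := (convex_Icc (-ρ) ρ).norm_image_sub_le_of_norm_hasDerivWithin_le hd hbd (abs_le.1 hb) (abs_le.1 ha)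
  rw [Real.norm_eq_abs, Real.norm_eq_abs] at this
  rw [mul_comm |a - b|]
  refine le_trans (le_of_eq ?_) this
  congr 1
  ring

lemma fixed_points {X E : Type*} [TopologicalSpace X] [NormedAddCommGroup E] [CompleteSpace E] (K : Set X) (S : Set E) (hS : IsClosed S)
    (hne : S.Nonempty) (Φ : X → E → E) (hmap : ∀ x ∈ K, ∀ c ∈ S, Φ x c ∈ S)
    (hlip : ∀ x ∈ K, ∀ c ∈ S, ∀ d ∈ S, ‖Φ x c - Φ x d‖ ≤ (1/2) * ‖c - d‖)
    (hcont : ∀ c ∈ S, ContinuousOn (fun x => Φ x c) K) :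
    ∃ c : X → E, (∀ x ∈ K, c x ∈ S ∧ Φ x (c x) = c x) ∧ ContinuousOn c K ∧
      ∀ x ∈ K, ∀ d ∈ S, Φ x d = d → d = c x := by
  have hex : ∀ x, ∃ c, x ∈ K → c ∈ S ∧ Φ x c = c := by
    intro x
    by_cases hx : x ∈ K
    · have hmt : Set.MapsTo (Φ x) S S := fun c hc => hmap x hx c hc
      have hcw : ContractingWith (1/2) (hmt.restrict (Φ x) S S) := by
        refine ⟨by norm_num, LipschitzWith.of_dist_le_mul ?_⟩
        rintro ⟨c, hc⟩ ⟨d, hd⟩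
        rw [Subtype.dist_eq, Subtype.dist_eq, dist_eq_norm, dist_eq_norm]
        simpa using hlip x hx c hc d hd
      obtain ⟨c0, hc0⟩ := hne
      obtain ⟨y, hy, hfy, -⟩ := hcw.exists_fixedPoint' hS.isComplete hmt hc0 (edist_ne_top _ _)
      exact ⟨y, fun _ => ⟨hy, hfy⟩⟩
    · exact ⟨0, fun h => absurd h hx⟩
  choose c hc using hex
  refine ⟨c, hc, ?_, ?_⟩
  · intro x0 hx0
    have h1 := (hcont (c x0) (hc x0 hx0).1) x0 hx0
    rw [ContinuousWithinAt, tendsto_iff_norm_sub_tendsto_zero] at h1 ⊢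
    have h2 := h1.const_mul 2
    rw [mul_zero] at h2
    refine squeeze_zero' (Filter.Eventually.of_forall fun _ => norm_nonneg _) ?_ h2
    filter_upwards [self_mem_nhdsWithin] with x hx
    have l1 := hlip x hx (c x) (hc x hx).1 (c x0) (hc x0 hx0).1
    rw [(hc x hx).2] at l1
    rw [(hc x0 hx0).2]
    have := norm_sub_le_norm_sub_add_norm_sub (c x) (Φ x (c x0)) (c x0)
    linarith
  · intro x hx d hd hfd
    have l1 := hlip x hx d hd (c x) (hc x hx).1
    rw [(hc x hx).2, hfd] at l1
    have := norm_nonneg (d - c x)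
    exact sub_eq_zero.1 (norm_eq_zero.1 (by linarith))

def psi {n : ℕ} (m : ℕ) (W : Fin n → ℝ → ℝ) (x : Fin (n+1) → ℝ) (c : Fin n → ℝ) (t : ℝ) : ℝ :=
  Real.arctan (m * (pp x).eval t) + (∑ k, c k * W k t) * Real.sin (Real.arctan (m * (pp x).eval t))

lemma psi_neg {n : ℕ} (m : ℕ) (W : Fin n → ℝ → ℝ) (x : Fin (n+1) → ℝ) (c : Fin n → ℝ) (t : ℝ) :
    psi m W (-x) c t = - psi m W x c t := by
  simp only [psi, pp_neg, mul_neg, Real.arctan_neg, Real.sin_neg]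
  ring

lemma psi_smooth {n : ℕ} (m : ℕ) (W : Fin n → ℝ → ℝ) (hW : ∀ k, ContDiff ℝ (⊤ : ℕ∞) (W k))
    (x : Fin (n+1) → ℝ) (c : Fin n → ℝ) : ContDiff ℝ (⊤ : ℕ∞) (psi m W x c) := by
  have h1 : ContDiff ℝ (⊤ : ℕ∞) (fun t => Real.arctan (m * (pp x).eval t)) := by
    refine ContDiff.arctan ?_
    simp only [pp_eval]
    fun_prop
  unfold psi
  refine h1.add (ContDiff.mul ?_ h1.sin)
  exact ContDiff.sum fun k _ => contDiff_const.mul (hW k)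

lemma psi_cont {n : ℕ} (m : ℕ) (W : Fin n → ℝ → ℝ) (t : ℝ) :
    Continuous (fun z : (Fin (n+1) → ℝ) × (Fin n → ℝ) => psi m W z.1 z.2 t) := by
  have h1 : Continuous (fun z : (Fin (n+1) → ℝ) × (Fin n → ℝ) => Real.arctan (m * (pp z.1).eval t)) := by
    refine Real.continuous_arctan.comp ?_
    simp only [pp_eval]
    fun_prop
  unfold psi
  refine h1.add (Continuous.mul (by fun_prop) (Real.continuous_sin.comp h1))

lemma int_trig_cont {n : ℕ} (m : ℕ) (W : Fin n → ℝ → ℝ) (hW : ∀ k, ContDiff ℝ (⊤ : ℕ∞) (W k))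
    (f : ℝ → ℝ) (hf : IntegrableOn f II) (T : ℝ → ℝ) (hT : Continuous T) (hT1 : ∀ u, |T u| ≤ 1)
    (K : Set (Fin (n+1) → ℝ)) (c : (Fin (n+1) → ℝ) → (Fin n → ℝ)) (hc : ContinuousOn c K) :
    ContinuousOn (fun x => ∫ t in II, f t * T (psi m W x (c x) t)) K := by
  refine continuousOn_of_dominated (bound := fun t => ‖f t‖) ?_ ?_ hf.norm ?_
  · intro x _
    refine hf.aestronglyMeasurable.mul (Continuous.aestronglyMeasurable ?_)
    exact hT.comp (psi_smooth m W hW x (c x)).continuous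
  · intro x _
    refine Filter.Eventually.of_forall fun t => ?_
    rw [norm_mul]
    exact mul_le_of_le_one_right (norm_nonneg _) (hT1 _)
  · refine Filter.Eventually.of_forall fun t => ?_
    have hp : ContinuousOn (fun x => ((x, c x) : (Fin (n+1) → ℝ) × (Fin n → ℝ))) K :=
      continuousOn_id.prodMk hc
    have hp1 := Continuous.comp_continuousOn (psi_cont (n := n) m W t) hp
    have hp2 : ContinuousOn (fun x => psi m W x (c x) t) K := by
      simpa only [Function.comp_def] using hp1
    have hp3 : ContinuousOn (fun x => T (psi m W x (c x) t)) K := hT.comp_continuousOn hp2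
    exact continuousOn_const.mul hp3

lemma core {n : ℕ} (f : Fin n → ℝ → ℝ) (hf : ∀ j, IntegrableOn (f j) II)
    (V : Submodule ℝ (Fin n → ℝ)) (W : Fin n → ℝ → ℝ) (hW : ∀ k, ContDiff ℝ (⊤ : ℕ∞) (W k))
    (hV1 : ∀ φ : ℝ → ℝ, ContDiff ℝ (⊤ : ℕ∞) φ → (fun j => ∫ t in II, f j t * φ t) ∈ V)
    (hV2 : ∀ c ∈ V, ∀ j, ∫ t in II, f j t * (∑ k, c k * W k t) = c j)
    (B r δ : ℝ) (hB0 : 0 < B) (hr : 0 < r)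
    (hB : ∀ c : Fin n → ℝ, ∀ t ∈ II, |∑ k, c k * W k t| ≤ B * ‖c‖)
    (G : ℝ → ℝ) (hG : IntegrableOn G II) (hfG : ∀ j t, |f j t| ≤ G t) (hG0 : ∀ t, 0 ≤ G t)
    (m : ℕ) (hE : ∀ x : Fin (n+1) → ℝ, ∑ i, |x i| = 1 →
      ∫ t in II, G t * Real.cos (Real.arctan (m * (pp x).eval t)) ≤ δ)
    (h1 : δ ≤ r / 2) (h2 : B * (δ + B * r * ∫ t in II, G t) ≤ 1 / 2) :
    ∃ x : Fin (n+1) → ℝ, ∃ c : Fin n → ℝ, ‖c‖ ≤ r ∧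
      ∀ j, ∫ t in II, f j t * Real.cos (psi m W x c t) = 0 ∧
        ∫ t in II, f j t * Real.sin (psi m W x c t) = 0 := by
  set K : Set (Fin (n+1) → ℝ) := {x | ∑ i, |x i| = 1} with hK
  have hKm : ∀ x, x ∈ K ↔ ∑ i, |x i| = 1 := fun x => Iff.rfl
  set S : Set (Fin n → ℝ) := (V : Set (Fin n → ℝ)) ∩ Metric.closedBall 0 r with hS
  have hSc : IsClosed S := (V.closed_of_finiteDimensional).inter Metric.isClosed_closedBall
  have hSm : ∀ c, c ∈ S ↔ c ∈ V ∧ ‖c‖ ≤ r := by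
    intro c
    simp [hS]
  have h0S : (0 : Fin n → ℝ) ∈ S := (hSm 0).2 ⟨V.zero_mem, by simpa using hr.le⟩
  set A : (Fin (n+1) → ℝ) → (Fin n → ℝ) → (Fin n → ℝ) := fun x c j =>
    ∫ t in II, f j t * Real.cos (psi m W x c t) with hA
  have hAV : ∀ x c, A x c ∈ V := fun x c => hV1 _ (psi_smooth m W hW x c).cos
  have hcosI : ∀ j x c, IntegrableOn (fun t => f j t * Real.cos (psi m W x c t)) II := fun j x c =>
    int_mul (hf j) (psi_smooth m W hW x c).cos.continuous
  have hwc : ∀ c : Fin n → ℝ, Continuous (fun t => ∑ k, c k * W k t) := fun c =>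
    continuous_finsetSum _ fun k _ => continuous_const.mul (hW k).continuous
  have hwI : ∀ j (c : Fin n → ℝ), IntegrableOn (fun t => f j t * (∑ k, c k * W k t)) II := fun j c =>
    int_mul (hf j) (hwc c)
  have hGcI : ∀ x : Fin (n+1) → ℝ, IntegrableOn (fun t => G t * Real.cos (Real.arctan (m * (pp x).eval t))) II := fun x =>
    int_mul hG (Real.continuous_cos.comp (Real.continuous_arctan.comp (by fun_prop)))
  set Φ : (Fin (n+1) → ℝ) → (Fin n → ℝ) → (Fin n → ℝ) := fun x c => c + A x c with hΦ
  have hlip : ∀ x ∈ K, ∀ c ∈ S, ∀ d ∈ S, ‖Φ x c - Φ x d‖ ≤ (1/2) * ‖c - d‖ := by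
    intro x hx c hc d hd
    obtain ⟨hcV, hcr⟩ := (hSm c).1 hc
    obtain ⟨hdV, hdr⟩ := (hSm d).1 hd
    rw [pi_norm_le_iff_of_nonneg (by positivity)]
    intro j
    have e : (Φ x c - Φ x d) j = ∫ t in II, f j t *
        ((∑ k, c k * W k t - ∑ k, d k * W k t) + (Real.cos (psi m W x c t) - Real.cos (psi m W x d t))) := by
      have : (fun t => f j t *
        ((∑ k, c k * W k t - ∑ k, d k * W k t) + (Real.cos (psi m W x c t) - Real.cos (psi m W x d t)))) =
        fun t => (f j t * (∑ k, c k * W k t) - f j t * (∑ k, d k * W k t)) +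
          (f j t * Real.cos (psi m W x c t) - f j t * Real.cos (psi m W x d t)) := by
        ext t; ring
      have i1 : IntegrableOn (fun t => f j t * (∑ k, c k * W k t) - f j t * (∑ k, d k * W k t)) II :=
        (hwI j c).sub (hwI j d)
      have i2 : IntegrableOn (fun t => f j t * Real.cos (psi m W x c t) - f j t * Real.cos (psi m W x d t)) II :=
        (hcosI j x c).sub (hcosI j x d)
      rw [this, integral_add i1 i2,
        integral_sub (hwI j c) (hwI j d), integral_sub (hcosI j x c) (hcosI j x d), hV2 c hcV, hV2 d hdV]
      simp only [hΦ, hA, Pi.sub_apply, Pi.add_apply]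
      ring
    rw [e]
    have hbI : IntegrableOn (fun t => B * ‖c - d‖ * (G t * Real.cos (Real.arctan (m * (pp x).eval t)) + B * r * G t)) II :=
      ((hGcI x).add (hG.const_mul _)).const_mul _
    have : ‖∫ t in II, f j t *
        ((∑ k, c k * W k t - ∑ k, d k * W k t) + (Real.cos (psi m W x c t) - Real.cos (psi m W x d t)))‖ ≤
        ∫ t in II, B * ‖c - d‖ * (G t * Real.cos (Real.arctan (m * (pp x).eval t)) + B * r * G t) := by
      refine norm_integral_le_of_norm_le hbI ?_
      filter_upwards [ae_restrict_mem measurableSet_Icc] with t ht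
      rw [norm_mul, Real.norm_eq_abs, Real.norm_eq_abs]
      have hcp := (Real.cos_arctan_pos (m * (pp x).eval t)).le
      have p1 := ptwise (Real.arctan (m * (pp x).eval t)) (B * r) (∑ k, c k * W k t) (∑ k, d k * W k t)
        hcp
        ((hB c t ht).trans (mul_le_mul_of_nonneg_left hcr hB0.le))
        ((hB d t ht).trans (mul_le_mul_of_nonneg_left hdr hB0.le))
      have p2 : |∑ k, c k * W k t - ∑ k, d k * W k t| ≤ B * ‖c - d‖ := by
        have := hB (c - d) t ht
        simpa [sub_mul, Finset.sum_sub_distrib] using this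
      have p3 : |(∑ k, c k * W k t - ∑ k, d k * W k t) + (Real.cos (psi m W x c t) - Real.cos (psi m W x d t))|
          ≤ B * ‖c - d‖ * (Real.cos (Real.arctan (m * (pp x).eval t)) + B * r) :=
        p1.trans (mul_le_mul_of_nonneg_right p2 (by positivity))
      calc _ ≤ G t * (B * ‖c - d‖ * (Real.cos (Real.arctan (m * (pp x).eval t)) + B * r)) :=
            mul_le_mul (hfG j t) p3 (abs_nonneg _) (hG0 t)
        _ = _ := by ring
    refine this.trans ?_
    rw [integral_const_mul, integral_add (hGcI x) (hG.const_mul _), integral_const_mul]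
    have hEx := hE x hx
    calc _ ≤ B * ‖c - d‖ * (δ + B * r * ∫ t in II, G t) := by gcongr
      _ = (B * (δ + B * r * ∫ t in II, G t)) * ‖c - d‖ := by ring
      _ ≤ _ := by gcongr
  have hΦ0 : ∀ x ∈ K, ‖Φ x 0‖ ≤ r / 2 := by
    intro x hx
    rw [pi_norm_le_iff_of_nonneg (by positivity)]
    intro j
    have e : Φ x 0 j = ∫ t in II, f j t * Real.cos (Real.arctan (m * (pp x).eval t)) := by
      simp [hΦ, hA, psi]
    rw [e]
    refine (norm_integral_le_of_norm_le (hGcI x) ?_).trans ((hE x hx).trans h1)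
    refine Filter.Eventually.of_forall fun t => ?_
    have hcp := (Real.cos_arctan_pos (m * (pp x).eval t)).le
    rw [norm_mul, Real.norm_eq_abs, Real.norm_eq_abs, abs_of_nonneg hcp]
    exact mul_le_mul_of_nonneg_right (hfG j t) hcp
  have hmap : ∀ x ∈ K, ∀ c ∈ S, Φ x c ∈ S := by
    intro x hx c hc
    obtain ⟨hcV, hcr⟩ := (hSm c).1 hc
    refine (hSm _).2 ⟨V.add_mem hcV (hAV x c), ?_⟩
    have l := hlip x hx c hc 0 h0S
    rw [sub_zero] at l
    have := norm_le_norm_sub_add (Φ x c) (Φ x 0)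
    linarith [hΦ0 x hx]
  have hcont : ∀ c ∈ S, ContinuousOn (fun x => Φ x c) K := by
    intro c _
    refine continuousOn_const.add (continuousOn_pi.2 fun j => ?_)
    exact int_trig_cont m W hW (f j) (hf j) Real.cos Real.continuous_cos Real.abs_cos_le_one K (fun _ => c)
      continuousOn_const
  obtain ⟨c, hc, hcc, hcu⟩ := fixed_points K S hSc ⟨0, h0S⟩ Φ hmap hlip hcont
  have hneg : ∀ x ∈ K, -x ∈ K := by
    intro x hx
    rw [hKm] at hx ⊢
    simpa using hx
  have hceven : ∀ x ∈ K, c (-x) = c x := by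
    intro x hx
    refine (hcu _ (hneg x hx) (c x) (hc x hx).1 ?_).symm
    have := (hc x hx).2
    simp only [hΦ, hA, psi_neg, Real.cos_neg] at this ⊢
    exact this
  obtain ⟨x, hx, hFx⟩ := borsuk_ulam n (fun x j => ∫ t in II, f j t * Real.sin (psi m W x (c x) t))
    (continuousOn_pi.2 fun j => int_trig_cont m W hW (f j) (hf j) Real.sin Real.continuous_sin
      Real.abs_sin_le_one K c hcc)
    (by
      intro x hx
      ext j
      simp only [hceven x hx, psi_neg, Real.sin_neg, mul_neg, integral_neg, Pi.neg_apply])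
  refine ⟨x, c x, ((hSm _).1 (hc x hx).1).2, fun j => ⟨?_, congrFun hFx j⟩⟩
  have := congrFun (hc x hx).2 j
  simp only [hΦ, Pi.add_apply] at this
  exact add_eq_left.1 this

lemma psi_deriv {n : ℕ} (m : ℕ) (W : Fin n → ℝ → ℝ) (hW : ∀ k, ContDiff ℝ (⊤ : ℕ∞) (W k))
    (x : Fin (n+1) → ℝ) (c : Fin n → ℝ) (t : ℝ) :
    HasDerivAt (psi m W x c)
      (((Polynomial.C (m:ℝ) * pp x).derivative.eval t / (1 + ((Polynomial.C (m:ℝ) * pp x).eval t)^2)) +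
       ((∑ k, c k * deriv (W k) t) * Real.sin (Real.arctan (m * (pp x).eval t)) +
        (∑ k, c k * W k t) * (Real.cos (Real.arctan (m * (pp x).eval t)) *
        ((Polynomial.C (m:ℝ) * pp x).derivative.eval t / (1 + ((Polynomial.C (m:ℝ) * pp x).eval t)^2))))) t := by
  have h1 : HasDerivAt (fun t => Real.arctan (m * (pp x).eval t))
      ((Polynomial.C (m:ℝ) * pp x).derivative.eval t / (1 + ((Polynomial.C (m:ℝ) * pp x).eval t)^2)) t := by
    have := ((Polynomial.C (m:ℝ) * pp x).hasDerivAt t).arctan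
    simp only [Polynomial.eval_mul, Polynomial.eval_C] at this ⊢
    exact this.congr_deriv (by ring)
  have h2 : HasDerivAt (fun t => ∑ k, c k * W k t) (∑ k, c k * deriv (W k) t) t := by
    refine HasDerivAt.fun_sum fun k _ => ?_
    exact (((hW k).differentiable (by simp)) t).hasDerivAt.const_mul _
  exact h1.add (h2.mul h1.sin)

lemma psi_tv {n : ℕ} (m : ℕ) (W : Fin n → ℝ → ℝ) (hW : ∀ k, ContDiff ℝ (⊤ : ℕ∞) (W k))
    (x : Fin (n+1) → ℝ) (c : Fin n → ℝ) (B r : ℝ) (hB0 : 0 < B) (hcr : ‖c‖ ≤ r)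
    (hB : ∀ c : Fin n → ℝ, ∀ t ∈ II, |∑ k, c k * W k t| ≤ B * ‖c‖ ∧
      |∑ k, c k * deriv (W k) t| ≤ B * ‖c‖) :
    ∫ t in (0:ℝ)..1, |deriv (psi m W x c) t| ≤ n * Real.pi * (1 + B * r) + B * r := by
  set q := Polynomial.C (m:ℝ) * pp x with hq
  have hdeg : q.natDegree ≤ n := (Polynomial.natDegree_C_mul_le _ _).trans (pp_deg x)
  have htv := tv_poly n q hdeg
  have hcq : Continuous fun t => |q.derivative.eval t / (1 + (q.eval t)^2)| := by
    refine Continuous.abs (Continuous.div (by fun_prop) (by fun_prop) (fun t => by positivity))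
  have hr0 : 0 ≤ r := (norm_nonneg c).trans hcr
  have hcd : Continuous fun t => |deriv (psi m W x c) t| :=
    ((psi_smooth m W hW x c).continuous_deriv (by simp)).abs
  have hcb : Continuous fun t => (1 + B * r) * |q.derivative.eval t / (1 + (q.eval t)^2)| + B * r := by
    fun_prop
  have hm := intervalIntegral.integral_mono_on (a := 0) (b := 1) (μ := volume) zero_le_one
    (hcd.intervalIntegrable _ _) (hcb.intervalIntegrable _ _) (fun t ht => by
      rw [(psi_deriv m W hW x c t).deriv]
      obtain ⟨b1, b2⟩ := hB c t ht
      have b3 : B * ‖c‖ ≤ B * r := mul_le_mul_of_nonneg_left hcr hB0.le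
      have s1 := Real.abs_sin_le_one (Real.arctan (m * (pp x).eval t))
      have s2 := Real.abs_cos_le_one (Real.arctan (m * (pp x).eval t))
      rw [← hq]
      set D := q.derivative.eval t / (1 + (q.eval t)^2)
      have a1 : |(∑ k, c k * deriv (W k) t) * Real.sin (Real.arctan (m * (pp x).eval t))| ≤ B * r := by
        rw [abs_mul]
        exact (mul_le_of_le_one_right (abs_nonneg _) s1).trans (b2.trans b3)
      have a2 : |(∑ k, c k * W k t) * (Real.cos (Real.arctan (m * (pp x).eval t)) * D)| ≤ B * r * |D| := by
        rw [abs_mul, abs_mul]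
        exact mul_le_mul (b1.trans b3) (mul_le_of_le_one_left (abs_nonneg _) s2) (by positivity) (by positivity)
      have a3 := abs_add_le D ((∑ k, c k * deriv (W k) t) * Real.sin (Real.arctan (m * (pp x).eval t)) +
        (∑ k, c k * W k t) * (Real.cos (Real.arctan (m * (pp x).eval t)) * D))
      have a4 := abs_add_le ((∑ k, c k * deriv (W k) t) * Real.sin (Real.arctan (m * (pp x).eval t)))
        ((∑ k, c k * W k t) * (Real.cos (Real.arctan (m * (pp x).eval t)) * D))
      linarith)
  refine hm.trans ?_
  rw [intervalIntegral.integral_add ((hcq.const_mul _).intervalIntegrable _ _) (continuous_const.intervalIntegrable _ _),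
    intervalIntegral.integral_const_mul, intervalIntegral.integral_const]
  simp only [sub_zero, one_smul]
  have : 0 ≤ 1 + B * r := by positivity
  nlinarith

lemma main_phase {n : ℕ} (f : Fin n → ℝ → ℝ) (hf : ∀ j, IntegrableOn (f j) II) (ε : ℝ) (hε : 0 < ε) :
    ∃ ψ : ℝ → ℝ, ContDiff ℝ (⊤ : ℕ∞) ψ ∧ ∫ t in (0:ℝ)..1, |deriv ψ t| < n * Real.pi + ε ∧
      ∀ j, ∫ t in II, f j t * Real.cos (ψ t) = 0 ∧ ∫ t in II, f j t * Real.sin (ψ t) = 0 := by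
  obtain ⟨V, W, hW, hV1, hV2⟩ := section_lemma f hf
  obtain ⟨B, hB0, hB⟩ := W_bound W hW
  set G : ℝ → ℝ := fun t => ∑ j, |f j t| with hGdef
  have hG : IntegrableOn G II := integrable_finsetSum _ fun j _ => (hf j).abs
  have hG0 : ∀ t, 0 ≤ G t := fun t => Finset.sum_nonneg fun j _ => abs_nonneg _
  have hfG : ∀ j t, |f j t| ≤ G t := fun j t =>
    Finset.single_le_sum (f := fun j => |f j t|) (fun i _ => abs_nonneg _) (Finset.mem_univ j)
  set M := ∫ t in II, G t with hM
  have hM0 : 0 ≤ M := integral_nonneg hG0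
  have hpi := Real.pi_pos
  set r := min (1 / (4 * B^2 * (M+1))) (ε / (2 * B * (1 + n * Real.pi))) with hr
  have hr0 : 0 < r := by positivity
  have hr1 : r * (4 * B^2 * (M+1)) ≤ 1 := by
    rw [← le_div_iff₀ (by positivity)]
    exact min_le_left _ _
  have hr2 : r * (2 * B * (1 + n * Real.pi)) ≤ ε := by
    rw [← le_div_iff₀ (by positivity)]
    exact min_le_right _ _
  set δ := min (1 / (4 * B)) (r / 2) with hδ
  have hδ0 : 0 < δ := by positivity
  have hδ1 : δ * (4 * B) ≤ 1 := by
    rw [← le_div_iff₀ (by positivity)]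
    exact min_le_left _ _
  obtain ⟨m, hm⟩ := unif_small (n := n) G hG hG0 δ hδ0
  obtain ⟨x, c, hcr, hz⟩ := core f hf V W hW hV1 hV2 B r δ hB0 hr0 (fun c t ht => (hB c t ht).1) G hG hfG hG0 m hm
    (min_le_right _ _) (by
      rw [← hM]
      have : 0 ≤ r * B^2 := by positivity
      nlinarith)
  refine ⟨psi m W x c, psi_smooth m W hW x c, ?_, hz⟩
  refine (psi_tv m W hW x c B r hB0 hcr hB).trans_lt ?_
  have : 0 < r * B * (1 + n * Real.pi) := by positivity
  nlinarith

end

end LL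

theorem lazarev_lieb_real_improved (n : ℕ) (hn : 1 ≤ n) (f : Fin n → ℝ → ℝ)
    (hf : ∀ j, IntegrableOn (f j) (Set.Icc 0 1)) (ε : ℝ) (hε : 0 < ε) :
    ∃ h : ℝ → ℂ, ContDiffOn ℝ (⊤ : ℕ∞) h (Set.Icc 0 1) ∧ (∀ x ∈ Set.Icc (0:ℝ) 1, ‖h x‖ = 1) ∧
      (∫ x in (0:ℝ)..1, ‖h x‖) + (∫ x in (0:ℝ)..1, ‖derivWithin h (Set.Icc 0 1) x‖)
        < 1 + Real.pi * (2 * n - 1) + ε ∧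
      ∀ j : Fin n, ∫ x in (0:ℝ)..1, (f j x : ℂ) * h x = 0 := by
  obtain ⟨ψ, hψ, htv, hz⟩ := LL.main_phase f hf ε hε
  have hn1 : ∀ x, ‖Complex.exp ((ψ x : ℂ) * Complex.I)‖ = 1 := fun x => Complex.norm_exp_ofReal_mul_I _
  refine ⟨fun x => Complex.exp ((ψ x : ℂ) * Complex.I), ?_, fun x _ => hn1 x, ?_, ?_⟩
  · refine ContDiff.contDiffOn ?_
    refine ContDiff.cexp (ContDiff.mul ?_ contDiff_const)
    exact Complex.ofRealCLM.contDiff.comp hψ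
  · have hd : ∀ x, HasDerivAt (fun x => Complex.exp ((ψ x : ℂ) * Complex.I))
        (Complex.exp ((ψ x : ℂ) * Complex.I) * (((deriv ψ x : ℝ) : ℂ) * Complex.I)) x := by
      intro x
      have h1 : HasDerivAt ψ (deriv ψ x) x := ((hψ.differentiable (by simp)) x).hasDerivAt
      exact (h1.ofReal_comp.mul_const Complex.I).cexp
    have e : ∫ x in (0:ℝ)..1, ‖derivWithin (fun x => Complex.exp ((ψ x : ℂ) * Complex.I)) (Set.Icc 0 1) x‖ =
        ∫ x in (0:ℝ)..1, |deriv ψ x| := by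
      refine intervalIntegral.integral_congr fun x hx => ?_
      rw [Set.uIcc_of_le zero_le_one] at hx
      have := (hd x).hasDerivWithinAt.derivWithin (uniqueDiffOn_Icc zero_lt_one x hx)
      simp only [this, norm_mul, hn1, Complex.norm_I, mul_one, one_mul, Complex.norm_real, Real.norm_eq_abs]
    rw [e]
    simp only [hn1, intervalIntegral.integral_const, sub_zero, one_smul]
    have hn' : (1:ℝ) ≤ n := by exact_mod_cast hn
    have := Real.pi_pos
    nlinarith
  · intro j
    obtain ⟨z1, z2⟩ := hz j
    have i1 : IntegrableOn (fun t => f j t * Real.cos (ψ t)) (Set.Icc 0 1) :=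
      LL.int_mul (hf j) hψ.cos.continuous
    have i2 : IntegrableOn (fun t => f j t * Real.sin (ψ t)) (Set.Icc 0 1) :=
      LL.int_mul (hf j) hψ.sin.continuous
    rw [intervalIntegral.integral_of_le zero_le_one, ← integral_Icc_eq_integral_Ioc]
    have e : ∀ t, (f j t : ℂ) * Complex.exp ((ψ t : ℂ) * Complex.I) =
        ((f j t * Real.cos (ψ t) : ℝ) : ℂ) + ((f j t * Real.sin (ψ t) : ℝ) : ℂ) * Complex.I := by
      intro t
      rw [Complex.exp_mul_I]
      push_cast
      ring
    simp only [e]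
    rw [integral_add i1.ofReal (i2.ofReal.mul_const _), integral_mul_const, integral_complex_ofReal,
      integral_complex_ofReal, z1, z2]
    simp
end

section
/- There exist f_1, ..., f_n ∈ L^1([0,1]; ℝ) such that for every h ∈ C^1([0,1]; S^1) satisfying ∫_0^1 f_j(x) h(x) dx = 0 for all j = 1, ..., n, one has ‖h‖_{W^{1,1}} > πn + 1. (One may take the f_j to be indicator functions of disjoint subintervals of [0,1].) -/
open MeasureTheory

lemma aux_lift (h : ℝ → ℂ) (hc : ContDiffOn ℝ 1 h (Set.Icc 0 1))
    (h1 : ∀ x ∈ Set.Icc (0:ℝ) 1, ‖h x‖ = 1) :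
    ∃ k θ : ℝ → ℝ, Continuous k ∧ (∀ x, HasDerivAt θ (k x) x) ∧
      (∀ x ∈ Set.Icc (0:ℝ) 1, |k x| ≤ ‖derivWithin h (Set.Icc 0 1) x‖) ∧
      (∀ x ∈ Set.Icc (0:ℝ) 1, h x = h 0 * Complex.exp ((θ x : ℂ) * Complex.I)) := by
  have hu : UniqueDiffOn ℝ (Set.Icc (0:ℝ) 1) := uniqueDiffOn_Icc zero_lt_one
  have hdc : ContinuousOn (derivWithin h (Set.Icc 0 1)) (Set.Icc 0 1) :=
    hc.continuousOn_derivWithin hu le_rfl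
  have hd : ∀ x ∈ Set.Icc (0:ℝ) 1,
      HasDerivWithinAt h (derivWithin h (Set.Icc 0 1) x) (Set.Icc 0 1) x := fun x hx =>
    ((hc.differentiableOn one_ne_zero) x hx).hasDerivWithinAt
  set d := derivWithin h (Set.Icc 0 1) with hdd
  let g : ℝ → ℝ := fun x => (starRingEnd ℂ (h x) * d x).im
  have hg : ContinuousOn g (Set.Icc 0 1) := by
    apply Complex.continuous_im.comp_continuousOn
    exact (Complex.continuous_conj.comp_continuousOn hc.continuousOn).mul hdc
  let k : ℝ → ℝ := Set.IccExtend zero_le_one ((Set.Icc (0:ℝ) 1).domRestrict g)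
  have hk : Continuous k := (continuousOn_iff_continuous_domRestrict.1 hg).Icc_extend'
  have hkg : ∀ x ∈ Set.Icc (0:ℝ) 1, k x = g x := fun x hx => by
    simp only [k]; rw [Set.IccExtend_of_mem _ _ hx]; rfl
  have hθ : ∀ x, HasDerivAt (fun y => ∫ t in (0:ℝ)..y, k t) (k x) x := fun x =>
    intervalIntegral.integral_hasDerivAt_right (hk.intervalIntegrable _ _)
      (hk.stronglyMeasurableAtFilter _ _) hk.continuousAt
  -- key identity
  have key : ∀ x ∈ Set.Icc (0:ℝ) 1, d x = g x * Complex.I * h x := by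
    intro x hx
    have hn : ∀ y ∈ Set.Icc (0:ℝ) 1, (h y).re * (h y).re + (h y).im * (h y).im = 1 := by
      intro y hy
      have := h1 y hy
      have h2 := Complex.normSq_eq_norm_sq (h y)
      rw [this, Complex.normSq_apply] at h2
      linarith
    have hre : HasDerivWithinAt (fun y => (h y).re) (d x).re (Set.Icc 0 1) x :=
      (Complex.reCLM.hasFDerivAt.comp_hasDerivWithinAt x (hd x hx))
    have him : HasDerivWithinAt (fun y => (h y).im) (d x).im (Set.Icc 0 1) x :=
      (Complex.imCLM.hasFDerivAt.comp_hasDerivWithinAt x (hd x hx))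
    have hs := (hre.mul hre).add (him.mul him)
    have hs' : HasDerivWithinAt (fun _ : ℝ => (1:ℝ)) _ (Set.Icc 0 1) x :=
      hs.congr (fun y hy => (hn y hy).symm) (hn x hx).symm
    have h0 := (hu x hx).eq_deriv _ hs' (hasDerivWithinAt_const x _ (1:ℝ))
    have hnx := hn x hx
    apply Complex.ext
    · simp [g]
      linear_combination (-(d x).re) * hnx + (h x).re / 2 * h0
    · simp [g]
      linear_combination (-(d x).im) * hnx + (h x).im / 2 * h0
  refine ⟨k, fun y => ∫ t in (0:ℝ)..y, k t, hk, hθ, ?_, ?_⟩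
  · intro x hx
    rw [hkg x hx]
    refine (Complex.abs_im_le_norm _).trans ?_
    simp [h1 x hx]
  · intro x hx
    set θ : ℝ → ℝ := fun y => ∫ t in (0:ℝ)..y, k t with hθd
    have hφ : ∀ y ∈ Set.Icc (0:ℝ) 1, HasDerivWithinAt
        (fun y => h y * Complex.exp (-((θ y : ℂ) * Complex.I))) 0 (Set.Icc 0 1) y := by
      intro y hy
      have e1 : HasDerivAt (fun y => Complex.exp (-((θ y : ℂ) * Complex.I))) _ y :=
        (((hθ y).ofReal_comp).mul_const Complex.I).neg.cexp
      have := (hd y hy).mul e1.hasDerivWithinAt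
      refine this.congr_deriv ?_
      rw [key y hy, hkg y hy]
      simp only [Pi.neg_apply]
      ring
    have := (convex_Icc (0:ℝ) 1).norm_image_sub_le_of_norm_hasDerivWithin_le (C := 0) hφ
      (by simp) (Set.left_mem_Icc.2 zero_le_one) hx
    simp only [zero_mul, norm_le_zero_iff, sub_eq_zero] at this
    have h00 : θ 0 = 0 := by simp [hθd]
    rw [h00] at this
    simp only [Complex.ofReal_zero, zero_mul, neg_zero, Complex.exp_zero, mul_one] at this
    rw [← this, mul_assoc, ← Complex.exp_add]
    simp

lemma aux_interval (h : ℝ → ℂ) (hc : ContDiffOn ℝ 1 h (Set.Icc 0 1))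
    (h1 : ∀ x ∈ Set.Icc (0:ℝ) 1, ‖h x‖ = 1) (a b : ℝ) (ha : 0 ≤ a) (hab : a < b) (hb : b ≤ 1)
    (h0 : ∫ x in a..b, h x = 0) :
    Real.pi < ∫ x in a..b, ‖derivWithin h (Set.Icc 0 1) x‖ := by
  obtain ⟨k, θ, hk, hθ, hkd, hh⟩ := aux_lift h hc h1
  have hsub : Set.Icc a b ⊆ Set.Icc (0:ℝ) 1 := Set.Icc_subset_Icc ha hb
  have hdc : ContinuousOn (derivWithin h (Set.Icc 0 1)) (Set.Icc 0 1) :=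
    hc.continuousOn_derivWithin (uniqueDiffOn_Icc zero_lt_one) le_rfl
  have hka : Continuous fun x => |k x| := hk.abs
  have hle : ∫ x in a..b, |k x| ≤ ∫ x in a..b, ‖derivWithin h (Set.Icc 0 1) x‖ := by
    apply intervalIntegral.integral_mono_on hab.le (hka.intervalIntegrable _ _)
    · apply ContinuousOn.intervalIntegrable
      rw [Set.uIcc_of_le hab.le]
      exact (hdc.mono hsub).norm
    · exact fun x hx => hkd x (hsub hx)
  refine lt_of_lt_of_le ?_ hle
  by_contra! hL
  set L := ∫ x in a..b, |k x| with hLd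
  let S : ℝ → ℝ := fun x => ∫ y in a..x, |k y|
  have hS : Continuous S := intervalIntegral.continuous_primitive
    (fun _ _ => hka.intervalIntegrable _ _) a
  have hS0 : S a = 0 := by simp [S]
  have hSb : S b = L := rfl
  have hSd : ∀ x y, S y - S x = ∫ z in x..y, |k z| := fun x y =>
    intervalIntegral.integral_interval_sub_left (hka.intervalIntegrable _ _)
      (hka.intervalIntegrable _ _)
  have hSm : ∀ x y, x ≤ y → S x ≤ S y := by
    intro x y hxy
    have : 0 ≤ S y - S x := by
      rw [hSd]; exact intervalIntegral.integral_nonneg hxy (fun _ _ => abs_nonneg _)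
    linarith
  have hL0 : 0 ≤ L := by rw [← hSb, ← hS0]; exact hSm _ _ hab.le
  obtain ⟨t, ht, hSt⟩ := intermediate_value_Icc hab.le hS.continuousOn
    (show L / 2 ∈ Set.Icc (S a) (S b) by rw [hS0, hSb]; constructor <;> linarith)
  have hbd : ∀ x ∈ Set.Icc a b, |θ x - θ t| ≤ Real.pi / 2 := by
    intro x hx
    have e : ∫ z in t..x, k z = θ x - θ t :=
      intervalIntegral.integral_eq_sub_of_hasDerivAt (fun z _ => hθ z)
        (hk.intervalIntegrable _ _)
    rw [← e]
    have h2 := intervalIntegral.norm_integral_le_abs_integral_norm (f := k) (a := t) (b := x)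
      (μ := volume)
    simp only [Real.norm_eq_abs] at h2
    rw [← hSd] at h2
    refine h2.trans ?_
    have h3 := hSm _ _ hx.1
    have h4 := hSm _ _ hx.2
    rw [abs_le]; constructor <;> linarith
  have hθc : Continuous θ := continuous_iff_continuousAt.2 fun x => (hθ x).continuousAt
  have hpos : 0 < ∫ x in a..b, Real.cos (θ x - θ t) := by
    apply intervalIntegral.integral_pos hab
    · fun_prop
    · intro x hx
      have := abs_le.1 (hbd x (Set.Ioc_subset_Icc_self hx))
      exact Real.cos_nonneg_of_mem_Icc ⟨by linarith, by linarith⟩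
    · exact ⟨t, ht, by simp⟩
  have hz : ∫ x in a..b, (starRingEnd ℂ (h t)) * h x = 0 := by
    rw [intervalIntegral.integral_const_mul, h0, mul_zero]
  have hcont : Continuous fun x => Complex.exp (((θ x - θ t : ℝ) : ℂ) * Complex.I) := by
    fun_prop
  have hz2 : ∫ x in a..b, Complex.exp (((θ x - θ t : ℝ) : ℂ) * Complex.I) = 0 := by
    rw [← hz]
    apply intervalIntegral.integral_congr
    intro x hx
    rw [Set.uIcc_of_le hab.le] at hx
    have hn := Complex.normSq_eq_norm_sq (h 0)
    rw [h1 0 (by simp)] at hn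
    have hn' := Complex.normSq_eq_conj_mul_self (z := h 0)
    rw [hn] at hn'
    simp only
    rw [hh x (hsub hx), hh t (hsub ht), map_mul, ← Complex.exp_conj, mul_mul_mul_comm, ← hn',
      ← Complex.exp_add]
    simp
    congr 1
    ring
  have hre := Complex.reCLM.intervalIntegral_comp_comm (hcont.intervalIntegrable (μ := volume) a b)
  rw [hz2] at hre
  simp only [Complex.reCLM_apply, Complex.exp_ofReal_mul_I_re, Complex.zero_re] at hre
  linarith

/-- **Lower bound.** There exist integrable real-valued functions `f 1, …, f n` on `[0,1]`
such that every `h ∈ C¹([0,1]; S¹)` with `∫₀¹ f j · h = 0` for all `j` satisfies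
`‖h‖_{W^{1,1}} > π n + 1`. -/
theorem lower_bound_exists (n : ℕ) (hn : 1 ≤ n) :
    ∃ f : Fin n → ℝ → ℝ, (∀ j, IntegrableOn (f j) (Set.Icc 0 1)) ∧
      ∀ h : ℝ → ℂ, ContDiffOn ℝ 1 h (Set.Icc 0 1) →
        (∀ x ∈ Set.Icc (0:ℝ) 1, ‖h x‖ = 1) →
        (∀ j : Fin n, ∫ x in (0:ℝ)..1, (f j x : ℂ) * h x = 0) →
        Real.pi * n + 1 <
          (∫ x in (0:ℝ)..1, ‖h x‖) +
            (∫ x in (0:ℝ)..1, ‖derivWithin h (Set.Icc 0 1) x‖) := by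
  have hn0 : (0:ℝ) < n := by exact_mod_cast hn
  let p : ℕ → ℝ := fun j => (j:ℝ) / n
  have hp0 : ∀ j, 0 ≤ p j := fun j => by positivity
  have hp1 : ∀ j, j ≤ n → p j ≤ 1 := fun j hj => by
    simp only [p]; rw [div_le_one hn0]; exact_mod_cast hj
  have hpl : ∀ j, p j < p (j+1) := fun j => by
    simp only [p]; gcongr; simp
  refine ⟨fun j => (Set.Ioc (p j) (p (j+1))).indicator (fun _ => 1), ?_, ?_⟩
  · intro j
    have : IntegrableOn (fun _ : ℝ => (1:ℝ)) (Set.Icc 0 1) := by simp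
    exact this.indicator measurableSet_Ioc
  · intro h hc h1 hz
    have e1 : ∫ x in (0:ℝ)..1, ‖h x‖ = 1 := by
      have : ∫ x in (0:ℝ)..1, ‖h x‖ = ∫ x in (0:ℝ)..1, (1:ℝ) := by
        apply intervalIntegral.integral_congr
        intro x hx
        rw [Set.uIcc_of_le zero_le_one] at hx
        exact h1 x hx
      rw [this]; simp
    have hj : ∀ j < n, Real.pi < ∫ x in (p j)..(p (j+1)), ‖derivWithin h (Set.Icc 0 1) x‖ := by
      intro j hj
      apply aux_interval h hc h1 _ _ (hp0 _) (hpl _) (hp1 _ hj)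
      have := hz ⟨j, hj⟩
      rw [← this, intervalIntegral.integral_of_le zero_le_one,
        intervalIntegral.integral_of_le (hpl j).le]
      have e : (fun x => (((Set.Ioc (p j) (p (j+1))).indicator (fun _ => (1:ℝ)) x : ℝ) : ℂ) * h x)
          = (Set.Ioc (p j) (p (j+1))).indicator h := by
        ext x
        by_cases hx : x ∈ Set.Ioc (p j) (p (j+1)) <;> simp [hx]
      simp only [e]
      rw [setIntegral_indicator measurableSet_Ioc,
        Set.inter_eq_self_of_subset_right (Set.Ioc_subset_Ioc (hp0 _) (hp1 _ hj))]
    have hdc : ContinuousOn (derivWithin h (Set.Icc 0 1)) (Set.Icc 0 1) :=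
      hc.continuousOn_derivWithin (uniqueDiffOn_Icc zero_lt_one) le_rfl
    have hsum := intervalIntegral.sum_integral_adjacent_intervals (μ := volume)
      (f := fun x => ‖derivWithin h (Set.Icc 0 1) x‖) (a := p) (n := n) (by
        intro j hj
        apply ContinuousOn.intervalIntegrable
        rw [Set.uIcc_of_le (hpl j).le]
        exact (hdc.mono (Set.Icc_subset_Icc (hp0 _) (hp1 _ hj))).norm)
    have ep0 : p 0 = 0 := by simp [p]
    have ep1 : p n = 1 := by simp only [p]; exact div_self hn0.ne'
    rw [ep0, ep1] at hsum
    rw [e1, ← hsum]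
    have hlt : ∑ j ∈ Finset.range n, Real.pi < ∑ j ∈ Finset.range n,
        ∫ x in (p j)..(p (j+1)), ‖derivWithin h (Set.Icc 0 1) x‖ :=
      Finset.sum_lt_sum_of_nonempty (by simpa using (by omega : n ≠ 0))
        (fun j hj' => hj j (Finset.mem_range.1 hj'))
    simp only [Finset.sum_const, Finset.card_range, nsmul_eq_mul] at hlt
    linarith
end

section
/- Let h ∈ C^1([0,1]; S^1) satisfy ∫_0^1 h(x) dx = 0. Then ‖h‖_{W^{1,1}} > π + 1; equivalently, ∫_0^1 |h'(x)| dx > π. -/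
open MeasureTheory

theorem W11_aux (h : ℝ → ℂ)
    (hsm : ContDiffOn ℝ 1 h (Set.Icc 0 1))
    (hcirc : ∀ x ∈ Set.Icc (0:ℝ) 1, ‖h x‖ = 1)
    (hint : ∫ x in (0:ℝ)..1, h x = 0) :
    Real.pi < ∫ x in (0:ℝ)..1, ‖derivWithin h (Set.Icc 0 1) x‖ := by
  by_contra! hL
  have hU : UniqueDiffOn ℝ (Set.Icc (0:ℝ) 1) := uniqueDiffOn_Icc one_pos
  have hc : ContinuousOn h (Set.Icc 0 1) := hsm.continuousOn
  set D := derivWithin h (Set.Icc 0 1) with hD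
  have hDc : ContinuousOn D (Set.Icc 0 1) := hsm.continuousOn_derivWithin hU le_rfl
  have hder : ∀ x ∈ Set.Icc (0:ℝ) 1, HasDerivWithinAt h (D x) (Set.Icc 0 1) x := fun x hx =>
    (hsm.differentiableOn one_ne_zero x hx).hasDerivWithinAt
  -- extensions
  obtain ⟨N, hNc, hN⟩ : ∃ N : ℝ → ℝ, Continuous N ∧ ∀ x ∈ Set.Icc (0:ℝ) 1, N x = ‖D x‖ :=
    ⟨Set.IccExtend zero_le_one ((Set.Icc (0:ℝ) 1).domRestrict fun x => ‖D x‖),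
      (continuousOn_iff_continuous_domRestrict.1 hDc.norm).Icc_extend',
      fun x hx => by rw [Set.IccExtend_of_mem _ _ hx]; rfl⟩
  have hφ0 : ContinuousOn (fun x => (starRingEnd ℂ (h x) * D x).im) (Set.Icc 0 1) :=
    Complex.continuous_im.comp_continuousOn ((Complex.continuous_conj.comp_continuousOn hc).mul hDc)
  obtain ⟨φ, hφc, hφ⟩ : ∃ φ : ℝ → ℝ, Continuous φ ∧
      ∀ x ∈ Set.Icc (0:ℝ) 1, φ x = (starRingEnd ℂ (h x) * D x).im :=
    ⟨Set.IccExtend zero_le_one ((Set.Icc (0:ℝ) 1).domRestrict fun x => (starRingEnd ℂ (h x) * D x).im),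
      (continuousOn_iff_continuous_domRestrict.1 hφ0).Icc_extend',
      fun x hx => by rw [Set.IccExtend_of_mem _ _ hx]; rfl⟩
  have hre : ∀ x ∈ Set.Icc (0:ℝ) 1, (starRingEnd ℂ (h x) * D x).re = 0 := by
    intro x hx
    have h1 := (hder x hx).norm_sq
    have h2 : HasDerivWithinAt (fun x => ‖h x‖ ^ 2) 0 (Set.Icc 0 1) x :=
      (hasDerivWithinAt_const x _ (1:ℝ)).congr (fun y hy => by simp [hcirc y hy])
        (by simp [hcirc x hx])
    have h3 := (hU x hx).eq_deriv _ h1 h2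
    rw [Complex.inner] at h3
    have h4 : (D x * starRingEnd ℂ (h x)).re = 0 := by
      first | linarith | (rw [mul_comm]; linarith)
    rwa [mul_comm] at h4
  have hDeq : ∀ x ∈ Set.Icc (0:ℝ) 1, D x = Complex.I * φ x * h x := by
    intro x hx
    have e1 : starRingEnd ℂ (h x) * D x = Complex.I * φ x := by
      apply Complex.ext
      · rw [hre x hx]; simp
      · rw [hφ x hx]; simp
    have e2 : h x * starRingEnd ℂ (h x) = 1 := by
      rw [Complex.mul_conj, Complex.normSq_eq_norm_sq, hcirc x hx]; simp
    calc D x = (h x * starRingEnd ℂ (h x)) * D x := by rw [e2, one_mul]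
      _ = h x * (starRingEnd ℂ (h x) * D x) := by ring
      _ = _ := by rw [e1]; ring
  have hφN : ∀ x ∈ Set.Icc (0:ℝ) 1, |φ x| ≤ N x := by
    intro x hx
    rw [hN x hx, hDeq x hx]; simp [hcirc x hx]
  have hN0 : ∀ x ∈ Set.Icc (0:ℝ) 1, 0 ≤ N x := fun x hx => by rw [hN x hx]; positivity
  set L := ∫ x in (0:ℝ)..1, ‖D x‖ with hLdef
  have hLN : ∫ x in (0:ℝ)..1, N x = L := by
    apply intervalIntegral.integral_congr
    intro x hx
    rw [Set.uIcc_of_le zero_le_one] at hx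
    exact hN x hx
  have hNi : ∀ a b : ℝ, IntervalIntegrable N volume a b := fun a b => hNc.intervalIntegrable a b
  have hs0 : ∀ a b : ℝ, 0 ≤ a → a ≤ b → b ≤ 1 → 0 ≤ ∫ x in a..b, N x := fun a b ha hab hb =>
    intervalIntegral.integral_nonneg hab fun x hx => hN0 x ⟨ha.trans hx.1, hx.2.trans hb⟩
  have hL0 : 0 ≤ L := hLN ▸ hs0 0 1 le_rfl zero_le_one le_rfl
  obtain ⟨t, ht, hts⟩ : ∃ t ∈ Set.Icc (0:ℝ) 1, ∫ x in (0:ℝ)..t, N x = L / 2 := by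
    have := intermediate_value_Icc (zero_le_one (α := ℝ))
      (f := fun t => ∫ x in (0:ℝ)..t, N x)
      (intervalIntegral.continuous_primitive hNi 0).continuousOn
    simp only [intervalIntegral.integral_same, hLN] at this
    obtain ⟨t, ht, h2⟩ := this (show L / 2 ∈ Set.Icc 0 L from ⟨by linarith, by linarith⟩)
    exact ⟨t, ht, h2⟩
  have hts' : ∫ x in t..1, N x = L / 2 := by
    have := intervalIntegral.integral_add_adjacent_intervals (hNi 0 t) (hNi t 1)
    linarith
  set θ : ℝ → ℝ := fun x => ∫ y in t..x, φ y with hθ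
  have hθd : ∀ x, HasDerivAt θ (φ x) x := fun x => hφc.integral_hasStrictDerivAt t x |>.hasDerivAt
  have hmono : ∀ a b : ℝ, 0 ≤ a → a ≤ b → b ≤ 1 → |∫ x in a..b, φ x| ≤ ∫ x in a..b, N x :=
    fun a b ha hab hb => (intervalIntegral.abs_integral_le_integral_abs hab).trans
      (intervalIntegral.integral_mono_on hab (hφc.abs.intervalIntegrable a b) (hNi a b)
        fun x hx => hφN x ⟨ha.trans hx.1, hx.2.trans hb⟩)
  have hθb : ∀ x ∈ Set.Icc (0:ℝ) 1, |θ x| ≤ Real.pi / 2 := by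
    intro x hx
    rcases le_total t x with htx | htx
    · have h1 := hmono t x ht.1 htx hx.2
      have h2 := hs0 x 1 hx.1 hx.2 le_rfl
      have := intervalIntegral.integral_add_adjacent_intervals (hNi t x) (hNi x 1)
      change |∫ y in t..x, φ y| ≤ _
      linarith
    · have h1 := hmono x t hx.1 htx ht.2
      have h2 := hs0 0 x le_rfl hx.1 hx.2
      have := intervalIntegral.integral_add_adjacent_intervals (hNi 0 x) (hNi x t)
      change |∫ y in t..x, φ y| ≤ _
      rw [intervalIntegral.integral_symm, abs_neg]
      linarith
  have hgd : ∀ x ∈ Set.Icc (0:ℝ) 1,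
      HasDerivWithinAt (fun x => h x * Complex.exp (-(Complex.I * θ x))) 0 (Set.Icc 0 1) x := by
    intro x hx
    have h1 : HasDerivAt (fun x => Complex.exp (-(Complex.I * θ x)))
        (Complex.exp (-(Complex.I * θ x)) * (-(Complex.I * φ x))) x :=
      (((hθd x).ofReal_comp.const_mul Complex.I).neg).cexp
    have h2 := (hder x hx).mul h1.hasDerivWithinAt
    refine h2.congr_deriv ?_
    rw [hDeq x hx]; ring
  have hconst : ∀ x ∈ Set.Icc (0:ℝ) 1, h x * Complex.exp (-(Complex.I * θ x)) = h t := by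
    have := constant_of_derivWithin_zero (fun x hx => (hgd x hx).differentiableWithinAt)
      (fun x hx => (hgd x ⟨hx.1, hx.2.le⟩).derivWithin (hU x ⟨hx.1, hx.2.le⟩))
    intro x hx
    have h1 := this x hx
    have h2 := this t ht
    rw [h1, ← h2]
    simp [hθ]
  have hexp : ∀ x ∈ Set.Icc (0:ℝ) 1, (starRingEnd ℂ (h t) * h x).re = Real.cos (θ x) := by
    intro x hx
    have e : h x = h t * Complex.exp (θ x * Complex.I) := by
      rw [← hconst x hx, mul_assoc, ← Complex.exp_add]
      have : -(Complex.I * (θ x : ℂ)) + θ x * Complex.I = 0 := by ring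
      rw [this]; simp
    have e2 : starRingEnd ℂ (h t) * h t = 1 := by
      rw [mul_comm, Complex.mul_conj, Complex.normSq_eq_norm_sq, hcirc t ht]; simp
    rw [e, ← mul_assoc, e2, one_mul, Complex.exp_ofReal_mul_I_re]
  have hθc : Continuous θ := continuous_iff_continuousAt.2 fun x => (hθd x).continuousAt
  have hcosint : ∫ x in (0:ℝ)..1, Real.cos (θ x) = 0 := by
    have hi : IntervalIntegrable h volume 0 1 :=
      ContinuousOn.intervalIntegrable (by rwa [Set.uIcc_of_le zero_le_one])
    have h1 : ∫ x in (0:ℝ)..1, starRingEnd ℂ (h t) * h x = 0 := by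
      rw [intervalIntegral.integral_const_mul, hint, mul_zero]
    have h2 := Complex.reCLM.intervalIntegral_comp_comm (hi.const_mul (starRingEnd ℂ (h t)))
    rw [h1] at h2
    rw [map_zero] at h2
    refine Eq.trans ?_ h2
    apply intervalIntegral.integral_congr
    intro x hx
    rw [Set.uIcc_of_le zero_le_one] at hx
    exact (hexp x hx).symm
  have hpos : 0 < ∫ x in (0:ℝ)..1, Real.cos (θ x) := by
    apply intervalIntegral.integral_pos one_pos (Real.continuous_cos.comp hθc).continuousOn
    · intro x hx
      have := abs_le.1 (hθb x ⟨hx.1.le, hx.2⟩)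
      exact Real.cos_nonneg_of_neg_pi_div_two_le_of_le (by linarith) this.2
    · exact ⟨t, ht, by simp [hθ]⟩
  linarith

/-- If `h ∈ C¹([0,1]; S¹)` satisfies `∫₀¹ h = 0`, then `‖h‖_{W^{1,1}} > π + 1`;
equivalently, `∫₀¹ |h'| > π`. -/
theorem W11_gt_of_integral_zero (h : ℝ → ℂ)
    (hsm : ContDiffOn ℝ 1 h (Set.Icc 0 1))
    (hcirc : ∀ x ∈ Set.Icc (0:ℝ) 1, ‖h x‖ = 1)
    (hint : ∫ x in (0:ℝ)..1, h x = 0) :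
    Real.pi + 1 <
      (∫ x in (0:ℝ)..1, ‖h x‖) + (∫ x in (0:ℝ)..1, ‖derivWithin h (Set.Icc 0 1) x‖) ∧
    Real.pi < ∫ x in (0:ℝ)..1, ‖derivWithin h (Set.Icc 0 1) x‖ := by
  have h1 := W11_aux h hsm hcirc hint
  have h2 : ∫ x in (0:ℝ)..1, ‖h x‖ = 1 := by
    have : ∫ x in (0:ℝ)..1, ‖h x‖ = ∫ x in (0:ℝ)..1, (1:ℝ) := by
      apply intervalIntegral.integral_congr
      intro x hx
      rw [Set.uIcc_of_le zero_le_one] at hx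
      exact hcirc x hx
    rw [this]; simp
  exact ⟨by linarith, h1⟩
end

section
/- For every integer n ≥ 1, let Y_n denote the set of smooth functions h : [0,1] → S^1 with ‖h‖_{W^{1,1}} ≤ 1 + πn, topologized by the L^1-norm. Then there exists a continuous map β : S^n → Y_n with β(−x) = −β(x) for all x ∈ S^n (where −β(x) denotes the pointwise negation of the function β(x)); that is, the ℤ/2-coindex of Y_n is at least n. -/
open MeasureTheory

/-- Membership in `Y_n`: `h` is smooth on `[0,1]`, circle-valued there, and
`‖h‖_{W^{1,1}} ≤ 1 + π n`. -/
def MemYn (n : ℕ) (h : ℝ → ℂ) : Prop :=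
  ContDiffOn ℝ (⊤ : ℕ∞) h (Set.Icc 0 1) ∧
  (∀ x ∈ Set.Icc (0:ℝ) 1, ‖h x‖ = 1) ∧
  (∫ x in (0:ℝ)..1, ‖h x‖) + (∫ x in (0:ℝ)..1, ‖derivWithin h (Set.Icc 0 1) x‖)
    ≤ 1 + Real.pi * n

noncomputable section

open Polynomial ComplexConjugate

namespace YnAux

/-- the standard loop -/
def zz (s : ℝ) : ℂ := circleMap 0 1 (2 * Real.pi * s)

lemma norm_zz (s : ℝ) : ‖zz s‖ = 1 := by simp [zz]

lemma contDiff_zz : ContDiff ℝ (⊤ : ℕ∞) zz := by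
  unfold zz
  exact (contDiff_circleMap 0 1).comp (by fun_prop)

lemma hasDerivAt_zz (s : ℝ) : HasDerivAt zz ((2 * Real.pi : ℝ) * (zz s * Complex.I)) s := by
  have h := (hasDerivAt_circleMap 0 1 (2 * Real.pi * s)).scomp s
    ((hasDerivAt_id s).const_mul (2 * Real.pi))
  have e : (2 * Real.pi * 1) • (circleMap 0 1 (2 * Real.pi * s) * Complex.I)
    = ((2 * Real.pi : ℝ) : ℂ) * (zz s * Complex.I) := by
    rw [mul_one, Complex.real_smul]; rfl
  exact e ▸ h

lemma zz_mul_conj (s : ℝ) : zz s * conj (zz s) = 1 := by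
  rw [Complex.mul_conj, Complex.normSq_eq_norm_sq, norm_zz]; simp

/-- factor attached to the linear form `a z + b` -/
def L (p : ℂ × ℂ) (s : ℝ) : ℂ :=
  if ‖p.2‖ < ‖p.1‖ then
    (conj p.1 / (‖p.1‖ : ℂ)) * ((p.1 * zz s + p.2) / (conj p.1 + conj p.2 * zz s))
  else p.2 / (‖p.2‖ : ℂ)

lemma norm_den (a b : ℂ) (s : ℝ) : ‖conj a + conj b * zz s‖ = ‖a * zz s + b‖ := by
  have h : conj a + conj b * zz s = zz s * conj (a * zz s + b) := by
    simp only [map_add, map_mul]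
    linear_combination (-conj a) * zz_mul_conj s
  rw [h, norm_mul, norm_zz, one_mul, RCLike.norm_conj]

lemma num_ne {a b : ℂ} (h : ‖b‖ < ‖a‖) (s : ℝ) : a * zz s + b ≠ 0 := by
  intro h0
  have : b = -(a * zz s) := by linear_combination h0
  rw [this, norm_neg, norm_mul, norm_zz, mul_one] at h
  exact lt_irrefl _ h

lemma den_ne {a b : ℂ} {s : ℝ} (h : a * zz s + b ≠ 0) : conj a + conj b * zz s ≠ 0 := by
  rw [← norm_ne_zero_iff, norm_den, norm_ne_zero_iff]; exact h

lemma norm_phase {a : ℂ} (h : a ≠ 0) : ‖a / (‖a‖ : ℂ)‖ = 1 := by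
  simp [h]

lemma norm_L {p : ℂ × ℂ} (hp : p ≠ 0) (s : ℝ) : ‖L p s‖ = 1 := by
  unfold L
  split_ifs with h
  · have ha : p.1 ≠ 0 := by
      intro h0; rw [h0, norm_zero] at h; exact absurd h (not_lt.2 (norm_nonneg _))
    have h1 := num_ne h s
    rw [norm_mul, norm_div, norm_div, norm_den, div_self (norm_ne_zero_iff.2 h1)]
    simp [ha]
  · apply norm_phase
    intro h0
    rw [h0, norm_zero, not_lt] at h
    exact hp (Prod.ext (norm_le_zero_iff.1 h) h0)

lemma L_smul {c : ℂ} (hc : c ≠ 0) (p : ℂ × ℂ) (s : ℝ) :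
    L (c * p.1, c * p.2) s = (c / (‖c‖ : ℂ)) * L p s := by
  unfold L
  have hc' : 0 < ‖c‖ := norm_pos_iff.2 hc
  simp only [norm_mul, mul_lt_mul_iff_right₀ hc', map_mul]
  have hcc : conj c ≠ 0 := by simpa using hc
  have hn : (‖c‖ : ℂ) ≠ 0 := by exact_mod_cast hc'.ne'
  split_ifs with h
  · have h1 := den_ne (num_ne h s)
    have ha : (‖p.1‖ : ℂ) ≠ 0 := by
      intro h0
      have h0 : ‖p.1‖ = 0 := by exact_mod_cast h0
      rw [h0] at h; exact absurd h (not_lt.2 (norm_nonneg _))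
    have e : conj c * conj p.1 + conj c * conj p.2 * zz s
      = conj c * (conj p.1 + conj p.2 * zz s) := by ring
    rw [e]
    push_cast
    field_simp
  · push_cast
    rw [mul_div_mul_comm]

lemma continuousAt_L {p : ℂ × ℂ} {s : ℝ} (h : p.1 * zz s + p.2 ≠ 0) :
    ContinuousAt (fun q => L q s) p := by
  have hd := den_ne h
  have c1 : p.1 ≠ 0 → ContinuousAt (fun q : ℂ × ℂ => (conj q.1 / (‖q.1‖ : ℂ)) *
      ((q.1 * zz s + q.2) / (conj q.1 + conj q.2 * zz s))) p := by
    intro ha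
    have ha' : (‖p.1‖ : ℂ) ≠ 0 := by simpa using ha
    have k1 : Continuous (fun q : ℂ × ℂ => conj q.1) := Complex.continuous_conj.comp continuous_fst
    have k2 : Continuous (fun q : ℂ × ℂ => conj q.2) := Complex.continuous_conj.comp continuous_snd
    refine ContinuousAt.mul (ContinuousAt.div k1.continuousAt ?_ ha')
      (ContinuousAt.div (by fun_prop) (k1.add (k2.mul continuous_const)).continuousAt hd)
    exact (Complex.continuous_ofReal.comp (continuous_norm.comp continuous_fst)).continuousAt
  have c2 : p.2 ≠ 0 → ContinuousAt (fun q : ℂ × ℂ => q.2 / (‖q.2‖ : ℂ)) p := by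
    intro hb
    have hb' : (‖p.2‖ : ℂ) ≠ 0 := by simpa using hb
    refine ContinuousAt.div continuous_snd.continuousAt ?_ hb'
    exact (Complex.continuous_ofReal.comp (continuous_norm.comp continuous_snd)).continuousAt
  have n1 : Continuous (fun q : ℂ × ℂ => ‖q.1‖) := by fun_prop
  have n2 : Continuous (fun q : ℂ × ℂ => ‖q.2‖) := by fun_prop
  rcases lt_trichotomy ‖p.2‖ ‖p.1‖ with hlt | heq | hgt
  · have ha : p.1 ≠ 0 := norm_pos_iff.1 (lt_of_le_of_lt (norm_nonneg _) hlt)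
    refine (c1 ha).congr ?_
    filter_upwards [(isOpen_lt n2 n1).mem_nhds hlt] with q hq
    have hq : ‖q.2‖ < ‖q.1‖ := hq
    simp [L, hq]
  · have ha : p.1 ≠ 0 := by
      intro h0
      rw [h0, norm_zero, norm_eq_zero] at heq
      simp [h0, heq] at h
    have hb : p.2 ≠ 0 := by
      rw [← norm_ne_zero_iff, heq, norm_ne_zero_iff]; exact ha
    have hv : (conj p.1 / (‖p.1‖ : ℂ)) *
      ((p.1 * zz s + p.2) / (conj p.1 + conj p.2 * zz s)) = p.2 / (‖p.2‖ : ℂ) := by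
      have ha' : (‖p.1‖ : ℂ) ≠ 0 := by simpa using ha
      have e : p.1 * conj p.1 = p.2 * conj p.2 := by
        rw [Complex.mul_conj, Complex.mul_conj, Complex.normSq_eq_norm_sq,
          Complex.normSq_eq_norm_sq, heq]
      rw [heq, div_mul_div_comm, div_eq_div_iff (mul_ne_zero ha' hd) ha']
      linear_combination (zz s * (‖p.1‖ : ℂ)) * e
    have hL : L p s = p.2 / (‖p.2‖ : ℂ) := by simp [L, heq]
    change Filter.Tendsto (fun q => L q s) (nhds p) (nhds (L p s))
    rw [hL]
    refine Filter.Tendsto.if' ?_ ?_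
    · rw [← hv]; exact c1 ha
    · exact c2 hb
  · have hb : p.2 ≠ 0 := norm_pos_iff.1 (lt_of_le_of_lt (norm_nonneg _) hgt)
    refine (c2 hb).congr ?_
    filter_upwards [(isOpen_lt n1 n2).mem_nhds hgt] with q hq
    have hq : ‖q.1‖ < ‖q.2‖ := hq
    simp [L, not_lt.2 hq.le]

lemma ae_num_ne {p : ℂ × ℂ} (hp : p ≠ 0) : ∀ᵐ s : ℝ, p.1 * zz s + p.2 ≠ 0 := by
  rw [MeasureTheory.ae_iff]
  simp only [not_not]
  apply Set.Countable.measure_zero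
  by_cases hne : ({s : ℝ | p.1 * zz s + p.2 = 0}).Nonempty
  · obtain ⟨s0, h0⟩ := hne
    have h0 : p.1 * zz s0 + p.2 = 0 := h0
    have ha : p.1 ≠ 0 := by
      intro ha
      rw [ha] at h0
      exact hp (Prod.ext ha (by simpa using h0))
    refine (Set.countable_range (fun m : ℤ => s0 + m)).mono ?_
    intro s hs
    have hs : p.1 * zz s + p.2 = 0 := hs
    have e : zz s = zz s0 := by
      apply mul_left_cancel₀ ha
      linear_combination hs - h0
    simp only [zz, circleMap, zero_add, Complex.ofReal_one, one_mul] at e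
    obtain ⟨m, hm⟩ := Complex.exp_eq_exp_iff_exists_int.1 e
    refine ⟨m, ?_⟩
    have hpi : (Real.pi : ℂ) ≠ 0 := by exact_mod_cast Real.pi_ne_zero
    have : (s : ℂ) = s0 + m := by
      have hI := Complex.I_ne_zero
      push_cast at hm
      apply mul_left_cancel₀ (mul_ne_zero (mul_ne_zero two_ne_zero hpi) hI)
      linear_combination hm
    simp only
    exact_mod_cast this.symm
  · rw [Set.not_nonempty_iff_eq_empty.1 hne]
    exact Set.countable_empty

/-- good functions -/
def Good (v : ℝ) (h : ℝ → ℂ) : Prop :=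
  ContDiff ℝ (⊤ : ℕ∞) h ∧ (∀ s, ‖h s‖ = 1) ∧ (∫ s in (0:ℝ)..1, ‖deriv h s‖) ≤ v

lemma Good.cont_deriv {v : ℝ} {h : ℝ → ℂ} (H : Good v h) : Continuous (deriv h) :=
  H.1.continuous_deriv (by simp)

lemma Good.mul {v w : ℝ} {f g : ℝ → ℂ} (hf : Good v f) (hg : Good w g) :
    Good (v + w) (fun s => f s * g s) := by
  refine ⟨hf.1.mul hg.1, fun s => by rw [norm_mul, hf.2.1, hg.2.1, one_mul], ?_⟩
  refine le_trans ?_ (add_le_add hf.2.2 hg.2.2)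
  have i1 := hf.cont_deriv.norm.intervalIntegrable (μ := MeasureTheory.volume) 0 1
  have i2 := hg.cont_deriv.norm.intervalIntegrable (μ := MeasureTheory.volume) 0 1
  rw [← intervalIntegral.integral_add i1 i2]
  have hfd : Differentiable ℝ f := hf.1.differentiable (by simp)
  have hgd : Differentiable ℝ g := hg.1.differentiable (by simp)
  have hD : ∀ s, deriv (fun s => f s * g s) s = deriv f s * g s + f s * deriv g s := fun s =>
    deriv_fun_mul (hfd s) (hgd s)
  have i3 : Continuous (fun s => ‖deriv (fun s => f s * g s) s‖) := by
    simp only [hD]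
    exact ((hf.cont_deriv.mul hg.1.continuous).add (hf.1.continuous.mul hg.cont_deriv)).norm
  apply intervalIntegral.integral_mono_on zero_le_one (i3.intervalIntegrable 0 1) (i1.add i2)
  intro s _
  rw [hD]
  refine (norm_add_le _ _).trans ?_
  rw [norm_mul, norm_mul, hf.2.1, hg.2.1, mul_one, one_mul]

lemma good_const {c : ℂ} (hc : ‖c‖ = 1) : Good 0 (fun _ => c) :=
  ⟨contDiff_const, fun _ => hc, by simp⟩

lemma Good.mono {v w : ℝ} {f : ℝ → ℂ} (hf : Good v f) (h : v ≤ w) : Good w f :=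
  ⟨hf.1, hf.2.1, hf.2.2.trans h⟩

lemma poisson {r : ℂ} (hr : ‖r‖ < 1) :
    ∫ s in (0:ℝ)..1, 2 * Real.pi * ((1 - ‖r‖ ^ 2) / ‖zz s - r‖ ^ 2) = 2 * Real.pi := by
  have h := DiffContOnCl.circleAverage_poissonKernel_smul' (E := ℂ) (c := 0) (R := 1) (w := r)
    (f := fun _ => (1 : ℂ)) diffContOnCl_const (by simpa using hr)
  simp only [sub_zero] at h
  rw [Real.circleAverage_def] at h
  have e : ∀ θ : ℝ, ((‖circleMap 0 1 θ‖ ^ 2 - ‖r‖ ^ 2) / ‖circleMap 0 1 θ - r‖ ^ 2) • (1 : ℂ)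
      = (((1 - ‖r‖ ^ 2) / ‖circleMap 0 1 θ - r‖ ^ 2 : ℝ) : ℂ) := by
    intro θ
    simp
  simp only [e] at h
  rw [intervalIntegral.integral_ofReal, Complex.real_smul] at h
  have h' : (2 * Real.pi)⁻¹ *
      (∫ θ in (0:ℝ)..2 * Real.pi, (1 - ‖r‖ ^ 2) / ‖circleMap 0 1 θ - r‖ ^ 2) = 1 := by
    exact_mod_cast h
  have k := intervalIntegral.integral_comp_mul_left (a := 0) (b := 1)
    (fun θ => (1 - ‖r‖ ^ 2) / ‖circleMap 0 1 θ - r‖ ^ 2) Real.two_pi_pos.ne'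
  rw [mul_zero, mul_one, smul_eq_mul, h'] at k
  rw [intervalIntegral.integral_const_mul]
  change 2 * Real.pi * ∫ s in (0:ℝ)..1,
    (1 - ‖r‖ ^ 2) / ‖circleMap 0 1 (2 * Real.pi * s) - r‖ ^ 2 = 2 * Real.pi
  rw [k, mul_one]

lemma good_G (r : ℂ) : Good (2 * Real.pi) (L (1, -r)) := by
  have hp : ((1 : ℂ), -r) ≠ 0 := by simp
  by_cases hr : ‖r‖ < 1
  · have hd : ∀ s, 1 - conj r * zz s ≠ 0 := fun s => by
      have := den_ne (num_ne (a := 1) (b := -r) (by simpa using hr) s)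
      simpa [sub_eq_add_neg] using this
    have e : L (1, -r) = fun s => (zz s - r) / (1 - conj r * zz s) := by
      funext s
      simp [L, hr, sub_eq_add_neg]
    have hder : ∀ s, ‖deriv (L (1, -r)) s‖ = 2 * Real.pi * ((1 - ‖r‖ ^ 2) / ‖zz s - r‖ ^ 2) := by
      intro s
      have h1 := ((hasDerivAt_zz s).sub_const r).div
        (((hasDerivAt_zz s).const_mul (conj r)).const_sub 1) (hd s)
      rw [e]
      rw [HasDerivAt.deriv (f := fun s => (zz s - r) / (1 - conj r * zz s)) h1]
      have e3 : ‖1 - conj r * zz s‖ = ‖zz s - r‖ := by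
        have := norm_den 1 (-r) s
        simpa [sub_eq_add_neg] using this
      have e2 : (2 * Real.pi : ℝ) * (zz s * Complex.I) * (1 - conj r * zz s) -
          (zz s - r) * -(conj r * ((2 * Real.pi : ℝ) * (zz s * Complex.I)))
          = (2 * Real.pi : ℝ) * (zz s * Complex.I) * ((1 - ‖r‖ ^ 2 : ℝ) : ℂ) := by
        have : r * conj r = ((‖r‖ ^ 2 : ℝ) : ℂ) := by
          rw [Complex.mul_conj, Complex.normSq_eq_norm_sq]
        rw [Complex.ofReal_sub, ← this]
        push_cast
        ring
      rw [e2, norm_div, norm_pow, e3]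
      have h0 : 0 ≤ 1 - ‖r‖ ^ 2 := by nlinarith [norm_nonneg r]
      rw [norm_mul, norm_mul, norm_mul, norm_zz, Complex.norm_I, Complex.norm_real,
        Complex.norm_real, Real.norm_of_nonneg h0, Real.norm_of_nonneg Real.two_pi_pos.le]
      ring
    refine ⟨?_, norm_L hp, ?_⟩
    · rw [e]
      simp only [div_eq_mul_inv]
      exact (contDiff_zz.sub contDiff_const).mul
        ((contDiff_const.sub (contDiff_const.mul contDiff_zz)).inv hd)
    · simp only [hder]
      exact (poisson hr).le
  · have e : L (1, -r) = fun _ => -r / (‖-r‖ : ℂ) := by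
      funext s
      simp [L, hr]
    have hr0 : -r ≠ 0 := by
      intro h0
      rw [neg_eq_zero] at h0
      simp [h0] at hr
    rw [e]
    exact (good_const (norm_phase hr0)).mono Real.two_pi_pos.le


/-- normalised inner part of a polynomial, on the unit circle -/
def B (P : ℂ[X]) (s : ℝ) : ℂ :=
  (P.leadingCoeff / (‖P.leadingCoeff‖ : ℂ)) * (P.roots.map (fun r => L (1, -r) s)).prod

lemma B_mul {P Q : ℂ[X]} (hP : P ≠ 0) (hQ : Q ≠ 0) (s : ℝ) :
    B (P * Q) s = B P s * B Q s := by
  unfold B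
  rw [leadingCoeff_mul, roots_mul (mul_ne_zero hP hQ), Multiset.map_add, Multiset.prod_add,
    norm_mul, Complex.ofReal_mul, mul_div_mul_comm]
  ring

lemma B_C (c : ℂ) (s : ℝ) : B (C c) s = c / (‖c‖ : ℂ) := by
  simp [B]

lemma B_lin {p : ℂ × ℂ} (hp : p ≠ 0) (s : ℝ) : B (C p.1 * X + C p.2) s = L p s := by
  by_cases ha : p.1 = 0
  · rw [ha, C_0, zero_mul, zero_add, B_C]
    simp [L, ha]
  · have e : (C p.1 * X + C p.2 : ℂ[X]) = C p.1 * (X - C (-(p.2 / p.1))) := by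
      rw [mul_sub, ← C_mul, mul_neg, mul_div_cancel₀ _ ha, C_neg, sub_neg_eq_add]
    rw [e, B_mul (C_ne_zero.2 ha) (X_sub_C_ne_zero _), B_C]
    have e2 : B (X - C (-(p.2 / p.1))) s = L (1, p.2 / p.1) s := by
      unfold B
      rw [roots_X_sub_C, leadingCoeff_X_sub_C]
      simp
    rw [e2, ← L_smul ha]
    simp only [mul_one, mul_div_cancel₀ _ ha]

lemma B_prod {ι : Type*} (t : Finset ι) (f : ι → ℂ[X]) (hf : ∀ i ∈ t, f i ≠ 0) (s : ℝ) :
    B (∏ i ∈ t, f i) s = ∏ i ∈ t, B (f i) s := by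
  classical
  induction t using Finset.induction_on with
  | empty =>
    have := B_C 1 s
    simpa using this
  | insert i t hi ih =>
    rw [Finset.prod_insert hi, Finset.prod_insert hi, B_mul (hf i (by simp)), ih]
    · exact fun j hj => hf j (by simp [hj])
    · exact Finset.prod_ne_zero_iff.2 fun j hj => hf j (by simp [hj])

lemma good_B {P : ℂ[X]} (hP : P ≠ 0) : Good (2 * Real.pi * P.natDegree) (B P) := by
  have h : ∀ m : Multiset ℂ,
      Good (2 * Real.pi * (Multiset.card m)) (fun s => (m.map (fun r => L (1, -r) s)).prod) := by
    intro m
    induction m using Multiset.induction_on with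
    | empty => simpa using good_const (c := 1) (by simp)
    | cons r m ih =>
      have := (good_G r).mul ih
      simp only [Multiset.map_cons, Multiset.prod_cons, Multiset.card_cons]
      refine this.mono (le_of_eq ?_)
      push_cast; ring
  have h2 := (good_const (norm_phase (leadingCoeff_ne_zero.2 hP))).mul (h P.roots)
  refine Good.mono h2 ?_
  rw [zero_add]
  have : (Multiset.card P.roots : ℝ) ≤ P.natDegree := by exact_mod_cast card_roots' P
  have := Real.two_pi_pos
  gcongr

lemma lin_ne {p : ℂ × ℂ} (hp : p ≠ 0) : (C p.1 * X + C p.2 : ℂ[X]) ≠ 0 := by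
  intro h
  apply hp
  have h0 := congrArg (fun q => coeff q 0) h
  have h1 := congrArg (fun q => coeff q 1) h
  simp [coeff_C] at h0 h1
  exact Prod.ext h1 h0

/-- factorisation into normalised linear forms -/
lemma exists_factor (k : ℕ) : ∀ P : ℂ[X], P ≠ 0 → P.natDegree ≤ k →
    ∃ (l : ℝ) (_ : 0 < l) (u : Metric.sphere (0 : ℂ) 1)
      (t : Fin k → Metric.sphere (0 : ℂ × ℂ) 1),
      P = C (l : ℂ) * (C (u : ℂ) * ∏ i, (C (t i : ℂ × ℂ).1 * X + C (t i : ℂ × ℂ).2)) := by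
  induction k with
  | zero =>
    intro P hP hd
    obtain ⟨c, rfl⟩ : ∃ c, P = C c := ⟨_, eq_C_of_natDegree_le_zero hd⟩
    have hc : c ≠ 0 := C_ne_zero.1 hP
    refine ⟨‖c‖, norm_pos_iff.2 hc, ⟨c / (‖c‖ : ℂ), by simpa using hc⟩, Fin.elim0, ?_⟩
    have hc' : (‖c‖ : ℂ) ≠ 0 := by simpa using hc
    simp only [Finset.univ_eq_empty, Finset.prod_empty, mul_one]
    rw [← C_mul, mul_div_cancel₀ _ hc']
  | succ k ih =>
    intro P hP hd
    obtain ⟨p, Q, hp, hPQ, hQ⟩ : ∃ (p : ℂ × ℂ) (Q : ℂ[X]), p ≠ 0 ∧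
        P = (C p.1 * X + C p.2) * Q ∧ Q.natDegree ≤ k := by
      by_cases h0 : P.natDegree ≤ k
      · exact ⟨(0, 1), P, by simp, by simp, h0⟩
      · have hdeg : P.degree ≠ 0 := by
          intro h
          exact h0 (by rw [natDegree_eq_zero_iff_degree_le_zero.2 h.le]; exact Nat.zero_le _)
        obtain ⟨r, hr⟩ := IsAlgClosed.exists_root P hdeg
        obtain ⟨Q, hQ⟩ := dvd_iff_isRoot.2 hr
        refine ⟨(1, -r), Q, by simp, by rw [hQ]; simp [sub_eq_add_neg], ?_⟩
        have hQ0 : Q ≠ 0 := by rintro rfl; simp at hQ; exact hP hQ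
        rw [hQ, natDegree_mul (X_sub_C_ne_zero _) hQ0, natDegree_X_sub_C] at hd
        omega
    have hQ0 : Q ≠ 0 := by rintro rfl; simp at hPQ; exact hP hPQ
    obtain ⟨l, hl, u, t, e⟩ := ih Q hQ0 hQ
    have hpn : 0 < ‖p‖ := norm_pos_iff.2 hp
    let q : Metric.sphere (0 : ℂ × ℂ) 1 := ⟨(‖p‖)⁻¹ • p, by
      rw [mem_sphere_zero_iff_norm, norm_smul, norm_inv, norm_norm, inv_mul_cancel₀ hpn.ne']⟩
    refine ⟨‖p‖ * l, mul_pos hpn hl, u, Fin.cons q t, ?_⟩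
    have hn : (‖p‖ : ℂ) ≠ 0 := by exact_mod_cast hpn.ne'
    have e1 : (C p.1 * X + C p.2 : ℂ[X])
        = C (‖p‖ : ℂ) * (C (q : ℂ × ℂ).1 * X + C (q : ℂ × ℂ).2) := by
      have a1 : p.1 = (‖p‖ : ℂ) * (q : ℂ × ℂ).1 := by
        simp only [q, Prod.smul_fst, Complex.real_smul, Complex.ofReal_inv]
        rw [mul_inv_cancel_left₀ hn]
      have a2 : p.2 = (‖p‖ : ℂ) * (q : ℂ × ℂ).2 := by
        simp only [q, Prod.smul_snd, Complex.real_smul, Complex.ofReal_inv]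
        rw [mul_inv_cancel_left₀ hn]
      rw [mul_add, ← mul_assoc, ← C_mul, ← C_mul, ← a1, ← a2]
    rw [Fin.prod_univ_succ]
    simp only [Fin.cons_zero, Fin.cons_succ]
    rw [hPQ, e, e1, Complex.ofReal_mul, C_mul]
    ring

/-- parameter space -/
abbrev T (k : ℕ) : Type := Metric.sphere (0 : ℂ) 1 × (Fin k → Metric.sphere (0 : ℂ × ℂ) 1)

/-- product polynomial -/
def pol {k : ℕ} (t : T k) : ℂ[X] :=
  C (t.1 : ℂ) * ∏ i, (C (t.2 i : ℂ × ℂ).1 * X + C (t.2 i : ℂ × ℂ).2)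

lemma sph_ne {E : Type*} [NormedAddCommGroup E] (q : Metric.sphere (0 : E) 1) : (q : E) ≠ 0 :=
  ne_zero_of_mem_unit_sphere q

lemma pol_ne {k : ℕ} (t : T k) : pol t ≠ 0 :=
  mul_ne_zero (C_ne_zero.2 (sph_ne _)) (Finset.prod_ne_zero_iff.2 fun i _ => lin_ne (sph_ne _))

lemma pol_deg {k : ℕ} (t : T k) : (pol t).natDegree ≤ k := by
  unfold pol
  refine (natDegree_C_mul_le _ _).trans ((natDegree_prod_le _ _).trans ?_)
  refine (Finset.sum_le_sum (fun i _ => natDegree_linear_le)).trans ?_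
  simp

lemma B_pol {k : ℕ} (t : T k) (s : ℝ) : B (pol t) s = t.1 * ∏ i, L (t.2 i) s := by
  unfold pol
  rw [B_mul (C_ne_zero.2 (sph_ne _)) (Finset.prod_ne_zero_iff.2 fun i _ => lin_ne (sph_ne _)),
    B_C, B_prod _ _ (fun i _ => lin_ne (sph_ne _))]
  have : ‖(t.1 : ℂ)‖ = 1 := by simp
  rw [this, Complex.ofReal_one, div_one]
  congr 1
  exact Finset.prod_congr rfl fun i _ => B_lin (sph_ne _) s

lemma continuous_coeff_pol {k : ℕ} (j : ℕ) : Continuous (fun t : T k => (pol t).coeff j) := by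
  have h : ∀ (S : Finset (Fin k)) (j : ℕ), Continuous (fun t : T k =>
      (∏ i ∈ S, (C (t.2 i : ℂ × ℂ).1 * X + C (t.2 i : ℂ × ℂ).2)).coeff j) := by
    intro S
    induction S using Finset.induction_on with
    | empty => intro j; simp only [Finset.prod_empty]; exact continuous_const
    | insert i S hi ih =>
      intro j
      simp only [Finset.prod_insert hi, coeff_mul]
      refine continuous_finsetSum _ fun x _ => Continuous.mul ?_ (ih _)
      simp only [coeff_add, coeff_C_mul, coeff_C]
      refine Continuous.add (by fun_prop) ?_
      split_ifs
      · fun_prop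
      · exact continuous_const
  unfold pol
  simp only [coeff_C_mul]
  exact Continuous.mul (by fun_prop) (h _ j)

lemma continuous_int {k : ℕ} {h : ℝ → ℂ} {v : ℝ} (hh : Good v h) :
    Continuous (fun t : T k => ∫ s in (0:ℝ)..1, ‖B (pol t) s - h s‖) := by
  rw [continuous_iff_continuousAt]
  intro t0
  refine intervalIntegral.continuousAt_of_dominated_interval (bound := fun _ => 2) ?_ ?_ ?_ ?_
  · refine Filter.Eventually.of_forall fun t => ?_
    exact ((good_B (pol_ne t)).1.continuous.sub hh.1.continuous).norm.aestronglyMeasurable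
  · refine Filter.Eventually.of_forall fun t => Filter.Eventually.of_forall fun s _ => ?_
    rw [norm_norm]
    refine (norm_sub_le _ _).trans ?_
    rw [(good_B (pol_ne t)).2.1, hh.2.1]; norm_num
  · exact intervalIntegrable_const
  · have : ∀ᵐ s : ℝ, ∀ i, (t0.2 i : ℂ × ℂ).1 * zz s + (t0.2 i : ℂ × ℂ).2 ≠ 0 :=
      MeasureTheory.ae_all_iff.2 fun i => ae_num_ne (sph_ne _)
    filter_upwards [this] with s hs _
    simp only [B_pol]
    refine ContinuousAt.norm (ContinuousAt.sub (ContinuousAt.mul (by fun_prop) ?_)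
      continuousAt_const)
    refine tendsto_finsetProd _ fun i _ => ?_
    have c : ContinuousAt (fun t : T k => (t.2 i : ℂ × ℂ)) t0 := by fun_prop
    exact ContinuousAt.comp (g := fun q => L q s) (continuousAt_L (hs i)) c

/-- coefficient vectors on the unit sphere -/
abbrev S (k : ℕ) : Type := Metric.sphere (0 : Fin (k + 1) → ℂ) 1

open Classical in
/-- polynomial of a coefficient vector -/
def toP {k : ℕ} (c : Fin (k + 1) → ℂ) : ℂ[X] := ofFn (k + 1) c

lemma toP_ne {k : ℕ} {c : Fin (k + 1) → ℂ} (hc : c ≠ 0) : toP c ≠ 0 := by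
  unfold toP
  exact (map_ne_zero_iff _ (injective_ofFn _)).2 hc

lemma toP_deg {k : ℕ} (c : Fin (k + 1) → ℂ) : (toP c).natDegree ≤ k :=
  Nat.lt_succ_iff.1 (ofFn_natDegree_lt (by omega) c)

lemma toP_smul {k : ℕ} (a : ℂ) (c : Fin (k + 1) → ℂ) : toP (a • c) = C a * toP c := by
  unfold toP; rw [map_smul, smul_eq_C_mul]

lemma toP_toFn {k : ℕ} {P : ℂ[X]} (h : P.natDegree ≤ k) : toP (toFn (k + 1) P) = P := by
  unfold toP
  exact ofFn_comp_toFn_eq_id_of_natDegree_lt (by omega)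

lemma toFn_toP {k : ℕ} (c : Fin (k + 1) → ℂ) : toFn (k + 1) (toP c) = c := by
  unfold toP
  exact toFn_comp_ofFn_eq_id _ _

lemma B_pos {P : ℂ[X]} (hP : P ≠ 0) {l : ℝ} (hl : 0 < l) (s : ℝ) :
    B (C (l : ℂ) * P) s = B P s := by
  have hl' : (l : ℂ) ≠ 0 := by exact_mod_cast hl.ne'
  rw [B_mul (C_ne_zero.2 hl') hP, B_C, Complex.norm_real, Real.norm_of_nonneg hl.le,
    div_self hl', one_mul]

lemma vec_ne {k : ℕ} (t : T k) : toFn (k + 1) (pol t) ≠ 0 := by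
  intro h
  have := toP_toFn (pol_deg t)
  rw [h] at this
  apply pol_ne t
  rw [← this]; simp [toP]

/-- normalised multiplication map -/
def N {k : ℕ} (t : T k) : S k :=
  ⟨((‖toFn (k + 1) (pol t)‖⁻¹ : ℝ) : ℂ) • toFn (k + 1) (pol t), by
    have := norm_ne_zero_iff.2 (vec_ne t)
    rw [mem_sphere_zero_iff_norm, norm_smul, Complex.norm_real, norm_inv, norm_norm,
      inv_mul_cancel₀ this]⟩

lemma toP_N {k : ℕ} (t : T k) (s : ℝ) : B (toP (N t : Fin (k + 1) → ℂ)) s = B (pol t) s := by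
  have h : 0 < ‖toFn (k + 1) (pol t)‖⁻¹ := inv_pos.2 (norm_pos_iff.2 (vec_ne t))
  change B (toP (((‖toFn (k + 1) (pol t)‖⁻¹ : ℝ) : ℂ) • toFn (k + 1) (pol t))) s = _
  rw [toP_smul, toP_toFn (pol_deg t), B_pos (pol_ne t) h]

lemma continuous_N {k : ℕ} : Continuous (N (k := k)) := by
  have h : Continuous (fun t : T k => toFn (k + 1) (pol t)) :=
    continuous_pi fun j => continuous_coeff_pol (j : ℕ)
  refine Continuous.subtype_mk ?_ _
  refine Continuous.smul (M := ℂ) ?_ h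
  exact Complex.continuous_ofReal.comp (h.norm.inv₀ fun t => norm_ne_zero_iff.2 (vec_ne t))

lemma surj_N {k : ℕ} : Function.Surjective (N (k := k)) := by
  intro c
  obtain ⟨l, hl, u, t, e⟩ := exists_factor k (toP (c : Fin (k + 1) → ℂ)) (toP_ne (sph_ne c))
    (toP_deg _)
  refine ⟨(u, t), Subtype.ext ?_⟩
  have hl' : (l : ℂ) ≠ 0 := by exact_mod_cast hl.ne'
  have e' : (c : Fin (k + 1) → ℂ) = (l : ℂ) • toFn (k + 1) (pol (u, t)) := by
    rw [← map_smul, smul_eq_C_mul]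
    rw [← toFn_toP (c : Fin (k + 1) → ℂ), e]
    rfl
  have hn : ‖(c : Fin (k + 1) → ℂ)‖ = 1 := by simp
  have hm : l * ‖toFn (k + 1) (pol (u, t))‖ = 1 := by
    rw [e', norm_smul, Complex.norm_real, Real.norm_of_nonneg hl.le] at hn
    exact hn
  change ((‖toFn (k + 1) (pol (u, t))‖⁻¹ : ℝ) : ℂ) • toFn (k + 1) (pol (u, t)) = _
  rw [e', ← eq_inv_of_mul_eq_one_left hm]

lemma continuous_S {k : ℕ} {h : ℝ → ℂ} {v : ℝ} (hh : Good v h) :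
    Continuous (fun c : S k => ∫ s in (0:ℝ)..1, ‖B (toP (c : Fin (k + 1) → ℂ)) s - h s‖) := by
  have hq : Topology.IsQuotientMap (N (k := k)) :=
    (continuous_N.isClosedMap).isQuotientMap continuous_N surj_N
  rw [hq.continuous_iff]
  have := continuous_int (k := k) hh
  simpa only [Function.comp_def, toP_N] using this

/-- coefficient vector of a real vector -/
def vec {n : ℕ} (x : EuclideanSpace ℝ (Fin (n + 1))) : Fin (n / 2 + 1) → ℂ := fun j =>
  ⟨if h : 2 * (j : ℕ) < n + 1 then x ⟨2 * j, h⟩ else 0,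
    if h : 2 * (j : ℕ) + 1 < n + 1 then x ⟨2 * j + 1, h⟩ else 0⟩

lemma vec_ne_zero {n : ℕ} {x : EuclideanSpace ℝ (Fin (n + 1))} (hx : x ≠ 0) : vec x ≠ 0 := by
  intro h
  apply hx
  ext i
  have hj := congrFun h ⟨(i : ℕ) / 2, by have := i.2; omega⟩
  have hre := congrArg Complex.re hj
  have him := congrArg Complex.im hj
  simp only [vec, Pi.zero_apply, Complex.zero_re, Complex.zero_im] at hre him
  have hi := i.2
  rcases Nat.even_or_odd' (i : ℕ) with ⟨m, hm | hm⟩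
  · rw [dif_pos (by omega)] at hre
    have : i = ⟨2 * ((i : ℕ) / 2), by omega⟩ := Fin.ext (by simp only; omega)
    rw [this]; exact hre
  · rw [dif_pos (by omega)] at him
    have : i = ⟨2 * ((i : ℕ) / 2) + 1, by omega⟩ := Fin.ext (by simp only; omega)
    rw [this]; exact him

lemma vec_neg {n : ℕ} (x : EuclideanSpace ℝ (Fin (n + 1))) : vec (-x) = (-1 : ℂ) • vec x := by
  funext j
  apply Complex.ext
  · simp [vec]; split_ifs <;> simp
  · simp [vec]; split_ifs <;> simp

lemma continuous_vec {n : ℕ} : Continuous (vec (n := n)) := by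
  refine continuous_pi fun j => ?_
  have e : (fun x : EuclideanSpace ℝ (Fin (n + 1)) => vec x j) = fun x =>
      (((if h : 2 * (j : ℕ) < n + 1 then x ⟨2 * j, h⟩ else 0 : ℝ) : ℂ) +
    ((if h : 2 * (j : ℕ) + 1 < n + 1 then x ⟨2 * j + 1, h⟩ else 0 : ℝ) : ℂ) * Complex.I) := by
    funext x
    apply Complex.ext <;> simp [vec]
  rw [e]
  refine Continuous.add (Complex.continuous_ofReal.comp ?_)
    (Continuous.mul (Complex.continuous_ofReal.comp ?_) continuous_const)
  · split_ifs
    · fun_prop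
    · exact continuous_const
  · split_ifs
    · fun_prop
    · exact continuous_const

lemma memYn_of_good {n : ℕ} {h : ℝ → ℂ} (H : Good (Real.pi * n) h) : MemYn n h := by
  refine ⟨H.1.contDiffOn, fun x _ => H.2.1 x, ?_⟩
  have e : (∫ x in (0:ℝ)..1, ‖derivWithin h (Set.Icc 0 1) x‖) = ∫ x in (0:ℝ)..1, ‖deriv h x‖ := by
    apply intervalIntegral.integral_congr
    intro x hx
    rw [Set.uIcc_of_le zero_le_one] at hx
    simp only
    rw [((H.1.differentiable (by simp)) x).derivWithin
      (uniqueDiffOn_Icc (zero_lt_one) x hx)]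
  rw [e]
  simp only [H.2.1]
  have := H.2.2
  simp only [intervalIntegral.integral_const, sub_zero, smul_eq_mul, mul_one]
  linarith

/-- vectors rescaled to the sphere -/
def nvec {n : ℕ} (x : {x : EuclideanSpace ℝ (Fin (n + 1)) // x ≠ 0}) : S (n / 2) :=
  ⟨((‖vec x.1‖⁻¹ : ℝ) : ℂ) • vec x.1, by
    have := norm_ne_zero_iff.2 (vec_ne_zero x.2)
    rw [mem_sphere_zero_iff_norm, norm_smul, Complex.norm_real, norm_inv, norm_norm,
      inv_mul_cancel₀ this]⟩

lemma continuous_nvec {n : ℕ} : Continuous (nvec (n := n)) := by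
  have h : Continuous (fun x : {x : EuclideanSpace ℝ (Fin (n + 1)) // x ≠ 0} => vec x.1) :=
    continuous_vec.comp continuous_subtype_val
  refine Continuous.subtype_mk ?_ _
  refine Continuous.smul (M := ℂ) ?_ h
  exact Complex.continuous_ofReal.comp
    (h.norm.inv₀ fun t => norm_ne_zero_iff.2 (vec_ne_zero t.2))

lemma B_nvec {n : ℕ} (x : {x : EuclideanSpace ℝ (Fin (n + 1)) // x ≠ 0}) (s : ℝ) :
    B (toP (nvec x : Fin (n / 2 + 1) → ℂ)) s = B (toP (vec x.1)) s := by
  have h : 0 < ‖vec x.1‖⁻¹ := inv_pos.2 (norm_pos_iff.2 (vec_ne_zero x.2))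
  change B (toP (((‖vec x.1‖⁻¹ : ℝ) : ℂ) • vec x.1)) s = _
  rw [toP_smul, B_pos (toP_ne (vec_ne_zero x.2)) h]

end YnAux

end

/-- **Lower bound for the coindex.** For `n ≥ 1` there is a map `β : Sⁿ → Y_n`,
continuous for the `L¹`-topology on `Y_n`, with `β(-x) = -β(x)` pointwise;
hence `coind Y_n ≥ n`. -/
theorem coindex_Yn_ge (n : ℕ) (hn : 1 ≤ n) :
    ∃ β : EuclideanSpace ℝ (Fin (n + 1)) → (ℝ → ℂ),
      (∀ x ∈ Metric.sphere (0 : EuclideanSpace ℝ (Fin (n + 1))) 1, MemYn n (β x)) ∧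
      (∀ x ∈ Metric.sphere (0 : EuclideanSpace ℝ (Fin (n + 1))) 1,
        β (-x) = fun s => -(β x s)) ∧
      (∀ x ∈ Metric.sphere (0 : EuclideanSpace ℝ (Fin (n + 1))) 1, ∀ ε > (0:ℝ),
        ∃ δ > (0:ℝ), ∀ x' ∈ Metric.sphere (0 : EuclideanSpace ℝ (Fin (n + 1))) 1,
          ‖x' - x‖ < δ → (∫ s in (0:ℝ)..1, ‖β x' s - β x s‖) < ε) := by
  have hne : ∀ x ∈ Metric.sphere (0 : EuclideanSpace ℝ (Fin (n + 1))) 1, x ≠ 0 := by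
    intro x hx h0
    rw [mem_sphere_zero_iff_norm, h0, norm_zero] at hx
    exact zero_ne_one hx
  have hgood : ∀ x : EuclideanSpace ℝ (Fin (n + 1)), x ≠ 0 →
      YnAux.Good (Real.pi * n) (YnAux.B (YnAux.toP (YnAux.vec x))) := by
    intro x hx
    refine (YnAux.good_B (YnAux.toP_ne (YnAux.vec_ne_zero hx))).mono ?_
    have h1 := YnAux.toP_deg (YnAux.vec x)
    have h2 : 2 * (YnAux.toP (YnAux.vec x)).natDegree ≤ n := by omega
    have h3 : 2 * ((YnAux.toP (YnAux.vec x)).natDegree : ℝ) ≤ n := by exact_mod_cast h2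
    nlinarith [Real.pi_pos]
  refine ⟨fun x => YnAux.B (YnAux.toP (YnAux.vec x)), ?_, ?_, ?_⟩
  · exact fun x hx => YnAux.memYn_of_good (hgood x (hne x hx))
  · intro x hx
    funext s
    simp only
    rw [YnAux.vec_neg, YnAux.toP_smul, YnAux.B_mul (by simp)
      (YnAux.toP_ne (YnAux.vec_ne_zero (hne x hx))), YnAux.B_C]
    simp
  · intro x hx ε hε
    have hc := (YnAux.continuous_S (k := n / 2) (hgood x (hne x hx))).comp
      (YnAux.continuous_nvec (n := n))
    simp only [Function.comp_def, YnAux.B_nvec] at hc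
    have hc' := Metric.continuous_iff.1 hc ⟨x, hne x hx⟩ ε hε
    obtain ⟨δ, hδ, H⟩ := hc'
    refine ⟨δ, hδ, fun x' hx' hd => ?_⟩
    have := H ⟨x', hne x' hx'⟩ (by rw [Subtype.dist_eq, dist_eq_norm]; exact hd)
    simp only [sub_self, norm_zero, intervalIntegral.integral_zero, Real.dist_eq, sub_zero] at this
    exact lt_of_le_of_lt (le_abs_self _) this
end
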